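/- arXiv:1605.02485 — 9 statements merged into one kernel-verified Lean document; each statement's English description precedes it below -/
import Mathlib

section
/- Let T : ℍⁿ ⇉ V₁ be a maximal H-monotone set-valued map with dom(T) = ℍⁿ. Then T is locally bounded: for every η₀ ∈ ℍⁿ there exist r > 0 and M > 0 such that ‖v‖ ≤ M for every η ∈ ℍⁿ with d_H(η, η₀) ≤ r and every v ∈ T(η). -/
open scoped RealInnerProductSpace Pointwise

noncomputable section

abbrev E (n : ℕ) := EuclideanSpace ℝ (Fin n)
abbrev Heis (n : ℕ) := E n × E n × ℝ
abbrev V1 (n : ℕ) := WithLp 2 (E n × E n)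

/-- The projection ξ₁(x,y,t) = (x,y) onto the first layer V₁ ≅ ℝ²ⁿ. -/
def xi1 {n : ℕ} (η : Heis n) : V1 n := (WithLp.equiv 2 (E n × E n)).symm (η.1, η.2.1)

/-- The horizontal plane through η₀. -/
def Hplane {n : ℕ} (η₀ : Heis n) : Set (Heis n) :=
  {η | η.2.2 = η₀.2.2 + 2 * (⟪η₀.2.1, η.1⟫ - ⟪η₀.1, η.2.1⟫)}

/-- H-monotonicity of a set-valued map T : ℍⁿ ⇉ V₁. -/
def IsHMonotone {n : ℕ} (T : Heis n → Set (V1 n)) : Prop :=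
  ∀ η η', η' ∈ Hplane η → ∀ v ∈ T η, ∀ v' ∈ T η', 0 ≤ ⟪v - v', xi1 η - xi1 η'⟫

/-- Maximal H-monotonicity. -/
def IsMaximalHMonotone {n : ℕ} (T : Heis n → Set (V1 n)) : Prop :=
  IsHMonotone T ∧
    ∀ η v, (∀ η' ∈ Hplane η, ∀ v' ∈ T η', 0 ≤ ⟪v - v', xi1 η - xi1 η'⟫) → v ∈ T η

/-- Heisenberg group law. -/
def hmul {n : ℕ} (η η' : Heis n) : Heis n :=
  (η.1 + η'.1, η.2.1 + η'.2.1,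
    η.2.2 + η'.2.2 + 2 * (⟪η'.1, η.2.1⟫ - ⟪η.1, η'.2.1⟫))

/-- Heisenberg group inverse. -/
def hinv {n : ℕ} (η : Heis n) : Heis n := (-η.1, -η.2.1, -η.2.2)

/-- The Korányi gauge N(x,y,t) = ((‖x‖²+‖y‖²)² + t²)^(1/4). -/
def gaugeN {n : ℕ} (η : Heis n) : ℝ :=
  ((‖η.1‖ ^ 2 + ‖η.2.1‖ ^ 2) ^ 2 + η.2.2 ^ 2) ^ ((1 : ℝ) / 4)

/-- The Korányi–Cygan distance d_H(η,η') = N(η'⁻¹ ∘ η). -/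
def dH {n : ℕ} (η η' : Heis n) : ℝ := gaugeN (hmul (hinv η') η)


open Filter Topology in
/-- One-directional bound near the origin, in an abstract symplectic setting. -/
lemma dir_bound {V : Type*} [NormedAddCommGroup V] [InnerProductSpace ℝ V]
    (J : V →L[ℝ] V) (hJ : ∀ a, ⟪J a, a⟫ = 0) (F : V → ℝ → Set V)
    (hF : ∀ ζ τ ζ' τ', τ' = τ + ⟪J ζ, ζ'⟫ → ∀ v ∈ F ζ τ, ∀ v' ∈ F ζ' τ',
      0 ≤ ⟪v - v', ζ - ζ'⟫)
    (hne : ∀ ζ τ, (F ζ τ).Nonempty) (w : V) (hw : J w ≠ 0) (ε : ℝ) (hε : 0 < ε) :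
    ∃ C : ℝ, ∀ᶠ p : V × ℝ in 𝓝 0, ∀ v ∈ F p.1 p.2, ⟪v, w⟫ ≤ C + ε * ‖v‖ := by
  have hskew : ∀ a b, ⟪J a, b⟫ = - ⟪J b, a⟫ := by
    intro a b
    have h := hJ (a + b)
    rw [map_add, inner_add_left, inner_add_right, inner_add_right, hJ, hJ] at h
    linarith
  obtain ⟨a, ha⟩ : ∃ a, a = J w := ⟨_, rfl⟩
  obtain ⟨c, hc⟩ : ∃ c : ℝ, c = ⟪J w, a⟫ := ⟨_, rfl⟩
  have hc0 : c ≠ 0 := by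
    rw [hc, ha]; exact inner_self_ne_zero.mpr hw
  obtain ⟨v1, hv1⟩ := hne ((2:ℝ) • w + a) c
  obtain ⟨v2, hv2⟩ := hne ((2:ℝ) • w - a) (-c)
  let S : V × ℝ → ℝ := fun p => 1 - ⟪J p.1, a⟫ / c
  let D : V × ℝ → ℝ := fun p => (p.2 + 2 * ⟪J p.1, w⟫) / c
  let u : V × ℝ → V := fun p => (2 * S p) • w + D p • a - S p • p.1
  let Q : V × ℝ → V := fun p => p.1 + (1 + S p)⁻¹ • u p
  have hS : Continuous S := by fun_prop
  have hD : Continuous D := by fun_prop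
  have hu : Continuous u := by fun_prop
  have hS0 : S 0 = 1 := by simp [S]
  have hD0 : D 0 = 0 := by simp [D]
  have hu0 : u 0 = (2:ℝ) • w := by simp [u, hS0, hD0]
  have hQ : ContinuousAt Q 0 := by
    have : (1 + S 0) ≠ 0 := by rw [hS0]; norm_num
    have h1 : ContinuousAt (fun p => (1 + S p)⁻¹) 0 :=
      ContinuousAt.inv₀ (by fun_prop) this
    exact continuousAt_fst.add (h1.smul hu.continuousAt)
  let R : V × ℝ → ℝ := fun p => (1 + S p) *
    ((S p + D p) / 2 * ⟪v1, (2:ℝ) • w + a - Q p⟫ + (S p - D p) / 2 * ⟪v2, (2:ℝ) • w - a - Q p⟫)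
  have hR : ContinuousAt R 0 := by
    have := hS.continuousAt (x := 0)
    have := hD.continuousAt (x := 0)
    fun_prop
  have e1 : ∀ᶠ p in 𝓝 (0 : V × ℝ), R p < R 0 + 1 := hR.eventually_lt_const (by linarith)
  have e2 : ∀ᶠ p in 𝓝 (0 : V × ℝ), ‖u p - (2:ℝ) • w‖ < ε :=
    ContinuousAt.eventually_lt (by fun_prop) continuousAt_const (by simpa [hu0] using hε)
  have e3 : ∀ᶠ p in 𝓝 (0 : V × ℝ), 0 < S p + D p :=
    continuousAt_const.eventually_lt (by fun_prop) (by simp [hS0, hD0])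
  have e4 : ∀ᶠ p in 𝓝 (0 : V × ℝ), 0 < S p - D p :=
    continuousAt_const.eventually_lt (by fun_prop) (by simp [hS0, hD0])
  refine ⟨(R 0 + 1) / 2, ?_⟩
  filter_upwards [e1, e2, e3, e4] with p h1 h2 h3 h4 v hv
  have hSp : 0 < 1 + S p := by linarith
  obtain ⟨k, hk⟩ : ∃ k : ℝ, k = (1 + S p)⁻¹ := ⟨_, rfl⟩
  have hkS : k * (1 + S p) = 1 := by rw [hk]; field_simp
  have hkpos : 0 < k := by rw [hk]; positivity
  have hQp : Q p = p.1 + k • u p := by rw [hk]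
  have hQp' : Q p = k • (p.1 + (2 * S p) • w + D p • a) := by
    have : p.1 = (k * (1 + S p)) • p.1 := by rw [hkS, one_smul]
    rw [hQp]
    conv_lhs => rw [this]
    simp only [u]
    module
  have hconv : u p = (1 + S p) • (((S p + D p) / 2) • ((2:ℝ) • w + a - Q p)
      + ((S p - D p) / 2) • ((2:ℝ) • w - a - Q p)) := by
    have : p.1 = (1 + S p) • Q p - (2 * S p) • w - D p • a := by
      rw [hQp', smul_smul, mul_comm (1 + S p), hkS, one_smul]; module
    conv_lhs => simp only [u]; rw [this]
    module
  have hcS : c * S p = c - ⟪J p.1, a⟫ := by simp only [S]; field_simp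
  have hcD : c * D p = p.2 + 2 * ⟪J p.1, w⟫ := by simp only [D]; field_simp
  have haw : ⟪J a, w⟫ = -c := by rw [hskew, hc]
  obtain ⟨q, hq⟩ := hne (Q p) (p.2 + ⟪J p.1, Q p⟫)
  -- the three horizontality relations
  have r1 : c = p.2 + ⟪J p.1, Q p⟫ + ⟪J (Q p), (2:ℝ) • w + a⟫ := by
    rw [hQp']
    simp only [map_smul, map_add, inner_add_left, inner_add_right, real_inner_smul_left,
      real_inner_smul_right, hJ, haw, ← hc]
    have hA : ⟪J p.1, a⟫ = c - c * S p := by linarith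
    have hW : p.2 = c * D p - 2 * ⟪J p.1, w⟫ := by linarith
    generalize S p = s at hkS hA ⊢
    generalize D p = d at hW ⊢
    rw [hA, hW]
    linear_combination (-c + c * d - 2 * ⟪J p.1, w⟫) * hkS
  have r2 : -c = p.2 + ⟪J p.1, Q p⟫ + ⟪J (Q p), (2:ℝ) • w - a⟫ := by
    rw [hQp']
    simp only [map_smul, map_add, inner_add_left, inner_add_right, inner_sub_right,
      real_inner_smul_left, real_inner_smul_right, hJ, haw, ← hc]
    have hA : ⟪J p.1, a⟫ = c - c * S p := by linarith
    have hW : p.2 = c * D p - 2 * ⟪J p.1, w⟫ := by linarith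
    generalize S p = s at hkS hA ⊢
    generalize D p = d at hW ⊢
    rw [hA, hW]
    linear_combination (c + c * d - 2 * ⟪J p.1, w⟫) * hkS
  have m0 := hF _ _ _ _ rfl v hv q hq
  have m1 := hF _ _ _ _ r1 q hq v1 hv1
  have m2 := hF _ _ _ _ r2 q hq v2 hv2
  have i0 : ⟪v, u p⟫ ≤ ⟪q, u p⟫ := by
    have : p.1 - Q p = -(k • u p) := by rw [hQp]; abel
    rw [this, inner_neg_right, real_inner_smul_right, inner_sub_left] at m0
    by_contra hcon
    nlinarith [mul_pos hkpos (sub_pos.mpr (not_le.mp hcon))]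
  have i1 : ⟪q, (2:ℝ) • w + a - Q p⟫ ≤ ⟪v1, (2:ℝ) • w + a - Q p⟫ := by
    rw [← neg_sub ((2:ℝ) • w + a) (Q p), inner_neg_right, inner_sub_left] at m1
    linarith
  have i2 : ⟪q, (2:ℝ) • w - a - Q p⟫ ≤ ⟪v2, (2:ℝ) • w - a - Q p⟫ := by
    rw [← neg_sub ((2:ℝ) • w - a) (Q p), inner_neg_right, inner_sub_left] at m2
    linarith
  have i3 : ⟪q, u p⟫ ≤ R p := by
    rw [hconv, real_inner_smul_right, inner_add_right, real_inner_smul_right,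
      real_inner_smul_right]
    simp only [R]
    gcongr
  have i4 : ⟪v, (2:ℝ) • w - u p⟫ ≤ ‖v‖ * ε := by
    refine (real_inner_le_norm _ _).trans ?_
    rw [norm_sub_rev]
    gcongr
  rw [inner_sub_right, real_inner_smul_right] at i4
  have : 0 ≤ ε * ‖v‖ := by positivity
  linarith

open Filter Topology in
/-- Local boundedness near the origin, abstract setting. -/
lemma abs_bound {V : Type*} [NormedAddCommGroup V] [InnerProductSpace ℝ V]
    [FiniteDimensional ℝ V]
    (J : V →L[ℝ] V) (hJ : ∀ a, ⟪J a, a⟫ = 0) (hJ0 : ∀ a, a ≠ 0 → J a ≠ 0) (F : V → ℝ → Set V)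
    (hF : ∀ ζ τ ζ' τ', τ' = τ + ⟪J ζ, ζ'⟫ → ∀ v ∈ F ζ τ, ∀ v' ∈ F ζ' τ',
      0 ≤ ⟪v - v', ζ - ζ'⟫)
    (hne : ∀ ζ τ, (F ζ τ).Nonempty) :
    ∃ C : ℝ, ∀ᶠ p : V × ℝ in 𝓝 0, ∀ v ∈ F p.1 p.2, ‖v‖ ≤ C := by
  let b := stdOrthonormalBasis ℝ V
  let N : ℝ := Module.finrank ℝ V
  have hN : 0 ≤ N := Nat.cast_nonneg _
  let ε : ℝ := 1 / (2 * (N + 1))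
  have hε : 0 < ε := by positivity
  have hb : ∀ i, b i ≠ 0 := fun i => b.orthonormal.ne_zero i
  choose C hC using fun i => dir_bound J hJ F hF hne (b i) (hJ0 _ (hb i)) ε hε
  choose C' hC' using fun i =>
    dir_bound J hJ F hF hne (-b i) (hJ0 _ (neg_ne_zero.mpr (hb i))) ε hε
  refine ⟨2 * ∑ i, max (C i) (C' i), ?_⟩
  filter_upwards [eventually_all.mpr hC, eventually_all.mpr hC'] with p h1 h2 v hv
  have key : ∀ i, ‖⟪b i, v⟫ • b i‖ ≤ max (C i) (C' i) + ε * ‖v‖ := by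
    intro i
    have k1 := h1 i v hv
    have k2 := h2 i v hv
    rw [inner_neg_right] at k2
    rw [norm_smul, b.orthonormal.1 i, mul_one, Real.norm_eq_abs, real_inner_comm, abs_le]
    constructor <;> linarith [le_max_left (C i) (C' i), le_max_right (C i) (C' i)]
  have hs : ‖v‖ ≤ ∑ i, (max (C i) (C' i) + ε * ‖v‖) := by
    calc ‖v‖ = ‖∑ i, ⟪b i, v⟫ • b i‖ := by rw [b.sum_repr' v]
      _ ≤ ∑ i, ‖⟪b i, v⟫ • b i‖ := norm_sum_le _ _
      _ ≤ _ := Finset.sum_le_sum fun i _ => key i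
  rw [Finset.sum_add_distrib, Finset.sum_const, Finset.card_univ, Fintype.card_fin,
    nsmul_eq_mul] at hs
  have hNε : N * ε ≤ 1 / 2 := by
    simp only [ε]
    rw [mul_one_div, div_le_div_iff₀ (by positivity) (by norm_num)]
    linarith
  have : N * ε * ‖v‖ ≤ 1 / 2 * ‖v‖ := by gcongr
  change ‖v‖ ≤ _ + N * (ε * ‖v‖) at hs
  linarith

/-- Twice the standard complex structure. -/
def JL (n : ℕ) : V1 n →ₗ[ℝ] V1 n :=
  { toFun := fun a => WithLp.toLp 2 ((2:ℝ) • a.snd, -((2:ℝ) • a.fst))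
    map_add' := by
      intro a b
      refine WithLp.ofLp_injective 2 (Prod.ext ?_ ?_)
      · exact smul_add (2:ℝ) a.snd b.snd
      · show -((2:ℝ) • (a.fst + b.fst)) = -((2:ℝ) • a.fst) + -((2:ℝ) • b.fst)
        rw [smul_add, neg_add]
    map_smul' := by
      intro r a
      refine WithLp.ofLp_injective 2 (Prod.ext ?_ ?_)
      · exact smul_comm (2:ℝ) r a.snd
      · show -((2:ℝ) • (r • a.fst)) = r • -((2:ℝ) • a.fst)
        rw [smul_neg, smul_comm] }

/-- The same as a continuous linear map. -/
def JJ (n : ℕ) : V1 n →L[ℝ] V1 n := ⟨JL n, by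
  have h : Continuous fun a : V1 n => a.ofLp := WithLp.prod_continuous_ofLp 2 (E n) (E n)
  have h2 : Continuous fun a : V1 n => ((2:ℝ) • a.ofLp.2, -((2:ℝ) • a.ofLp.1)) :=
    (h.snd.const_smul (2:ℝ)).prodMk (h.fst.const_smul (2:ℝ)).neg
  exact (WithLp.prod_continuous_toLp 2 (E n) (E n)).comp h2⟩

lemma JJ_inner {n : ℕ} (a b : V1 n) :
    ⟪JJ n a, b⟫ = 2 * (⟪a.snd, b.fst⟫ - ⟪a.fst, b.snd⟫) := by
  have h : ⟪JJ n a, b⟫ = ⟪(2:ℝ) • a.snd, b.fst⟫ + ⟪-((2:ℝ) • a.fst), b.snd⟫ := rfl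
  rw [h, inner_neg_left, real_inner_smul_left, real_inner_smul_left]
  ring

/-- Theorem 1.1: a maximal H-monotone map with full domain is locally bounded. -/
theorem maximal_HMonotone_locally_bounded {n : ℕ} (hn : 1 ≤ n)
    (T : Heis n → Set (V1 n)) (hT : IsMaximalHMonotone T)
    (hdom : ∀ η, (T η).Nonempty) :
    ∀ η₀ : Heis n, ∃ r > (0 : ℝ), ∃ M > (0 : ℝ),
      ∀ η : Heis n, dH η η₀ ≤ r → ∀ v ∈ T η, ‖v‖ ≤ M := by
  intro η₀
  let F : V1 n → ℝ → Set (V1 n) := fun ζ τ => T (hmul η₀ (ζ.fst, ζ.snd, τ))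
  have hxi : ∀ (ζ : V1 n) (τ : ℝ), xi1 (hmul η₀ (ζ.fst, ζ.snd, τ)) = xi1 η₀ + ζ := by
    intro ζ τ
    rfl
  obtain ⟨C, hC⟩ := abs_bound (JJ n)
    (fun a => by rw [JJ_inner, real_inner_comm]; ring)
    (fun a ha h => ha (by
      have h2 := JJ_inner a (WithLp.toLp 2 (a.snd, -a.fst))
      rw [h, inner_zero_left] at h2
      change 0 = 2 * (⟪a.snd, a.snd⟫ - ⟪a.fst, -a.fst⟫) at h2
      rw [inner_neg_right, real_inner_self_eq_norm_sq, real_inner_self_eq_norm_sq] at h2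
      have hs : ‖a.snd‖ = 0 := by nlinarith [sq_nonneg ‖a.snd‖, sq_nonneg ‖a.fst‖]
      have hf : ‖a.fst‖ = 0 := by nlinarith [sq_nonneg ‖a.snd‖, sq_nonneg ‖a.fst‖]
      have e1 : a.snd = 0 := norm_eq_zero.mp hs
      have e2 : a.fst = 0 := norm_eq_zero.mp hf
      exact WithLp.ofLp_injective 2 (Prod.ext e2 e1)))
    F
    (by
      intro ζ τ ζ' τ' h v hv v' hv'
      have := hT.1 _ _ ?_ v hv v' hv'
      · rwa [hxi, hxi, add_sub_add_left_eq_sub] at this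
      · rw [JJ_inner] at h
        simp only [Hplane, hmul, Set.mem_ofPred_eq, h, inner_add_left, inner_add_right]
        rw [real_inner_comm η₀.1 η₀.2.1, real_inner_comm η₀.2.1 ζ.fst,
          real_inner_comm η₀.1 ζ.snd]
        rw [real_inner_comm η₀.2.1 ζ'.fst]
        ring)
    (fun ζ τ => hdom _)
  rw [Metric.eventually_nhds_iff] at hC
  obtain ⟨δ, hδ, hC⟩ := hC
  refine ⟨min (δ / 2) 1, by positivity, max C 1, by positivity, ?_⟩
  intro η hη v hv
  refine le_trans ?_ (le_max_left _ _)
  obtain ⟨κ, hκ⟩ : ∃ κ, κ = hmul (hinv η₀) η := ⟨_, rfl⟩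
  have hback : hmul η₀ κ = η := by
    rw [hκ]
    refine Prod.ext ?_ (Prod.ext ?_ ?_)
    · simp [hmul, hinv]
    · simp [hmul, hinv]
    · simp only [hmul, hinv, inner_add_left, inner_add_right, inner_neg_left, inner_neg_right]
      ring
  rw [dH, ← hκ] at hη
  refine @hC (WithLp.toLp 2 (κ.1, κ.2.1), κ.2.2) ?_ v ?_
  · set r := min (δ / 2) 1 with hr
    have hr0 : 0 < r := by positivity
    have hr1 : r ≤ 1 := min_le_right _ _
    have hr2 : r < δ := lt_of_le_of_lt (min_le_left _ _) (by linarith)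
    have hg : (‖κ.1‖ ^ 2 + ‖κ.2.1‖ ^ 2) ^ 2 + κ.2.2 ^ 2 ≤ r ^ 4 := by
      have h0 : 0 ≤ (‖κ.1‖ ^ 2 + ‖κ.2.1‖ ^ 2) ^ 2 + κ.2.2 ^ 2 := by positivity
      have h1 : (gaugeN κ) ^ 4 = (‖κ.1‖ ^ 2 + ‖κ.2.1‖ ^ 2) ^ 2 + κ.2.2 ^ 2 := by
        rw [gaugeN, ← Real.rpow_natCast, ← Real.rpow_mul h0]
        norm_num
      rw [← h1]
      have : 0 ≤ gaugeN κ := Real.rpow_nonneg h0 _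
      gcongr
    rw [dist_zero_right, Prod.norm_def]
    refine lt_of_le_of_lt ?_ hr2
    apply max_le
    · refine abs_le_of_sq_le_sq' ?_ hr0.le |>.2
      rw [WithLp.prod_norm_sq_eq_of_L2]
      refine abs_le_of_sq_le_sq' ?_ (by positivity) |>.2
      show (‖κ.1‖ ^ 2 + ‖κ.2.1‖ ^ 2) ^ 2 ≤ (r ^ 2) ^ 2
      nlinarith [sq_nonneg κ.2.2]
    · rw [Real.norm_eq_abs]
      have : |κ.2.2| ≤ r ^ 2 := by
        apply abs_le_of_sq_le_sq _ (by positivity)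
        nlinarith [sq_nonneg (‖κ.1‖ ^ 2 + ‖κ.2.1‖ ^ 2)]
      show |κ.2.2| ≤ r
      nlinarith
  · show v ∈ T (hmul η₀ κ)
    rw [hback]
    exact hv
end
end

section
/- Let T : ℍⁿ ⇉ V₁ be a maximal H-monotone set-valued map with dom(T) = ℍⁿ. Then for every η ∈ ℍⁿ and every λ > 0, the map (ξ₁ + λT) restricted to the horizontal plane H_η is surjective onto V₁: for every p ∈ ℝ²ⁿ there exist ζ ∈ H_η and v ∈ T(ζ) such that p = ξ₁(ζ) + λ v. -/
open scoped RealInnerProductSpace Pointwise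

noncomputable section

open Filter Topology MeasureTheory Metric

section Hedgehog

set_option linter.unusedSectionVars false

variable {W : Type*} [NormedAddCommGroup W] [InnerProductSpace ℝ W] [FiniteDimensional ℝ W]

theorem hh_det_poly (A : W →L[ℝ] W) :
    ∃ q : Polynomial ℝ, q.natDegree ≤ Module.finrank ℝ W ∧
      ∀ t : ℝ, q.eval t = (ContinuousLinearMap.id ℝ W + t • A).det := by
  classical
  let b := Module.finBasis ℝ W
  let M := LinearMap.toMatrix b b (A : W →ₗ[ℝ] W)
  refine ⟨Matrix.det ((Polynomial.X : Polynomial ℝ) • M.map Polynomial.C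
    + (1 : Matrix _ _ ℝ).map Polynomial.C), ?_, ?_⟩
  · simpa using Polynomial.natDegree_det_X_add_C_le M 1
  · intro t
    rw [← Polynomial.coe_evalRingHom, RingHom.map_det]
    have : (ContinuousLinearMap.id ℝ W + t • A).det
        = (LinearMap.toMatrix b b ((LinearMap.id : W →ₗ[ℝ] W) + t • (A : W →ₗ[ℝ] W))).det := by
      rw [LinearMap.det_toMatrix]; rfl
    rw [this]
    congr 1
    rw [map_add (LinearMap.toMatrix b b), map_smul (LinearMap.toMatrix b b), LinearMap.toMatrix_id]
    ext i j
    simp only [RingHom.mapMatrix_apply, Matrix.map_apply, Matrix.add_apply, Matrix.smul_apply, M,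
      smul_eq_mul, Polynomial.coe_evalRingHom, Polynomial.eval_add, Polynomial.eval_mul,
      Polynomial.eval_X, Polynomial.eval_C]
    rw [add_comm]

theorem hh_det_pos (A : W →L[ℝ] W) (t : ℝ) (ht : 0 ≤ t) (h : t * ‖A‖ < 1) :
    0 < (ContinuousLinearMap.id ℝ W + t • A).det := by
  have hne : ∀ s ∈ Set.Icc 0 t, (ContinuousLinearMap.id ℝ W + s • A).det ≠ 0 := by
    intro s hs h0
    have h0' : LinearMap.det ((ContinuousLinearMap.id ℝ W + s • A : W →L[ℝ] W) : W →ₗ[ℝ] W) = 0 := h0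
    have := LinearMap.bot_lt_ker_of_det_eq_zero h0'
    obtain ⟨x, hx, hx0⟩ := (Submodule.ne_bot_iff _).1 this.ne'
    have hx' : x + s • A x = 0 := by simpa using hx
    have h1 : ‖x‖ = s * ‖A x‖ := by
      conv_lhs => rw [eq_neg_of_add_eq_zero_left hx', norm_neg, norm_smul, Real.norm_of_nonneg hs.1]
    have h2 := A.le_opNorm x
    have h3 : 0 < ‖x‖ := norm_pos_iff.2 hx0
    have h4 : s * ‖A‖ < 1 := lt_of_le_of_lt (by gcongr; exact hs.2) h
    nlinarith [mul_le_mul_of_nonneg_left h2 hs.1]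
  by_contra hneg
  push Not at hneg
  have hc : ContinuousOn (fun s : ℝ => (ContinuousLinearMap.id ℝ W + s • A).det) (Set.Icc 0 t) := by
    apply Continuous.continuousOn
    exact ContinuousLinearMap.continuous_det.comp (by fun_prop)
  have h0 : (0:ℝ) ∈ Set.Icc ((ContinuousLinearMap.id ℝ W + t • A).det)
      ((ContinuousLinearMap.id ℝ W + (0:ℝ) • A).det) := ⟨hneg, by simp [ContinuousLinearMap.det]⟩
  obtain ⟨s, hs, hs'⟩ := intermediate_value_Icc' ht hc h0
  exact hne s hs hs'

/-- Lipschitz extension by zero. -/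
theorem hh_lip (R : ℝ) (L : NNReal) (k : W → W) (hk : LipschitzOnWith L k (closedBall 0 R))
    (h0 : ∀ x, ‖x‖ = R → k x = 0) :
    ∃ h : W → W, LipschitzWith L h ∧ (∀ x, ‖x‖ ≤ R → h x = k x) ∧ ∀ x, R ≤ ‖x‖ → h x = 0 := by
  classical
  refine ⟨fun x => if ‖x‖ ≤ R then k x else 0, ?_, fun x hx => by simp [hx], ?_⟩
  · have key : ∀ x y : W, ‖x‖ ≤ R → R < ‖y‖ → ‖k x‖ ≤ L * ‖x - y‖ := by
      intro x y hx hy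
      have hc : ContinuousOn (fun s : ℝ => ‖x + s • (y - x)‖) (Set.Icc 0 1) := by fun_prop
      obtain ⟨s, hs, hs'⟩ := intermediate_value_Icc (zero_le_one) hc
        (show R ∈ Set.Icc _ _ by simpa using ⟨hx, hy.le⟩)
      have := hk.norm_sub_le (x := x) (y := x + s • (y - x)) (by simpa using hx)
        (by simpa using hs'.le)
      rw [h0 _ hs', sub_zero] at this
      refine this.trans ?_
      gcongr
      rw [show x - (x + s • (y - x)) = s • (x - y) by module, norm_smul, Real.norm_of_nonneg hs.1]
      nlinarith [norm_nonneg (x - y), hs.2]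
    refine LipschitzWith.of_dist_le_mul fun x y => ?_
    rw [dist_eq_norm, dist_eq_norm]
    by_cases hx : ‖x‖ ≤ R <;> by_cases hy : ‖y‖ ≤ R
    · simpa [hx, hy] using hk.norm_sub_le (x := x) (y := y) (by simpa using hx) (by simpa using hy)
    · simpa [hx, hy] using key x y hx (not_le.1 hy)
    · simpa [hx, hy, norm_sub_rev x y] using key y x hy (not_le.1 hx)
    · simp [hx, hy]; positivity
  · intro x hx
    by_cases hx' : ‖x‖ ≤ R
    · simp [hx', h0 x (le_antisymm hx' hx)]
    · simp [hx']

theorem hh_no_retraction (R : ℝ) (hR : 0 < R) (r : W → W) (hr : ContDiff ℝ 1 r)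
    (hrn : ∀ x, ‖r x‖ = R) (hrid : ∀ x, ‖x‖ = R → r x = x) : False := by
  classical
  borelize W
  let μ : Measure W := volume
  set k : W → W := fun x => r x - x with hkdef
  have hk : ContDiff ℝ 1 k := hr.sub contDiff_id
  obtain ⟨L, hL⟩ : ∃ L, LipschitzOnWith L k (closedBall 0 R) :=
    LocallyLipschitzOn.exists_lipschitzOnWith_of_compact (isCompact_closedBall _ _)
      (hk.locallyLipschitz.locallyLipschitzOn)
  obtain ⟨h, hhL, hin, hout⟩ := hh_lip R L k hL (fun x hx => by simp [hkdef, hrid x hx])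
  set B : Set W := ball 0 R with hB
  let A : W → W →L[ℝ] W := fun x => fderiv ℝ k x
  have hAc : Continuous A := hk.continuous_fderiv one_ne_zero
  have hder : ∀ x ∈ B, HasFDerivAt h (A x) x := by
    intro x hx
    have h1 : HasFDerivAt k (A x) x := (hk.differentiable one_ne_zero x).hasFDerivAt
    refine h1.congr_of_eventuallyEq ?_
    filter_upwards [isOpen_ball.mem_nhds hx] with y hy
    exact hin y (by simpa using (mem_ball_zero_iff.1 hy).le)
  have hAn : ∀ x ∈ B, ‖A x‖ ≤ L := fun x hx => (hder x hx).le_of_lipschitz hhL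
  -- the volume identity for small t
  have hvol : ∀ t : ℝ, 0 ≤ t → t * L < 1 →
      ∫ x in B, (ContinuousLinearMap.id ℝ W + t • A x).det ∂μ = μ.real B := by
    intro t ht htL
    let f : W → W := fun x => x + t • h x
    have hinj : Function.Injective f := by
      intro x y hxy
      have h1 : x - y = t • (h y - h x) := by
        have : x + t • h x = y + t • h y := hxy
        rw [smul_sub, sub_eq_sub_iff_add_eq_add, this]; abel
      have h2 : ‖x - y‖ = t * ‖h y - h x‖ := by
        conv_lhs => rw [h1, norm_smul, Real.norm_of_nonneg ht]
      have h3 := hhL.norm_sub_le y x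
      rw [norm_sub_rev y x] at h3
      by_contra hne
      have : 0 < ‖x - y‖ := norm_pos_iff.2 (sub_ne_zero.2 hne)
      nlinarith [mul_le_mul_of_nonneg_left h3 ht]
    have hsurj : Function.Surjective f := by
      intro y
      have hcw : ContractingWith (t.toNNReal * L) (fun x => y - t • h x) := by
        refine ⟨by rw [← NNReal.coe_lt_coe]; simpa [ht] using htL, LipschitzWith.of_dist_le_mul ?_⟩
        intro a b
        rw [dist_eq_norm, dist_eq_norm]
        have h3 := hhL.norm_sub_le b a
        rw [show y - t • h a - (y - t • h b) = t • (h b - h a) by module, norm_smul,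
          Real.norm_of_nonneg ht, norm_sub_rev a b]
        simpa [mul_assoc, ht] using mul_le_mul_of_nonneg_left h3 ht
      refine ⟨ContractingWith.fixedPoint _ hcw, ?_⟩
      have : y - t • h (ContractingWith.fixedPoint _ hcw) = ContractingWith.fixedPoint _ hcw :=
        hcw.fixedPoint_isFixedPt
      show ContractingWith.fixedPoint _ hcw + t • h (ContractingWith.fixedPoint _ hcw) = y
      nth_rw 1 [← this]
      abel
    have hfout : ∀ x, x ∉ B → f x = x := by
      intro x hx
      simp [f, hout x (by simpa [hB] using hx)]
    have himg : f '' B = B := by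
      ext y
      constructor
      · rintro ⟨x, hx, rfl⟩
        by_contra hy
        have := hinj (hfout _ hy)
        rw [this] at hy
        exact hy hx
      · intro hy
        obtain ⟨x, rfl⟩ := hsurj y
        refine ⟨x, ?_, rfl⟩
        by_contra hx
        rw [hfout x hx] at hy
        exact hx hy
    have hfd : ∀ x ∈ B, HasFDerivWithinAt f (ContinuousLinearMap.id ℝ W + t • A x) B x := by
      intro x hx
      exact ((hasFDerivAt_id x).add ((hder x hx).const_smul t)).hasFDerivWithinAt
    have := integral_image_eq_integral_abs_det_fderiv_smul μ measurableSet_ball hfd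
      hinj.injOn (fun _ => (1:ℝ))
    rw [himg] at this
    simp only [smul_eq_mul, mul_one, integral_const, measureReal_restrict_apply_univ] at this
    rw [this]
    refine setIntegral_congr_fun measurableSet_ball fun x hx => ?_
    rw [abs_of_pos]
    refine hh_det_pos _ t ht (lt_of_le_of_lt ?_ htL)
    gcongr
    exact hAn x hx
  -- interpolation
  let N := Module.finrank ℝ W + 1
  let s : Finset ℕ := Finset.range N
  let v : ℕ → ℝ := fun i => 1 / ((L + 1) * (i + 1))
  have hv0 : ∀ i, 0 ≤ v i := fun i => by positivity
  have hvL : ∀ i, v i * L < 1 := by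
    intro i
    have : (0:ℝ) ≤ L := L.2
    simp only [v]
    rw [div_mul_eq_mul_div, div_lt_one (by positivity)]
    have : (0:ℝ) ≤ i := by positivity
    nlinarith
  have hvinj : Set.InjOn v s := by
    intro i _ j _ hij
    have hL1 : ((L:ℝ) + 1) ≠ 0 := by positivity
    simp only [v, one_div, inv_inj] at hij
    have := mul_left_cancel₀ hL1 hij
    exact_mod_cast add_right_cancel this
  let c : ℕ → ℝ := fun i => (Lagrange.basis s v i).eval 1
  have hc1 : ∑ i ∈ s, c i = 1 := by
    have := congrArg (Polynomial.eval 1) (Lagrange.sum_basis hvinj (by simp [s, N]))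
    simpa [Polynomial.eval_finsetSum] using this
  have hdetint : ∀ x, (ContinuousLinearMap.id ℝ W + (1:ℝ) • A x).det
      = ∑ i ∈ s, c i * (ContinuousLinearMap.id ℝ W + v i • A x).det := by
    intro x
    obtain ⟨q, hq, hqe⟩ := hh_det_poly (A x)
    have hdeg : q.degree < s.card := by
      refine lt_of_le_of_lt Polynomial.degree_le_natDegree ?_
      simp only [s, N, Finset.card_range]
      exact_mod_cast Nat.lt_succ_of_le hq
    have := congrArg (Polynomial.eval 1) (Lagrange.eq_interpolate hvinj hdeg)
    rw [hqe, Lagrange.interpolate_apply, Polynomial.eval_finsetSum] at this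
    rw [this]
    refine Finset.sum_congr rfl fun i _ => ?_
    rw [Polynomial.eval_mul, Polynomial.eval_C, hqe, mul_comm]
  have hdet0 : ∀ x, (ContinuousLinearMap.id ℝ W + (1:ℝ) • A x).det = 0 := by
    intro x
    have hrd : HasFDerivAt r (fderiv ℝ r x) x := (hr.differentiable one_ne_zero x).hasFDerivAt
    have hA : ContinuousLinearMap.id ℝ W + (1:ℝ) • A x = fderiv ℝ r x := by
      have : HasFDerivAt k (fderiv ℝ r x - ContinuousLinearMap.id ℝ W) x :=
        hrd.sub (hasFDerivAt_id x)
      simp [A, this.fderiv]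
    rw [hA]
    by_contra hne
    have hu : IsUnit (LinearMap.det ((fderiv ℝ r x : W →L[ℝ] W) : W →ₗ[ℝ] W)) :=
      isUnit_iff_ne_zero.2 hne
    obtain ⟨y, hy⟩ := (LinearMap.equivOfIsUnitDet
      (f := ((fderiv ℝ r x : W →L[ℝ] W) : W →ₗ[ℝ] W)) hu).surjective (r x)
    have hy' : fderiv ℝ r x y = r x := by simpa using hy
    have h1 : HasFDerivAt (fun z => ‖r z‖ ^ 2) _ x := hrd.norm_sq
    have h2 : (fun z => ‖r z‖ ^ 2) = fun _ => R ^ 2 := by ext z; rw [hrn]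
    rw [h2] at h1
    have h3 := h1.unique (hasFDerivAt_const _ _)
    have h4 := congrArg (fun l => l y) h3
    simp [hy', hrn] at h4
    exact hR.ne' h4
  have hcont : ∀ t : ℝ, IntegrableOn (fun x => (ContinuousLinearMap.id ℝ W + t • A x).det) B μ := by
    intro t
    have : Continuous (fun x => (ContinuousLinearMap.id ℝ W + t • A x).det) :=
      ContinuousLinearMap.continuous_det.comp (by fun_prop)
    exact (this.continuousOn.integrableOn_compact (isCompact_closedBall (0:W) R)).mono_set
      ball_subset_closedBall
  have hfin : (0:ℝ) = μ.real B := by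
    calc (0:ℝ) = ∫ x in B, (ContinuousLinearMap.id ℝ W + (1:ℝ) • A x).det ∂μ := by simp_rw [hdet0]; simp
      _ = ∫ x in B, ∑ i ∈ s, c i * (ContinuousLinearMap.id ℝ W + v i • A x).det ∂μ := by
        simp_rw [hdetint]
      _ = ∑ i ∈ s, c i * μ.real B := by
        rw [integral_finsetSum _ fun i _ => (hcont (v i)).const_mul _]
        refine Finset.sum_congr rfl fun i _ => ?_
        rw [integral_const_mul, hvol _ (hv0 i) (hvL i)]
      _ = μ.real B := by rw [← Finset.sum_mul, hc1, one_mul]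
  have : 0 < μ.real B := by
    rw [measureReal_def]
    exact ENNReal.toReal_pos (measure_ball_pos μ _ hR).ne' measure_ball_lt_top.ne
  linarith

theorem hh_zero (R : ℝ) (hR : 0 < R) (g : W → W) (hg : ContDiff ℝ 1 g)
    (hid : ∀ x, R ≤ ‖x‖ → g x = x) : ∃ x, g x = 0 := by
  by_contra hne
  push Not at hne
  refine hh_no_retraction R hR (fun x => (R * ‖g x‖⁻¹) • g x) ?_ ?_ ?_
  · exact (contDiff_const.mul ((hg.norm ℝ hne).inv fun x => norm_ne_zero_iff.2 (hne x))).smul hg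
  · intro x
    have := norm_ne_zero_iff.2 (hne x)
    rw [norm_smul, norm_mul, norm_inv, norm_norm, Real.norm_of_nonneg hR.le]
    field_simp
  · intro x hx
    simp only [hid x hx.ge, hx]
    rw [mul_inv_cancel₀ hR.ne', one_smul]

end Hedgehog
section Abstract

variable {W : Type*} [NormedAddCommGroup W] [InnerProductSpace ℝ W]

/-- The horizontality relation on `W × ℝ` determined by the skew map `K`. -/
def hrel (K : W →L[ℝ] W) (p q : W × ℝ) : Prop := q.2 = p.2 + 2 * ⟪K p.1, q.1⟫

/-- Abstract monotonicity. -/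
def hmono (K : W →L[ℝ] W) (T : W × ℝ → Set W) : Prop :=
  ∀ p q, hrel K p q → ∀ v ∈ T p, ∀ z ∈ T q, 0 ≤ ⟪v - z, p.1 - q.1⟫

/-- Abstract maximality. -/
def hmaxi (K : W →L[ℝ] W) (T : W × ℝ → Set W) : Prop :=
  ∀ p v, (∀ q, hrel K p q → ∀ z ∈ T q, 0 ≤ ⟪v - z, p.1 - q.1⟫) → v ∈ T p

theorem hP (K : W →L[ℝ] W) (hK1 : ∀ a b, ⟪K a, b⟫ = -⟪a, K b⟫) (hK2 : ∀ a b, ⟪K a, K b⟫ = ⟪a, b⟫)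
    (c : W) (τ : ℝ) (w : W) (hw : w ≠ 0) :
    ∃ P : W × ℝ → W × ℝ, Tendsto P (𝓝 (c, τ)) (𝓝 (c + w, τ + 2 * ⟪K c, w⟫)) ∧
      ∀ᶠ p in 𝓝 (c, τ), hrel K p (P p) ∧ ∀ b, ⟪w, b⟫ = 0 →
        hrel K (P p) (c + w + (w + b), τ + 2 * ⟪K c, w⟫ + 2 * ⟪K (c + w), w + b⟫) := by
  have hself : ∀ a, ⟪K a, a⟫ = 0 := fun a => by
    have := hK1 a a; rw [real_inner_comm] at this; linarith [real_inner_comm a (K a)]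
  set a := c + w with ha
  set t0 := τ + 2 * ⟪K c, w⟫ with ht0
  let D : W × ℝ → ℝ := fun p => ⟪a, w⟫ + ⟪w, w⟫ - ⟪p.1, w⟫
  let s : W × ℝ → ℝ := fun p => (p.2 - t0 + 2 * ⟪K p.1, a⟫) / (2 * D p)
  have hD0 : D (c, τ) = 2 * ⟪w, w⟫ := by simp only [D, ha, inner_add_left]; ring
  have hww : 0 < ⟪w, w⟫ := real_inner_self_pos.2 hw
  have hDc : Continuous D := by fun_prop
  have hsc : ContinuousAt s (c, τ) := by
    refine ContinuousAt.div (by fun_prop) (by fun_prop) ?_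
    rw [hD0]; positivity
  have hs0 : s (c, τ) = 0 := by
    have : τ - t0 + 2 * ⟪K c, a⟫ = 0 := by
      rw [ha, inner_add_right, hself, ht0]; ring
    simp only [s, this, zero_div]
  refine ⟨fun p => (a + s p • K w, t0 + 2 * s p * (⟪a, w⟫ + ⟪w, w⟫)), ?_, ?_⟩
  · have : ContinuousAt (fun p => (a + s p • K w, t0 + 2 * s p * (⟪a, w⟫ + ⟪w, w⟫))) (c, τ) := by
      fun_prop
    have h := this.tendsto
    simpa [hs0] using h
  · have : ∀ᶠ p in 𝓝 (c, τ), 0 < D p :=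
      hDc.continuousAt.eventually (lt_mem_nhds (by rw [hD0]; positivity))
    filter_upwards [this] with p hp
    constructor
    · have h1 : s p * (2 * D p) = p.2 - t0 + 2 * ⟪K p.1, a⟫ := by
        simp only [s]; field_simp
      simp only [hrel, inner_add_right, inner_smul_right, hK2]
      simp only [D] at h1
      linarith
    · intro b hb
      have hb' : ⟪b, w⟫ = 0 := by rw [real_inner_comm]; exact hb
      have e1 : ⟪K (K w), a⟫ = -⟪a, w⟫ := by rw [hK1, hK2, real_inner_comm]
      have e2 : ⟪K (K w), w⟫ = -⟪w, w⟫ := by rw [hK1, hK2]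
      have e3 : ⟪K (K w), b⟫ = 0 := by rw [hK1, hK2, hb, neg_zero]
      simp only [hrel, map_add, map_smul, inner_add_left, inner_add_right, inner_smul_left, e1, e2,
        e3, hself, RCLike.conj_to_real]
      ring

/-- bounded sequences converge along ultrafilters -/
theorem hult [FiniteDimensional ℝ W] (U : Ultrafilter ℕ) (f : ℕ → W) (M : ℝ)
    (h : ∀ᶠ k in (U : Filter ℕ), ‖f k‖ ≤ M) : ∃ x, Tendsto f U (𝓝 x) := by
  obtain ⟨x, -, hx⟩ := isCompact_iff_ultrafilter_le_nhds.1 (isCompact_closedBall (0:W) M) (U.map f)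
    (by rw [Ultrafilter.coe_map, le_principal_iff, mem_map]
        filter_upwards [h] with k hk
        simpa using hk)
  exact ⟨x, hx⟩

theorem hultunit [FiniteDimensional ℝ W] (U : Ultrafilter ℕ) (f : ℕ → W)
    (h : Tendsto (fun k => ‖f k‖) U atTop) :
    ∃ u, ‖u‖ = 1 ∧ Tendsto (fun k => ‖f k‖⁻¹ • f k) U (𝓝 u) := by
  have h1 : ∀ᶠ k in (U : Filter ℕ), ‖‖f k‖⁻¹ • f k‖ = 1 := by
    filter_upwards [h.eventually_gt_atTop 0] with k hk
    rw [norm_smul, norm_inv, norm_norm, inv_mul_cancel₀ hk.ne']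
  obtain ⟨u, hu⟩ := hult U (fun k => ‖f k‖⁻¹ • f k) 1 (h1.mono fun _ h => h.le)
  exact ⟨u, tendsto_nhds_unique (hu.norm.congr' h1) tendsto_const_nhds, hu⟩

variable [FiniteDimensional ℝ W]

theorem hlocbdd (K : W →L[ℝ] W) (hK1 : ∀ a b, ⟪K a, b⟫ = -⟪a, K b⟫)
    (hK2 : ∀ a b, ⟪K a, K b⟫ = ⟪a, b⟫) (T : W × ℝ → Set W) (hT : hmono K T)
    (hdom : ∀ p, (T p).Nonempty) (p : W × ℝ) :
    ∃ M : ℝ, ∀ᶠ q in 𝓝 p, ∀ v ∈ T q, ‖v‖ ≤ M := by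
  by_contra hcon
  push Not at hcon
  obtain ⟨c, τ⟩ := p
  obtain ⟨ζ, hζ, hζ'⟩ : ∃ ζ : ℕ → W × ℝ, Tendsto ζ atTop (𝓝 (c, τ)) ∧
      ∀ k : ℕ, ∃ v ∈ T (ζ k), (k : ℝ) < ‖v‖ := by
    obtain ⟨u, hu⟩ := (𝓝 (c, τ)).exists_antitone_basis
    have : ∀ k : ℕ, ∃ q ∈ u k, ∃ v ∈ T q, (k : ℝ) < ‖v‖ := by
      intro k
      obtain ⟨q, h1, h2⟩ := ((hcon k).and_eventually (hu.1.mem_of_mem (i := k) trivial)).exists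
      exact ⟨q, h2, h1⟩
    choose ζ h1 h2 using this
    exact ⟨ζ, hu.tendsto h1, h2⟩
  choose v hv hvk using hζ'
  let U : Ultrafilter ℕ := hyperfilter ℕ
  have hU : (U : Filter ℕ) ≤ atTop := by
    rw [← Nat.cofinite_eq_atTop]; exact hyperfilter_le_cofinite
  have hζU : Tendsto ζ U (𝓝 (c, τ)) := hζ.mono_left hU
  have hvU : Tendsto (fun k => ‖v k‖) U atTop :=
    (tendsto_atTop_mono (fun k => (hvk k).le) tendsto_natCast_atTop_atTop).mono_left hU
  obtain ⟨u, hu1, hu⟩ := hultunit U v hvU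
  have hu0 : u ≠ 0 := by rintro rfl; simp at hu1
  obtain ⟨P, hP1, hP2⟩ := hP K hK1 hK2 c τ u hu0
  have hPU : Tendsto (fun k => P (ζ k)) U (𝓝 (c + u, τ + 2 * ⟪K c, u⟫)) := hP1.comp hζU
  have hP2U := hζU.eventually hP2
  choose z hz using fun k => hdom (P (ζ k))
  have hdiff : Tendsto (fun k => (P (ζ k)).1 - (ζ k).1) U (𝓝 u) := by
    have := ((continuous_fst.tendsto _).comp hPU).sub ((continuous_fst.tendsto _).comp hζU)
    simpa using this
  have hm1 : ∀ᶠ k in (U : Filter ℕ),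
      ⟪v k, (P (ζ k)).1 - (ζ k).1⟫ ≤ ⟪z k, (P (ζ k)).1 - (ζ k).1⟫ := by
    filter_upwards [hP2U] with k hk
    have := hT _ _ hk.1 _ (hv k) _ (hz k)
    rw [← neg_sub (P (ζ k)).1, inner_neg_right, inner_sub_left] at this
    linarith
  have hvdiff : Tendsto (fun k => ⟪v k, (P (ζ k)).1 - (ζ k).1⟫) U atTop := by
    have h1 : Tendsto (fun k => ⟪‖v k‖⁻¹ • v k, (P (ζ k)).1 - (ζ k).1⟫) U (𝓝 ⟪u, u⟫) :=
      hu.inner hdiff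
    rw [real_inner_self_eq_norm_sq, hu1] at h1
    refine (hvU.atTop_mul_pos (by norm_num) h1).congr' ?_
    filter_upwards [hvU.eventually_gt_atTop 0] with k hk
    rw [inner_smul_left, RCLike.conj_to_real, mul_inv_cancel_left₀ hk.ne']
  have hzdiff : Tendsto (fun k => ⟪z k, (P (ζ k)).1 - (ζ k).1⟫) U atTop :=
    tendsto_atTop_mono' _ hm1 hvdiff
  have hzU : Tendsto (fun k => ‖z k‖) U atTop := by
    have h2 : Tendsto (fun k => ‖z k‖ * 2) U atTop := by
      refine tendsto_atTop_mono' _ ?_ hzdiff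
      have : ∀ᶠ k in (U : Filter ℕ), ‖(P (ζ k)).1 - (ζ k).1‖ < 2 :=
        hdiff.norm.eventually (gt_mem_nhds (by rw [hu1]; norm_num))
      filter_upwards [this] with k hk
      refine (real_inner_le_norm _ _).trans ?_
      gcongr
    exact (tendsto_mul_const_atTop_of_pos (by norm_num)).1 h2
  obtain ⟨y, hy1, hy⟩ := hultunit U z hzU
  have hyu : 0 ≤ ⟪y, u⟫ := by
    refine ge_of_tendsto (hy.inner hdiff) ?_
    filter_upwards [hzdiff.eventually_ge_atTop 0] with k hk
    rw [inner_smul_left, RCLike.conj_to_real]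
    positivity
  have hyb : ∀ b, ⟪u, b⟫ = 0 → ⟪y, u + b⟫ ≤ 0 := by
    intro b hb
    set η : W × ℝ := (c + u + (u + b), τ + 2 * ⟪K c, u⟫ + 2 * ⟪K (c + u), u + b⟫) with hη
    obtain ⟨v', hv'⟩ := hdom η
    have hd : Tendsto (fun k => η.1 - (P (ζ k)).1) U (𝓝 (u + b)) := by
      have := (tendsto_const_nhds (x := η.1)).sub ((continuous_fst.tendsto _).comp hPU)
      simpa [hη] using this
    have hle : ∀ᶠ k in (U : Filter ℕ), ⟪‖z k‖⁻¹ • z k, η.1 - (P (ζ k)).1⟫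
        ≤ ‖z k‖⁻¹ * ⟪v', η.1 - (P (ζ k)).1⟫ := by
      filter_upwards [hP2U] with k hk
      have := hT _ _ (hk.2 b hb) _ (hz k) _ hv'
      rw [← hη, ← neg_sub η.1, inner_neg_right, inner_sub_left] at this
      rw [inner_smul_left, RCLike.conj_to_real]
      gcongr
      linarith
    have hlim : Tendsto (fun k => ‖z k‖⁻¹ * ⟪v', η.1 - (P (ζ k)).1⟫) U (𝓝 0) := by
      have := (tendsto_inv_atTop_zero.comp hzU).mul ((tendsto_const_nhds (x := v')).inner hd)
      simpa using this
    exact le_of_tendsto_of_tendsto (hy.inner hd) hlim hle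
  -- y = ⟪u,y⟫ u + b
  have hyu0 : ⟪y, u⟫ = 0 := le_antisymm (by simpa using hyb 0 (by simp)) hyu
  have := hyb y (by rw [real_inner_comm]; exact hyu0)
  rw [inner_add_right, hyu0, real_inner_self_eq_norm_sq, hy1] at this
  norm_num at this

theorem hclosed (K : W →L[ℝ] W) (hK1 : ∀ a b, ⟪K a, b⟫ = -⟪a, K b⟫)
    (hK2 : ∀ a b, ⟪K a, K b⟫ = ⟪a, b⟫) (T : W × ℝ → Set W) (hT : hmono K T) (hM : hmaxi K T)
    (hdom : ∀ p, (T p).Nonempty) (p : W × ℝ) (U : Ultrafilter ℕ) (ζ : ℕ → W × ℝ) (v : ℕ → W)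
    (hv : ∀ k, v k ∈ T (ζ k)) (hζ : Tendsto ζ U (𝓝 p)) (x : W) (hx : Tendsto v U (𝓝 x)) :
    x ∈ T p := by
  obtain ⟨c, τ⟩ := p
  refine hM _ _ fun q hq v' hv' => ?_
  obtain ⟨d, σ⟩ := q
  by_cases hcd : c = d
  · simp [hcd]
  set w : W := (1 / 2 : ℝ) • (d - c) with hw
  have hw0 : w ≠ 0 := smul_ne_zero (by norm_num) (sub_ne_zero.2 (Ne.symm hcd))
  have hd : d = c + w + w := by rw [hw]; module
  obtain ⟨P, hP1, hP2⟩ := hP K hK1 hK2 c τ w hw0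
  have hself : ∀ a, ⟪K a, a⟫ = 0 := fun a => by
    have := hK1 a a; linarith [real_inner_comm a (K a)]
  have hq' : ((d, σ) : W × ℝ)
      = (c + w + (w + 0), τ + 2 * ⟪K c, w⟫ + 2 * ⟪K (c + w), w + 0⟫) := by
    have h2 : σ = τ + 2 * ⟪K c, d⟫ := hq
    rw [add_zero, ← hd, h2]
    congr 1
    rw [hd]
    simp only [inner_add_left, inner_add_right, map_add, hself]
    ring
  have hPU : Tendsto (fun k => P (ζ k)) U (𝓝 (c + w, τ + 2 * ⟪K c, w⟫)) := hP1.comp hζ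
  have hP2U := hζ.eventually hP2
  choose z hz using fun k => hdom (P (ζ k))
  obtain ⟨M, hMb⟩ := hlocbdd K hK1 hK2 T hT hdom (c + w, τ + 2 * ⟪K c, w⟫)
  obtain ⟨y, hy⟩ := hult U z M ((hPU.eventually hMb).mono fun k hk => hk _ (hz k))
  have hPf : Tendsto (fun k => (P (ζ k)).1) U (𝓝 (c + w)) := (continuous_fst.tendsto _).comp hPU
  have hζf : Tendsto (fun k => (ζ k).1) U (𝓝 c) := (continuous_fst.tendsto _).comp hζ
  have h1 : 0 ≤ ⟪x - y, c - (c + w)⟫ := by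
    refine ge_of_tendsto ((hx.sub hy).inner (hζf.sub hPf)) ?_
    filter_upwards [hP2U] with k hk
    exact hT _ _ hk.1 _ (hv k) _ (hz k)
  have h2 : 0 ≤ ⟪y - v', (c + w) - d⟫ := by
    refine ge_of_tendsto ((hy.sub_const v').inner (hPf.sub_const d)) ?_
    filter_upwards [hP2U] with k hk
    have h := hk.2 0 (by simp)
    rw [← hq'] at h
    exact hT _ _ h _ (hz k) _ hv'
  rw [show c - (c + w) = -w by abel] at h1
  rw [hd, show c + w - (c + w + w) = -w by abel] at h2
  show 0 ≤ ⟪x - v', c - d⟫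
  rw [hd, show c - (c + w + w) = (2:ℝ) • (-w) by module, inner_smul_right,
    show x - v' = (x - y) + (y - v') by abel, inner_add_left]
  linarith

theorem husc (K : W →L[ℝ] W) (hK1 : ∀ a b, ⟪K a, b⟫ = -⟪a, K b⟫)
    (hK2 : ∀ a b, ⟪K a, K b⟫ = ⟪a, b⟫) (T : W × ℝ → Set W) (hT : hmono K T) (hM : hmaxi K T)
    (hdom : ∀ p, (T p).Nonempty) (p : W × ℝ) (O : Set W) (hO : IsOpen O) (hTO : T p ⊆ O) :
    ∀ᶠ q in 𝓝 p, T q ⊆ O := by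
  by_contra hcon
  obtain ⟨u, hu⟩ := (𝓝 p).exists_antitone_basis
  have : ∀ k : ℕ, ∃ q ∈ u k, ∃ v ∈ T q, v ∉ O := by
    intro k
    obtain ⟨q, h1, h2⟩ := ((not_eventually.1 hcon).and_eventually
      (hu.1.mem_of_mem (i := k) trivial)).exists
    exact ⟨q, h2, Set.not_subset.1 h1⟩
  choose ζ h1 v hv hvO using this
  let U : Ultrafilter ℕ := hyperfilter ℕ
  have hU : (U : Filter ℕ) ≤ atTop := by
    rw [← Nat.cofinite_eq_atTop]; exact hyperfilter_le_cofinite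
  have hζU : Tendsto ζ U (𝓝 p) := (hu.tendsto h1).mono_left hU
  obtain ⟨M, hMb⟩ := hlocbdd K hK1 hK2 T hT hdom p
  obtain ⟨x, hx⟩ := hult U v M ((hζU.eventually hMb).mono fun k hk => hk _ (hv k))
  have hxT := hclosed K hK1 hK2 T hT hM hdom p U ζ v hv hζU x hx
  obtain ⟨k, hk⟩ := (hx.eventually (hO.mem_nhds (hTO hxT))).exists
  exact hvO k hk

theorem hmain (K : W →L[ℝ] W) (hK1 : ∀ a b, ⟪K a, b⟫ = -⟪a, K b⟫)
    (hK2 : ∀ a b, ⟪K a, K b⟫ = ⟪a, b⟫) (T : W × ℝ → Set W) (hT : hmono K T) (hM : hmaxi K T)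
    (hdom : ∀ p, (T p).Nonempty) (p : W × ℝ) (lam : ℝ) (hlam : 0 < lam) (x : W) :
    ∃ q, hrel K p q ∧ ∃ v ∈ T q, x = q.1 + lam • v := by
  obtain ⟨c, τ⟩ := p
  let lift : W → W × ℝ := fun y => (c + y, τ + 2 * ⟪K c, c + y⟫)
  have hlift : Continuous lift := by fun_prop
  have hlrel : ∀ y, hrel K (c, τ) (lift y) := fun y => rfl
  by_contra hcon
  push Not at hcon
  obtain ⟨v0, hv0⟩ := hdom (c, τ)
  let R0 : ℝ := ‖lam • v0 + (c - x)‖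
  let R : ℝ := R0 + 1
  have hR : 0 < R := by positivity
  let w : W → W → W := fun y v => c + y + lam • v - x
  have hcoer : ∀ y, R0 < ‖y‖ → ∀ v ∈ T (lift y), 0 < ⟪w y v, y⟫ := by
    intro y hy v hv
    have h1 := hT _ _ (hlrel y) _ hv0 _ hv
    have h2 : 0 ≤ ⟪v - v0, y⟫ := by
      have : (c, τ).1 - (lift y).1 = -y := by simp [lift]
      rw [this, inner_neg_right, ← inner_neg_left, neg_sub] at h1
      exact h1
    have h3 : w y v = y + lam • (v - v0) + (lam • v0 + (c - x)) := by simp only [w]; module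
    rw [h3, inner_add_left, inner_add_left, inner_smul_left, RCLike.conj_to_real,
      real_inner_self_eq_norm_sq]
    have h4 := neg_le_of_abs_le (abs_real_inner_le_norm (lam • v0 + (c - x)) y)
    have h5 : 0 < ‖y‖ := lt_of_le_of_lt (norm_nonneg _) hy
    have h6 : 0 ≤ lam * ⟪v - v0, y⟫ := by positivity
    have h7 : R0 * ‖y‖ < ‖y‖ * ‖y‖ := by gcongr
    simp only [R0] at h7
    nlinarith
  let t : W → Set W := fun y => {e | (∀ v ∈ T (lift y), 0 < ⟪w y v, e⟫) ∧ (R ≤ ‖y‖ → e = y)}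
  have htc : ∀ y, Convex ℝ (t y) := by
    intro y e he e' he' a b ha hb hab
    refine ⟨fun v hv => ?_, fun hy => ?_⟩
    · rw [inner_add_right, inner_smul_right, inner_smul_right]
      have h1 := he.1 v hv
      have h2 := he'.1 v hv
      rcases ha.eq_or_lt with rfl | ha
      · have : b = 1 := by linarith
        subst this; simpa using h2
      · have := mul_pos ha h1
        have := mul_nonneg hb h2.le
        linarith
    · rw [he.2 hy, he'.2 hy, ← add_smul, hab, one_smul]
  have hconv : ∀ q, Convex ℝ (T q) := by
    intro q e he e' he' a b ha hb hab
    refine hM _ _ fun q' hq' z hz => ?_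
    have h1 := hT _ _ hq' _ he _ hz
    have h2 := hT _ _ hq' _ he' _ hz
    have : a • e + b • e' - z = a • (e - z) + b • (e' - z) := by
      have : z = (a + b) • z := by rw [hab, one_smul]
      nth_rw 1 [this]; module
    rw [this, inner_add_left, inner_smul_left, inner_smul_left, RCLike.conj_to_real,
      RCLike.conj_to_real]
    positivity
  have hclo : ∀ q, IsClosed (T q) := by
    intro q
    have : T q = ⋂ (q' : W × ℝ) (_ : hrel K q q') (z : W) (_ : z ∈ T q'),
        {v | 0 ≤ ⟪v - z, q.1 - q'.1⟫} := by
      ext v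
      simp only [Set.mem_iInter, Set.mem_ofPred_eq]
      exact ⟨fun hv q' hq' z hz => hT _ _ hq' _ hv _ hz, fun h => hM _ _ h⟩
    rw [this]
    refine isClosed_iInter fun q' => isClosed_iInter fun _ => isClosed_iInter fun z =>
      isClosed_iInter fun _ => isClosed_le continuous_const (by fun_prop)
  have hloc : ∀ y : W, ∃ O ∈ 𝓝 y, ∃ g : W → W,
      ContMDiffOn (modelWithCornersSelf ℝ W) (modelWithCornersSelf ℝ W) 1 g O ∧
        ∀ y' ∈ O, g y' ∈ t y' := by
    intro y
    by_cases hy : R ≤ ‖y‖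
    · refine ⟨{y' | R0 < ‖y'‖}, ?_, id, contMDiffOn_id, fun y' hy' => ⟨?_, fun _ => rfl⟩⟩
      · refine (isOpen_lt continuous_const continuous_norm).mem_nhds ?_
        show R0 < ‖y‖
        have : R0 < R := by simp [R]
        linarith
      · exact hcoer y' hy'
    · push Not at hy
      -- separation
      have hnot : lam⁻¹ • (x - (c + y)) ∉ T (lift y) := by
        intro hmem
        refine hcon _ (hlrel y) _ hmem ?_
        simp [lift, smul_smul, mul_inv_cancel₀ hlam.ne']
      obtain ⟨f, u, hfu, hf⟩ := geometric_hahn_banach_point_closed (hconv (lift y))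
        (hclo (lift y)) hnot
      let e : W := (InnerProductSpace.toDual ℝ W).symm f
      have hfe : ∀ v, f v = ⟪v, e⟫ := fun v => by
        rw [real_inner_comm]; simp [e]
      have h1 : ∀ᶠ y' in 𝓝 y, ⟪lam⁻¹ • (x - (c + y')), e⟫ < u := by
        have hc : Continuous fun y' : W => ⟪lam⁻¹ • (x - (c + y')), e⟫ := by fun_prop
        exact hc.continuousAt.eventually (gt_mem_nhds (by simpa only [← hfe] using hfu))
      have h2 : ∀ᶠ y' in 𝓝 y, T (lift y') ⊆ {v | u < ⟪v, e⟫} :=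
        hlift.continuousAt.eventually (husc K hK1 hK2 T hT hM hdom (lift y) _
          (isOpen_lt continuous_const (by fun_prop)) (fun v hv => by
            have := hf v hv; rw [hfe] at this; exact this))
      have h3 : ∀ᶠ y' in 𝓝 y, ‖y'‖ < R := continuous_norm.continuousAt.eventually (gt_mem_nhds hy)
      refine ⟨_, (h1.and (h2.and h3)), fun _ => e, contMDiffOn_const, ?_⟩
      rintro y' ⟨hy1, hy2, hy3⟩
      refine ⟨fun v hv => ?_, fun h => absurd h (not_le.2 hy3)⟩
      have h4 : u < ⟪v, e⟫ := hy2 hv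
      have h5 : w y' v = lam • (v - lam⁻¹ • (x - (c + y'))) := by
        rw [smul_sub, smul_smul, mul_inv_cancel₀ hlam.ne', one_smul]; simp only [w]; abel
      rw [h5, inner_smul_left, RCLike.conj_to_real, inner_sub_left]
      have : 0 < ⟪v, e⟫ - ⟪lam⁻¹ • (x - (c + y')), e⟫ := by linarith
      positivity
  obtain ⟨g, hg⟩ := exists_contMDiffMap_forall_mem_convex_of_local (n := 1)
    (modelWithCornersSelf ℝ W) htc hloc
  obtain ⟨y, hy⟩ := hh_zero R hR g g.contMDiff.contDiff (fun y hy => (hg y).2 hy)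
  obtain ⟨v, hv⟩ := hdom (lift y)
  have := (hg y).1 v hv
  rw [hy, inner_zero_right] at this
  exact lt_irrefl _ this

end Abstract

/-- The skew isometry `(x, y) ↦ (y, -x)` of `F × F`. -/
def mintyF (F : Type*) [NormedAddCommGroup F] [InnerProductSpace ℝ F] :
    WithLp 2 (F × F) →L[ℝ] WithLp 2 (F × F) :=
  ((WithLp.prodContinuousLinearEquiv 2 ℝ F F).symm : F × F →L[ℝ] WithLp 2 (F × F)).comp
    (((ContinuousLinearMap.snd ℝ F F).prod (-(ContinuousLinearMap.fst ℝ F F))).comp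
      ((WithLp.prodContinuousLinearEquiv 2 ℝ F F) : WithLp 2 (F × F) →L[ℝ] F × F))

theorem mintyF_apply {F : Type*} [NormedAddCommGroup F] [InnerProductSpace ℝ F]
    (a : WithLp 2 (F × F)) : mintyF F a = WithLp.toLp 2 (a.snd, -a.fst) := rfl

theorem mintyF_inner {F : Type*} [NormedAddCommGroup F] [InnerProductSpace ℝ F]
    (a b : WithLp 2 (F × F)) :
    ⟪mintyF F a, b⟫ = ⟪a.snd, b.fst⟫ - ⟪a.fst, b.snd⟫ := by
  rw [mintyF_apply, WithLp.prod_inner_apply]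
  simp [sub_eq_add_neg]

theorem mintyF_isom {F : Type*} [NormedAddCommGroup F] [InnerProductSpace ℝ F]
    (a b : WithLp 2 (F × F)) : ⟪mintyF F a, mintyF F b⟫ = ⟪a, b⟫ := by
  rw [mintyF_inner, mintyF_apply, WithLp.prod_inner_apply]
  simp [add_comm]

theorem mintyF_skew {F : Type*} [NormedAddCommGroup F] [InnerProductSpace ℝ F]
    (a b : WithLp 2 (F × F)) : ⟪mintyF F a, b⟫ = -⟪a, mintyF F b⟫ := by
  rw [real_inner_comm (mintyF F b) a, mintyF_inner, mintyF_inner,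
    real_inner_comm b.fst a.snd, real_inner_comm b.snd a.fst]
  ring

/-- The skew isometry on `V₁`. -/
def mintyK (n : ℕ) : V1 n →L[ℝ] V1 n := mintyF (E n)

theorem mintyK_inner {n : ℕ} (a b : V1 n) :
    ⟪mintyK n a, b⟫ = ⟪a.snd, b.fst⟫ - ⟪a.fst, b.snd⟫ := mintyF_inner a b

theorem mintyK_isom (n : ℕ) (a b : V1 n) : ⟪mintyK n a, mintyK n b⟫ = ⟪a, b⟫ := mintyF_isom a b

theorem mintyK_skew (n : ℕ) (a b : V1 n) : ⟪mintyK n a, b⟫ = -⟪a, mintyK n b⟫ := mintyF_skew a b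

/-- Minty's theorem, direction i ⇒ ii: if T is maximal H-monotone with full domain, then
ξ₁ + λT restricted to every horizontal plane is surjective onto V₁. -/
theorem maximal_HMonotone_surjective {n : ℕ} (hn : 1 ≤ n)
    (T : Heis n → Set (V1 n)) (hT : IsMaximalHMonotone T)
    (hdom : ∀ η, (T η).Nonempty) :
    ∀ η : Heis n, ∀ lam : ℝ, 0 < lam → ∀ p : V1 n,
      ∃ ζ ∈ Hplane η, ∃ v ∈ T ζ, p = xi1 ζ + lam • v := by
  let T' : V1 n × ℝ → Set (V1 n) := fun q => T (q.1.fst, q.1.snd, q.2)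
  have hrel_iff : ∀ η η' : Heis n, η' ∈ Hplane η ↔
      hrel (mintyK n) (xi1 η, η.2.2) (xi1 η', η'.2.2) := by
    intro η η'
    show η'.2.2 = _ ↔ η'.2.2 = _
    rw [mintyK_inner]
    rfl
  have hT' : hmono (mintyK n) T' := by
    intro p q hpq v hv z hz
    exact hT.1 (p.1.fst, p.1.snd, p.2) (q.1.fst, q.1.snd, q.2) ((hrel_iff _ _).2 hpq) v hv z hz
  have hM' : hmaxi (mintyK n) T' := by
    intro p v h
    refine hT.2 (p.1.fst, p.1.snd, p.2) v fun η' hη' z hz => ?_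
    exact h (xi1 η', η'.2.2) ((hrel_iff _ _).1 hη') z hz
  intro η lam hlam p
  obtain ⟨q, hq, v, hv, hp⟩ := hmain (mintyK n) (mintyK_skew n) (mintyK_isom n) T' hT' hM'
    (fun q => hdom _) (xi1 η, η.2.2) lam hlam p
  exact ⟨(q.1.fst, q.1.snd, q.2), (hrel_iff _ _).2 hq, v, hv, hp⟩
end
end

section
/- Let T : ℍⁿ ⇉ V₁ be an H-monotone set-valued map with dom(T) = ℍⁿ. Assume that for every η ∈ ℍⁿ and every λ > 0 the map (ξ₁ + λT) restricted to H_η is surjective onto V₁, i.e. for every p ∈ ℝ²ⁿ there exist ζ ∈ H_η and v ∈ T(ζ) with p = ξ₁(ζ) + λ v. Then T is maximal H-monotone. -/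
open scoped RealInnerProductSpace Pointwise

noncomputable section

/-- Minty's theorem, direction ii ⇒ i: if T is H-monotone with full domain and
ξ₁ + λT restricted to every horizontal plane is surjective onto V₁ (for every λ > 0),
then T is maximal H-monotone. -/
theorem surjective_imp_maximal_HMonotone {n : ℕ} (hn : 1 ≤ n)
    (T : Heis n → Set (V1 n)) (hT : IsHMonotone T)
    (hdom : ∀ η, (T η).Nonempty)
    (hsurj : ∀ η : Heis n, ∀ lam : ℝ, 0 < lam → ∀ p : V1 n,
      ∃ ζ ∈ Hplane η, ∃ v ∈ T ζ, p = xi1 ζ + lam • v) :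
    IsMaximalHMonotone T := by
  refine ⟨hT, fun η v h => ?_⟩
  obtain ⟨ζ, hζ, w, hw, hp⟩ := hsurj η 1 one_pos (xi1 η + v)
  rw [one_smul] at hp
  have h1 := h ζ hζ w hw
  have h2 : v - w = -(xi1 η - xi1 ζ) := by
    have h3 : v = xi1 ζ + w - xi1 η := by rw [← hp]; abel
    rw [h3]; abel
  rw [h2, inner_neg_left] at h1
  have h4 : xi1 η - xi1 ζ = 0 := by
    rw [real_inner_self_eq_norm_sq] at h1
    have h8 : ‖xi1 η - xi1 ζ‖ ^ 2 = 0 := le_antisymm (by linarith) (sq_nonneg _)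
    exact norm_eq_zero.1 (pow_eq_zero_iff two_ne_zero |>.1 h8)
  have hvw : v = w := by
    rw [h4, neg_zero] at h2
    exact sub_eq_zero.1 h2
  have h5 : (η.1, η.2.1) = (ζ.1, ζ.2.1) :=
    (WithLp.equiv 2 (E n × E n)).symm.injective (sub_eq_zero.1 h4)
  obtain ⟨x, y, t⟩ := η
  obtain ⟨x', y', t'⟩ := ζ
  simp only [Prod.mk.injEq] at h5
  obtain ⟨rfl, rfl⟩ := h5
  have h6 : t' = t := by
    have h7 : t' = t + 2 * (⟪y, x⟫ - ⟪x, y⟫) := hζ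
    rw [real_inner_comm y x] at h7
    linarith
  subst h6
  rw [hvw]
  exact hw
end
end

section
/- Let T : ℍⁿ ⇉ V₁ be a maximal H-monotone set-valued map with dom(T) = ℍⁿ. Then T is compact-valued: for every η ∈ ℍⁿ, the set T(η) ⊆ ℝ²ⁿ is nonempty and compact. -/
open scoped RealInnerProductSpace Pointwise

noncomputable section

/-- Proposition 2.4.ii: a maximal H-monotone map with full domain is compact-valued. -/
theorem maximal_HMonotone_compact_values {n : ℕ} (hn : 1 ≤ n)
    (T : Heis n → Set (V1 n)) (hT : IsMaximalHMonotone T)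
    (hdom : ∀ η, (T η).Nonempty) :
    ∀ η : Heis n, (T η).Nonempty ∧ IsCompact (T η) := by
  intro η
  refine ⟨hdom η, ?_⟩
  obtain ⟨hm, hmax⟩ := hT
  -- closedness: the value is an intersection of closed half-spaces
  have hclosed : IsClosed (T η) := by
    have h : T η = ⋂ η' ∈ Hplane η, ⋂ v' ∈ T η',
        {v : V1 n | 0 ≤ ⟪v - v', xi1 η - xi1 η'⟫} := by
      ext v
      simp only [Set.mem_iInter, Set.mem_setOf_eq]
      exact ⟨fun hv η' h' v' hv' => hm η η' h' v hv v' hv', fun h => hmax η v h⟩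
    rw [h]
    refine isClosed_iInter fun η' => isClosed_iInter fun _ => isClosed_iInter fun v' =>
      isClosed_iInter fun _ => ?_
    exact isClosed_le continuous_const (by fun_prop)
  -- directional bounds
  have hdir : ∀ u : V1 n, ∃ c : ℝ, ∀ v ∈ T η, ⟪v, u⟫ ≤ c := by
    intro u
    let η' : Heis n := (η.1 + u.fst, η.2.1 + u.snd,
      η.2.2 + 2 * (⟪η.2.1, η.1 + u.fst⟫ - ⟪η.1, η.2.1 + u.snd⟫))
    have hη' : η' ∈ Hplane η := rfl
    have hu : xi1 η - xi1 η' = -u := by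
      apply (WithLp.equiv 2 (E n × E n)).injective
      ext i <;> simp [xi1, η']
    obtain ⟨w, hw⟩ := hdom η'
    refine ⟨⟪w, u⟫, fun v hv => ?_⟩
    have := hm η η' hη' v hv w hw
    rw [hu, inner_neg_right, inner_sub_left] at this
    linarith
  choose c hc using hdir
  have hbdd : Bornology.IsBounded (T η) := by
    let b := stdOrthonormalBasis ℝ (V1 n)
    refine isBounded_iff_forall_norm_le.2 ⟨∑ i, max (c (b i)) (c (-b i)), fun v hv => ?_⟩
    calc ‖v‖ = ‖∑ i, ⟪b i, v⟫ • b i‖ := by rw [b.sum_repr' v]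
      _ ≤ ∑ i, ‖⟪b i, v⟫ • b i‖ := norm_sum_le _ _
      _ ≤ _ := by
        refine Finset.sum_le_sum fun i _ => ?_
        rw [norm_smul, b.orthonormal.1 i, mul_one, Real.norm_eq_abs, real_inner_comm]
        have h1 := hc (b i) v hv
        have h2 := hc (-b i) v hv
        rw [inner_neg_right] at h2
        exact abs_le'.2 ⟨h1.trans (le_max_left _ _), h2.trans (le_max_right _ _)⟩
  exact Metric.isCompact_of_isClosed_isBounded hclosed hbdd
end
end

section
/- Let T : ℍⁿ ⇉ V₁ be an upper semicontinuous maximal H-monotone set-valued map with dom(T) = ℍⁿ. Then the graph of T is closed in ℍⁿ × ℝ²ⁿ, and for every compact set K ⊆ ℍⁿ (with respect to d_H) the image T(K) = ∪_{η∈K} T(η) is a compact subset of ℝ²ⁿ; in particular, T is locally bounded. -/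
open scoped RealInnerProductSpace Pointwise

noncomputable section

/-- Upper semicontinuity of a set-valued map T : ℍⁿ ⇉ V₁, w.r.t. the Korányi–Cygan distance. -/
def IsUSC {n : ℕ} (T : Heis n → Set (V1 n)) : Prop :=
  ∀ η : Heis n, ∀ ε > (0 : ℝ), ∃ δ > (0 : ℝ), ∀ η' : Heis n,
    dH η' η < δ → T η' ⊆ T η + Metric.ball (0 : V1 n) ε

theorem aux_bdd {n : ℕ} (T : Heis n → Set (V1 n)) (hT : IsMaximalHMonotone T)
    (hdom : ∀ η, (T η).Nonempty) (η : Heis n) : ∃ M > (0 : ℝ), ∀ v ∈ T η, ‖v‖ ≤ M := by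
  have key : ∀ w : V1 n, ∃ C : ℝ, ∀ v ∈ T η, ⟪w, v⟫ ≤ C := by
    intro w
    let η' : Heis n := (η.1 + w.fst, η.2.1 + w.snd,
      η.2.2 + 2 * (⟪η.2.1, η.1 + w.fst⟫ - ⟪η.1, η.2.1 + w.snd⟫))
    obtain ⟨v', hv'⟩ := hdom η'
    refine ⟨⟪w, v'⟫, fun v hv => ?_⟩
    have h := hT.1 η η' rfl v hv v' hv'
    have hw : xi1 η - xi1 η' = -w := by
      have : xi1 η' = xi1 η + w := rfl
      rw [this]; abel
    rw [hw, inner_neg_right, real_inner_comm, inner_sub_right] at h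
    linarith
  choose C hC using key
  let b := stdOrthonormalBasis ℝ (V1 n)
  refine ⟨|∑ i, max (C (b i)) (C (-b i))| + 1, by positivity, fun v hv => ?_⟩
  have h1 : ‖v‖ ≤ ∑ i, max (C (b i)) (C (-b i)) := by
    conv_lhs => rw [← b.sum_repr' v]
    refine (norm_sum_le _ _).trans (Finset.sum_le_sum fun i _ => ?_)
    rw [norm_smul, b.orthonormal.1 i, mul_one, Real.norm_eq_abs]
    have h2 := hC (b i) v hv
    have h3 := hC (-b i) v hv
    rw [inner_neg_left] at h3
    exact abs_le.2 ⟨by linarith [le_max_right (C (b i)) (C (-b i))], h2.trans (le_max_left _ _)⟩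
  have := le_abs_self (∑ i, max (C (b i)) (C (-b i)))
  linarith

theorem aux_closed {n : ℕ} (T : Heis n → Set (V1 n)) (hT : IsMaximalHMonotone T)
    (η : Heis n) : IsClosed (T η) := by
  have : T η = ⋂ η' ∈ Hplane η, ⋂ v' ∈ T η', {v | 0 ≤ ⟪v - v', xi1 η - xi1 η'⟫} := by
    ext v
    simp only [Set.mem_iInter, Set.mem_ofPred_eq]
    exact ⟨fun hv η' h v' hv' => hT.1 η η' h v hv v' hv', fun h => hT.2 η v h⟩
  rw [this]
  refine isClosed_biInter fun η' _ => isClosed_biInter fun v' _ => ?_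
  exact isClosed_le continuous_const (by fun_prop)

theorem aux_nhds {n : ℕ} (η : Heis n) (δ : ℝ) (hδ : 0 < δ) :
    ∀ᶠ η' in nhds η, dH η' η < δ := by
  have hc : Continuous fun η' : Heis n => dH η' η := by
    unfold dH gaugeN hmul hinv
    refine Continuous.rpow_const (by fun_prop) fun _ => Or.inr (by norm_num)
  have h0 : dH η η = 0 := by
    simp [dH, gaugeN, hmul, hinv]
  exact hc.continuousAt.eventually_lt continuousAt_const (by simpa [h0] using hδ)

/-- Corollary 2.5: a usc maximal H-monotone map with full domain has closed graph,
maps compact sets to compact sets, and is in particular locally bounded. -/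
theorem usc_maximal_HMonotone_closed_compact {n : ℕ} (hn : 1 ≤ n)
    (T : Heis n → Set (V1 n)) (hT : IsMaximalHMonotone T)
    (hdom : ∀ η, (T η).Nonempty) (husc : IsUSC T) :
    IsClosed {p : Heis n × V1 n | p.2 ∈ T p.1} ∧
    (∀ K : Set (Heis n), IsCompact K → IsCompact (⋃ η ∈ K, T η)) ∧
    (∀ η₀ : Heis n, ∃ r > (0 : ℝ), ∃ M > (0 : ℝ),
      ∀ η : Heis n, dH η η₀ ≤ r → ∀ v ∈ T η, ‖v‖ ≤ M) := by
  have hloc : ∀ η₀ : Heis n, ∃ r > (0 : ℝ), ∃ M > (0 : ℝ),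
      ∀ η : Heis n, dH η η₀ ≤ r → ∀ v ∈ T η, ‖v‖ ≤ M := by
    intro η₀
    obtain ⟨M, hM, hb⟩ := aux_bdd T hT hdom η₀
    obtain ⟨δ, hδ, h⟩ := husc η₀ 1 one_pos
    refine ⟨δ / 2, by positivity, M + 1, by positivity, fun η hη v hv => ?_⟩
    obtain ⟨a, ha, c, hc, rfl⟩ := h η (by linarith) hv
    have h1 := hb a ha
    have h2 : ‖c‖ < 1 := by simpa using hc
    have h3 := norm_add_le a c
    show ‖a + c‖ ≤ _
    linarith
  have hgraph : IsClosed {p : Heis n × V1 n | p.2 ∈ T p.1} := by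
    rw [isClosed_iff_frequently]
    rintro ⟨η, v⟩ hf
    show v ∈ T η
    rw [← (aux_closed T hT η).closure_eq, Metric.mem_closure_iff]
    intro ε hε
    obtain ⟨δ, hδ, h⟩ := husc η (ε / 2) (by positivity)
    have e1 : ∀ᶠ p : Heis n × V1 n in nhds (η, v), dH p.1 η < δ :=
      (continuous_fst.tendsto (η, v)).eventually (aux_nhds η δ hδ)
    have e2 : ∀ᶠ p : Heis n × V1 n in nhds (η, v), dist p.2 v < ε / 2 :=
      (continuous_snd.tendsto (η, v)).eventually (Metric.ball_mem_nhds v (by positivity))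
    obtain ⟨⟨η', v'⟩, hp, h1, h2⟩ := (hf.and_eventually (e1.and e2)).exists
    obtain ⟨a, ha, c, hc, hac⟩ := h η' h1 hp
    refine ⟨a, ha, ?_⟩
    have hc' : ‖c‖ < ε / 2 := by simpa using hc
    have hac' : a + c = v' := hac
    have h3 : dist v' a < ε / 2 := by
      rw [← hac', dist_eq_norm]; simpa using hc'
    have h4 := dist_triangle v v' a
    have h2' : dist v' v < ε / 2 := h2
    rw [dist_comm] at h2'
    linarith
  refine ⟨hgraph, fun K hK => ?_, hloc⟩
  have hM : ∃ M : ℝ, ∀ η ∈ K, ∀ v ∈ T η, ‖v‖ ≤ M := by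
    refine hK.induction_on (p := fun S => ∃ M : ℝ, ∀ η ∈ S, ∀ v ∈ T η, ‖v‖ ≤ M) ?_ ?_ ?_ ?_
    · exact ⟨0, by simp⟩
    · rintro s t hst ⟨M, h⟩
      exact ⟨M, fun η hη => h η (hst hη)⟩
    · rintro s t ⟨M, h⟩ ⟨M', h'⟩
      refine ⟨max M M', ?_⟩
      rintro η (hη | hη) v hv
      · exact (h η hη v hv).trans (le_max_left _ _)
      · exact (h' η hη v hv).trans (le_max_right _ _)
    · intro η _
      obtain ⟨r, hr, M, _, h⟩ := hloc η
      exact ⟨_, mem_nhdsWithin_of_mem_nhds (aux_nhds η r hr), M, fun η' h' => h η' (le_of_lt h')⟩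
  obtain ⟨M, hM⟩ := hM
  have hc := ((hK.prod (isCompact_closedBall (0 : V1 n) M)).inter_right hgraph).image
    continuous_snd
  have heq : (⋃ η ∈ K, T η) = Set.image Prod.snd
      (K ×ˢ Metric.closedBall (0 : V1 n) M ∩ {p : Heis n × V1 n | p.2 ∈ T p.1}) := by
    apply Set.Subset.antisymm
    · intro v hv
      obtain ⟨η, hη, hv⟩ := Set.mem_iUnion₂.1 hv
      exact ⟨(η, v), ⟨⟨hη, mem_closedBall_zero_iff.2 (hM η hη v hv)⟩, hv⟩, rfl⟩
    · rintro _ ⟨⟨η, w⟩, ⟨⟨hη, _⟩, hv⟩, rfl⟩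
      exact Set.mem_iUnion₂.2 ⟨η, hη, hv⟩
  rw [heq]
  exact hc
end
end

section
/- Let T : ℍⁿ ⇉ V₁ be a maximal H-monotone set-valued map with dom(T) = ℍⁿ. Then T is locally bounded if and only if T is upper semicontinuous. -/
open scoped RealInnerProductSpace Pointwise

noncomputable section

/-- Local boundedness of a set-valued map T : ℍⁿ ⇉ V₁, w.r.t. the Korányi–Cygan distance. -/
def IsLocallyBounded {n : ℕ} (T : Heis n → Set (V1 n)) : Prop :=
  ∀ η₀ : Heis n, ∃ r > (0 : ℝ), ∃ M : ℝ, ∀ η : Heis n, dH η η₀ ≤ r → ∀ v ∈ T η, ‖v‖ ≤ M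

open Filter Topology

lemma dH_continuous {n : ℕ} (ζ : Heis n) : Continuous fun η : Heis n => dH η ζ := by
  unfold dH gaugeN hmul hinv
  refine Continuous.rpow_const ?_ (fun _ => Or.inr (by norm_num))
  fun_prop

lemma dH_self {n : ℕ} (ζ : Heis n) : dH ζ ζ = 0 := by
  simp [dH, gaugeN, hmul, hinv, real_inner_comm]

lemma dH_pow {n : ℕ} (η ζ : Heis n) :
    dH η ζ ^ 4 = (‖-ζ.1 + η.1‖ ^ 2 + ‖-ζ.2.1 + η.2.1‖ ^ 2) ^ 2 +
      (-ζ.2.2 + η.2.2 + 2 * (⟪η.1, -ζ.2.1⟫ - ⟪-ζ.1, η.2.1⟫)) ^ 2 := by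
  unfold dH gaugeN hmul hinv
  dsimp only
  rw [← Real.rpow_natCast, ← Real.rpow_mul (by positivity)]
  norm_num

lemma tendsto_of_dH {n : ℕ} (u : ℕ → Heis n) (η : Heis n)
    (h : Tendsto (fun k => dH (u k) η) atTop (𝓝 0)) : Tendsto u atTop (𝓝 η) := by
  have h4 : Tendsto (fun k => dH (u k) η ^ 4) atTop (𝓝 0) := by
    simpa using h.pow 4
  have hs : Tendsto (fun k => Real.sqrt (dH (u k) η ^ 4)) atTop (𝓝 0) := by
    simpa using h4.sqrt
  have hss : Tendsto (fun k => Real.sqrt (Real.sqrt (dH (u k) η ^ 4))) atTop (𝓝 0) := by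
    simpa using hs.sqrt
  have hx : Tendsto (fun k => (u k).1) atTop (𝓝 η.1) := by
    rw [tendsto_iff_norm_sub_tendsto_zero]
    refine squeeze_zero (fun _ => norm_nonneg _) (fun k => ?_) hss
    apply Real.le_sqrt_of_sq_le
    apply Real.le_sqrt_of_sq_le
    rw [dH_pow, neg_add_eq_sub]
    have h1 : ‖(u k).1 - η.1‖ ^ 2 ≤ ‖(u k).1 - η.1‖ ^ 2 + ‖-η.2.1 + (u k).2.1‖ ^ 2 := by
      have := sq_nonneg ‖-η.2.1 + (u k).2.1‖
      linarith
    have h2 := pow_le_pow_left₀ (by positivity) h1 2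
    exact h2.trans (le_add_of_nonneg_right (sq_nonneg _))
  have hy : Tendsto (fun k => (u k).2.1) atTop (𝓝 η.2.1) := by
    rw [tendsto_iff_norm_sub_tendsto_zero]
    refine squeeze_zero (fun _ => norm_nonneg _) (fun k => ?_) hss
    apply Real.le_sqrt_of_sq_le
    apply Real.le_sqrt_of_sq_le
    rw [dH_pow, neg_add_eq_sub η.2.1]
    have h1 : ‖(u k).2.1 - η.2.1‖ ^ 2 ≤ ‖-η.1 + (u k).1‖ ^ 2 + ‖(u k).2.1 - η.2.1‖ ^ 2 := by
      have := sq_nonneg ‖-η.1 + (u k).1‖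
      linarith
    have h2 := pow_le_pow_left₀ (by positivity) h1 2
    exact h2.trans (le_add_of_nonneg_right (sq_nonneg _))
  have hg : Tendsto (fun k => -η.2.2 + (u k).2.2 +
      2 * (⟪(u k).1, -η.2.1⟫ - ⟪-η.1, (u k).2.1⟫)) atTop (𝓝 0) := by
    refine squeeze_zero_norm (fun k => ?_) hs
    rw [Real.norm_eq_abs]
    apply Real.abs_le_sqrt
    rw [dH_pow]
    exact le_add_of_nonneg_left (sq_nonneg _)
  have hi : Tendsto (fun k => 2 * (⟪(u k).1, -η.2.1⟫ - ⟪-η.1, (u k).2.1⟫)) atTop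
      (𝓝 (2 * (⟪η.1, -η.2.1⟫ - ⟪-η.1, η.2.1⟫))) :=
    ((hx.inner tendsto_const_nhds).sub (tendsto_const_nhds.inner hy)).const_mul 2
  have ht : Tendsto (fun k => (u k).2.2) atTop (𝓝 η.2.2) := by
    have := (hg.sub hi).add_const η.2.2
    convert this using 2
    · ring
    · simp
  exact hx.prodMk_nhds (hy.prodMk_nhds ht)

lemma xi1_continuous {n : ℕ} : Continuous (xi1 : Heis n → V1 n) := by
  unfold xi1
  exact (WithLp.prod_continuous_toLp 2 (E n) (E n)).comp (by fun_prop)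

/-- The coefficient of the correction. -/
def coefC {n : ℕ} (η' η θ : Heis n) : ℝ :=
  ((η'.2.2 - θ.2.2) / 2 - (⟪θ.2.1 - η'.2.1, (2⁻¹ : ℝ) • (η.1 + η'.1)⟫
    - ⟪θ.1 - η'.1, (2⁻¹ : ℝ) • (η.2.1 + η'.2.1)⟫)) /
    (⟪θ.1 - η'.1, θ.1 - η'.1⟫ + ⟪θ.2.1 - η'.2.1, θ.2.1 - η'.2.1⟫)

def ptX {n : ℕ} (η' η θ : Heis n) : E n :=
  (2⁻¹ : ℝ) • (η.1 + η'.1) + coefC η' η θ • (θ.2.1 - η'.2.1)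

def ptY {n : ℕ} (η' η θ : Heis n) : E n :=
  (2⁻¹ : ℝ) • (η.2.1 + η'.2.1) - coefC η' η θ • (θ.1 - η'.1)

def ptZ {n : ℕ} (η' η θ : Heis n) : Heis n :=
  (ptX η' η θ, ptY η' η θ,
    η'.2.2 + 2 * (⟪η'.2.1, ptX η' η θ⟫ - ⟪η'.1, ptY η' η θ⟫))

lemma denom_ne {n : ℕ} (η' θ : Heis n) (h : xi1 θ ≠ xi1 η') :
    ⟪θ.1 - η'.1, θ.1 - η'.1⟫ + ⟪θ.2.1 - η'.2.1, θ.2.1 - η'.2.1⟫ ≠ 0 := by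
  intro h0
  rw [real_inner_self_eq_norm_sq, real_inner_self_eq_norm_sq] at h0
  have h1 : ‖θ.1 - η'.1‖ ^ 2 = 0 := by
    have := sq_nonneg ‖θ.1 - η'.1‖
    have := sq_nonneg ‖θ.2.1 - η'.2.1‖
    linarith
  have h2 : ‖θ.2.1 - η'.2.1‖ ^ 2 = 0 := by linarith
  apply h
  have h3 : θ.1 = η'.1 := by simpa [sub_eq_zero] using h1
  have h4 : θ.2.1 = η'.2.1 := by simpa [sub_eq_zero] using h2
  simp [xi1, h3, h4]

lemma ptZ_mem {n : ℕ} (η' η θ : Heis n) (h : xi1 θ ≠ xi1 η') :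
    ptZ η' η θ ∈ Hplane θ := by
  have hd := denom_ne η' θ h
  have hc : coefC η' η θ * (⟪θ.1 - η'.1, θ.1 - η'.1⟫ + ⟪θ.2.1 - η'.2.1, θ.2.1 - η'.2.1⟫) =
    ((η'.2.2 - θ.2.2) / 2 - (⟪θ.2.1 - η'.2.1, (2⁻¹ : ℝ) • (η.1 + η'.1)⟫
    - ⟪θ.1 - η'.1, (2⁻¹ : ℝ) • (η.2.1 + η'.2.1)⟫)) := by
    unfold coefC
    exact div_mul_cancel₀ _ hd
  have key : ⟪θ.2.1 - η'.2.1, ptX η' η θ⟫ - ⟪θ.1 - η'.1, ptY η' η θ⟫ =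
      (η'.2.2 - θ.2.2) / 2 := by
    unfold ptX ptY
    rw [inner_add_right, inner_sub_right (θ.1 - η'.1), real_inner_smul_right _ _ (coefC η' η θ),
      real_inner_smul_right _ _ (coefC η' η θ)]
    linarith
  rw [inner_sub_left, inner_sub_left] at key
  simp only [ptZ, Hplane, Set.mem_setOf_eq]
  linarith

lemma coefC_self {n : ℕ} (η' η : Heis n) (h : η' ∈ Hplane η) : coefC η' η η = 0 := by
  unfold coefC
  simp only [Hplane, Set.mem_setOf_eq] at h
  rw [h]
  simp only [inner_sub_left, inner_add_right, real_inner_smul_right]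
  rw [real_inner_comm η.1 η.2.1, real_inner_comm η.1 η'.2.1, real_inner_comm η'.1 η'.2.1,
    real_inner_comm η'.1 η.2.1]
  rw [div_eq_zero_iff]
  left
  ring

lemma ptZ_continuousAt {n : ℕ} (η' η : Heis n) (h : xi1 η ≠ xi1 η') :
    ContinuousAt (ptZ η' η) η := by
  have hc : ContinuousAt (coefC η' η) η := by
    unfold coefC
    refine ContinuousAt.div ?_ ?_ (denom_ne η' η h)
    · apply Continuous.continuousAt
      fun_prop
    · apply Continuous.continuousAt
      fun_prop
  have hX : ContinuousAt (ptX η' η) η := by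
    unfold ptX
    fun_prop
  have hY : ContinuousAt (ptY η' η) η := by
    unfold ptY
    fun_prop
  unfold ptZ
  fun_prop

lemma xi1_mid {n : ℕ} (η' η : Heis n) (h : η' ∈ Hplane η) :
    xi1 (ptZ η' η η) = (2⁻¹ : ℝ) • (xi1 η + xi1 η') := by
  simp only [ptZ, ptX, ptY, coefC_self η' η h, xi1]
  simp
  rfl

lemma closed_graph {n : ℕ} (T : Heis n → Set (V1 n)) (hT : IsMaximalHMonotone T)
    (hdom : ∀ η, (T η).Nonempty) (hb : IsLocallyBounded T)
    (u : ℕ → Heis n) (η : Heis n) (hu : Tendsto u atTop (𝓝 η))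
    (v : ℕ → V1 n) (v₀ : V1 n) (hv : ∀ k, v k ∈ T (u k)) (hv0 : Tendsto v atTop (𝓝 v₀)) :
    v₀ ∈ T η := by
  refine hT.2 η v₀ fun η' hη' v' hv' => ?_
  by_cases hne : xi1 η = xi1 η'
  · simp [hne]
  have hZ : Tendsto (fun k => ptZ η' η (u k)) atTop (𝓝 (ptZ η' η η)) :=
    (ptZ_continuousAt η' η hne).tendsto.comp hu
  obtain ⟨r, hr, M, hM⟩ := hb (ptZ η' η η)
  choose w hw using fun k => hdom (ptZ η' η (u k))
  have hd : Tendsto (fun k => dH (ptZ η' η (u k)) (ptZ η' η η)) atTop (𝓝 0) := by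
    have := ((dH_continuous (ptZ η' η η)).tendsto (ptZ η' η η)).comp hZ
    rwa [dH_self] at this
  have hwb : ∀ᶠ k in atTop, w k ∈ Metric.closedBall (0 : V1 n) M := by
    filter_upwards [hd.eventually (ge_mem_nhds hr)] with k hk
    rw [mem_closedBall_zero_iff]
    exact hM _ hk _ (hw k)
  obtain ⟨w₀, -, φ, hφ, hw0⟩ :=
    (isCompact_closedBall (0 : V1 n) M).tendsto_subseq' hwb.frequently
  have hxu : Tendsto (fun k => xi1 (u (φ k))) atTop (𝓝 (xi1 η)) :=
    (xi1_continuous.tendsto η).comp (hu.comp hφ.tendsto_atTop)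
  have hxz : Tendsto (fun k => xi1 (ptZ η' η (u (φ k)))) atTop (𝓝 (xi1 (ptZ η' η η))) :=
    (xi1_continuous.tendsto _).comp (hZ.comp hφ.tendsto_atTop)
  have hvφ := hv0.comp hφ.tendsto_atTop
  have hev : ∀ᶠ k in atTop, xi1 (u (φ k)) ≠ xi1 η' := hxu.eventually_ne hne
  have h1 : 0 ≤ ⟪v₀ - w₀, xi1 η - xi1 (ptZ η' η η)⟫ := by
    refine ge_of_tendsto ((hvφ.sub hw0).inner (hxu.sub hxz)) ?_
    filter_upwards [hev] with k hk
    exact hT.1 _ _ (ptZ_mem η' η (u (φ k)) hk) _ (hv _) _ (hw _)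
  have h2 : 0 ≤ ⟪v' - w₀, xi1 η' - xi1 (ptZ η' η η)⟫ := by
    refine ge_of_tendsto ((tendsto_const_nhds.sub hw0).inner (tendsto_const_nhds.sub hxz)) ?_
    filter_upwards with k
    exact hT.1 η' _ rfl _ hv' _ (hw _)
  rw [xi1_mid η' η hη'] at h1 h2
  have e1 : xi1 η - (2⁻¹ : ℝ) • (xi1 η + xi1 η') = (2⁻¹ : ℝ) • (xi1 η - xi1 η') := by
    module
  have e2 : xi1 η' - (2⁻¹ : ℝ) • (xi1 η + xi1 η') = (-2⁻¹ : ℝ) • (xi1 η - xi1 η') := by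
    module
  rw [e1, real_inner_smul_right, inner_sub_left] at h1
  rw [e2, real_inner_smul_right, inner_sub_left] at h2
  rw [inner_sub_left]
  linarith

lemma values_bounded {n : ℕ} (T : Heis n → Set (V1 n)) (hT : IsHMonotone T)
    (hdom : ∀ η, (T η).Nonempty) (η : Heis n) : ∃ M : ℝ, ∀ v ∈ T η, ‖v‖ ≤ M := by
  have hdir : ∀ p : V1 n, ∃ C : ℝ, ∀ v ∈ T η, ⟪p, v⟫ ≤ C := by
    intro p
    let ζ : Heis n := (η.1 + p.fst, η.2.1 + p.snd,
      η.2.2 + 2 * (⟪η.2.1, η.1 + p.fst⟫ - ⟪η.1, η.2.1 + p.snd⟫))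
    obtain ⟨w, hw⟩ := hdom ζ
    refine ⟨⟪p, w⟫, fun v hv => ?_⟩
    have h := hT η ζ rfl v hv w hw
    have e : xi1 η - xi1 ζ = -p := by
      have : xi1 ζ = xi1 η + p := rfl
      rw [this]
      abel
    rw [e, inner_neg_right, inner_sub_left, real_inner_comm, real_inner_comm p w] at h
    linarith
  choose C hC using hdir
  let b := stdOrthonormalBasis ℝ (V1 n)
  refine ⟨∑ i, max (C (b i)) (C (-b i)), fun v hv => ?_⟩
  rw [← b.sum_repr' v]
  refine (norm_sum_le _ _).trans (Finset.sum_le_sum fun i _ => ?_)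
  rw [norm_smul, b.norm_eq_one, mul_one, Real.norm_eq_abs, abs_le']
  refine ⟨(hC _ v hv).trans (le_max_left _ _), ?_⟩
  rw [← inner_neg_left]
  exact (hC _ v hv).trans (le_max_right _ _)

/-- Theorem 2.7: for a maximal H-monotone map with full domain, local boundedness is
equivalent to upper semicontinuity. -/
theorem locallyBounded_iff_usc {n : ℕ} (hn : 1 ≤ n)
    (T : Heis n → Set (V1 n)) (hT : IsMaximalHMonotone T)
    (hdom : ∀ η, (T η).Nonempty) :
    IsLocallyBounded T ↔ IsUSC T := by
  constructor
  · intro hb η ε hε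
    by_contra! hcon
    have hpos : ∀ k : ℕ, (0 : ℝ) < 1 / ((k : ℝ) + 1) := fun k => Nat.one_div_pos_of_nat
    choose u hu hu' using fun k : ℕ => hcon _ (hpos k)
    have hd : Tendsto (fun k => dH (u k) η) atTop (𝓝 0) := by
      refine squeeze_zero (fun k => ?_) (fun k => (hu k).le)
        tendsto_one_div_add_atTop_nhds_zero_nat
      unfold dH gaugeN
      positivity
    have hlim := tendsto_of_dH u η hd
    choose v hv hv' using fun k => Set.not_subset.mp (hu' k)
    obtain ⟨r, hr, M, hM⟩ := hb η
    have hvb : ∀ᶠ k in atTop, v k ∈ Metric.closedBall (0 : V1 n) M := by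
      filter_upwards [hd.eventually (ge_mem_nhds hr)] with k hk
      rw [mem_closedBall_zero_iff]
      exact hM _ hk _ (hv k)
    obtain ⟨v₀, -, φ, hφ, hv0⟩ :=
      (isCompact_closedBall (0 : V1 n) M).tendsto_subseq' hvb.frequently
    have hmem := closed_graph T hT hdom hb (u ∘ φ) η (hlim.comp hφ.tendsto_atTop) (v ∘ φ) v₀
      (fun k => hv _) hv0
    obtain ⟨k, hk⟩ := (hv0.eventually (Metric.ball_mem_nhds v₀ hε)).exists
    apply hv' (φ k)
    refine Set.mem_add.mpr ⟨v₀, hmem, v (φ k) - v₀, ?_, by abel⟩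
    rw [mem_ball_zero_iff, ← dist_eq_norm]
    exact hk
  · intro h η
    obtain ⟨M, hM⟩ := values_bounded T hT.1 hdom η
    obtain ⟨δ, hδ, hsub⟩ := h η 1 one_pos
    refine ⟨δ / 2, half_pos hδ, M + 1, fun η' hη' v hv => ?_⟩
    obtain ⟨a, ha, c, hc, rfl⟩ := Set.mem_add.mp (hsub η' (by linarith) hv)
    rw [mem_ball_zero_iff] at hc
    exact (norm_add_le _ _).trans (add_le_add (hM a ha) hc.le)
end
end

section
/- Let T : ℍⁿ ⇉ V₁ be a maximal H-monotone set-valued map with dom(T) = ℍⁿ. Then the restriction of T to any vertical segment is bounded: for every fixed x, y ∈ ℝⁿ and every compact interval I ⊆ ℝ, letting L = {(x,y,t) ∈ ℍⁿ : t ∈ I}, there exists K = K(I) such that the diameter in ℝ²ⁿ of the set T(L) = ∪_{η∈L} T(η) is at most K. -/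
open scoped RealInnerProductSpace Pointwise

noncomputable section

/-- One-sided bound in the direction `e + β J e`, with `β = t / (4 R²)`, `‖e‖ = R`. -/
lemma dir_bound_s8 {V : Type*} [NormedAddCommGroup V] [InnerProductSpace ℝ V]
    (J : V →ₗ[ℝ] V) (hskew : ∀ v w, ⟪J v, w⟫ = -⟪v, J w⟫) (hiso : ∀ v w, ⟪J v, J w⟫ = ⟪v, w⟫)
    (S : V → ℝ → Set V) (hne : ∀ z t, (S z t).Nonempty)
    (hmono : ∀ z t z' t', t' = t + 2 * ⟪J z, z'⟫ → ∀ v ∈ S z t, ∀ v' ∈ S z' t',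
      0 ≤ ⟪v - v', z - z'⟫)
    (R : ℝ) (hR : 0 < R) (e : V) (he : ‖e‖ = R) :
    ∃ C : ℝ, ∀ t : ℝ, |t| ≤ 2 * R ^ 2 → ∀ v ∈ S 0 t,
      ⟪v, e + (t / (4 * R ^ 2)) • J e⟫ ≤ C := by
  obtain ⟨q1, hq1⟩ := hne ((2 : ℝ) • e + J e) (2 * R ^ 2)
  obtain ⟨q2, hq2⟩ := hne ((2 : ℝ) • e - J e) (-(2 * R ^ 2))
  have hee : ⟪e, e⟫ = R ^ 2 := by rw [real_inner_self_eq_norm_sq, he]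
  have hJe : ⟪J e, J e⟫ = R ^ 2 := by rw [hiso, hee]
  have h0 : ⟪J e, e⟫ = 0 := by
    have := hskew e e
    rw [real_inner_comm (J e) e] at this
    linarith
  have hJJe : ⟪J (J e), e⟫ = -R ^ 2 := by rw [hskew, hJe]
  have hJJJ : ⟪J (J e), J e⟫ = 0 := by rw [hiso, h0]
  refine ⟨|⟪q1, e⟫| + 2 * |⟪q1, J e⟫| + (|⟪q2, e⟫| + 2 * |⟪q2, J e⟫|), ?_⟩
  intro t ht v hv
  set β := t / (4 * R ^ 2) with hβ
  have htβ : t = 4 * R ^ 2 * β := by rw [hβ]; field_simp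
  have hβ1 : |β| ≤ 1 / 2 := by
    rw [hβ, abs_div, abs_of_pos (by positivity : (0:ℝ) < 4 * R ^ 2), div_le_iff₀ (by positivity)]
    linarith
  obtain ⟨hb1, hb2⟩ := abs_le.1 hβ1
  obtain ⟨w, hw⟩ := hne (e + β • J e) t
  have m0 := hmono 0 t (e + β • J e) t (by simp) v hv w hw
  have m1 := hmono (e + β • J e) t _ _ (by
    simp only [map_add, map_smul, inner_add_left, inner_add_right, inner_smul_left,
      inner_smul_right, h0, hJe, hJJe, hJJJ, htβ]
    simp
    ring) w hw q1 hq1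
  have m2 := hmono (e + β • J e) t _ _ (by
    simp only [map_add, map_smul, inner_add_left, inner_sub_right, inner_smul_left,
      inner_smul_right, h0, hJe, hJJe, hJJJ, htβ]
    simp
    ring) w hw q2 hq2
  simp only [inner_add_right, inner_sub_right, inner_sub_left, inner_smul_right,
    inner_zero_right] at m0 m1 m2 ⊢
  have k1 : ⟪w, e⟫ + (1 - β) * ⟪w, J e⟫ ≤ |⟪q1, e⟫| + 2 * |⟪q1, J e⟫| := by
    have a1 := le_abs_self ⟪q1, e⟫
    have a2 : (1 - β) * ⟪q1, J e⟫ ≤ 2 * |⟪q1, J e⟫| :=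
      (mul_le_mul_of_nonneg_left (le_abs_self _) (by linarith)).trans
        (mul_le_mul_of_nonneg_right (by linarith) (abs_nonneg _))
    linarith
  have k2 : ⟪w, e⟫ + (-1 - β) * ⟪w, J e⟫ ≤ |⟪q2, e⟫| + 2 * |⟪q2, J e⟫| := by
    have a1 := le_abs_self ⟪q2, e⟫
    have a2 : (1 + β) * (-⟪q2, J e⟫) ≤ 2 * |⟪q2, J e⟫| :=
      (mul_le_mul_of_nonneg_left (neg_le_abs _) (by linarith)).trans
        (mul_le_mul_of_nonneg_right (by linarith) (abs_nonneg _))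
    linarith
  have n1 : 0 ≤ |⟪q1, e⟫| + 2 * |⟪q1, J e⟫| := by positivity
  have n2 : 0 ≤ |⟪q2, e⟫| + 2 * |⟪q2, J e⟫| := by positivity
  have l1 := mul_le_mul_of_nonneg_left k1 (by linarith : 0 ≤ (1 + 2 * β) / 2)
  have l2 := mul_le_mul_of_nonneg_left k2 (by linarith : 0 ≤ (1 - 2 * β) / 2)
  have l3 := mul_le_mul_of_nonneg_right (by linarith : (1 + 2 * β) / 2 ≤ 1) n1
  have l4 := mul_le_mul_of_nonneg_right (by linarith : (1 - 2 * β) / 2 ≤ 1) n2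
  linarith

/-- Uniform bound on the vertical segment through the origin. -/
lemma abstract_bound {V : Type*} [NormedAddCommGroup V] [InnerProductSpace ℝ V] [CompleteSpace V]
    (J : V →ₗ[ℝ] V) (hskew : ∀ v w, ⟪J v, w⟫ = -⟪v, J w⟫) (hiso : ∀ v w, ⟪J v, J w⟫ = ⟪v, w⟫)
    (S : V → ℝ → Set V) (hne : ∀ z t, (S z t).Nonempty)
    (hmono : ∀ z t z' t', t' = t + 2 * ⟪J z, z'⟫ → ∀ v ∈ S z t, ∀ v' ∈ S z' t',
      0 ≤ ⟪v - v', z - z'⟫) (M : ℝ) :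
    ∃ C : ℝ, ∀ t : ℝ, |t| ≤ M → ∀ v ∈ S 0 t, ‖v‖ ≤ C := by
  obtain ⟨R, hR, hM⟩ : ∃ R : ℝ, 0 < R ∧ M ≤ 2 * R ^ 2 :=
    ⟨|M| + 1, by positivity, by nlinarith [le_abs_self M, abs_nonneg M]⟩
  have key : ∀ e : V, ∃ C : ℝ, ∀ t : ℝ, |t| ≤ M → ∀ v ∈ S 0 t,
      ⟪v - (t / (4 * R ^ 2)) • J v, e⟫ ≤ C := by
    intro e
    by_cases h : e = 0
    · exact ⟨0, fun t _ v _ => by simp [h]⟩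
    have hpos : 0 < ‖e‖ := norm_pos_iff.2 h
    obtain ⟨C, hC⟩ := dir_bound_s8 J hskew hiso S hne hmono R hR ((R / ‖e‖) • e) (by
      rw [norm_smul, Real.norm_of_nonneg (by positivity)]; field_simp)
    refine ⟨‖e‖ / R * C, fun t ht v hv => ?_⟩
    have := mul_le_mul_of_nonneg_left (hC t (ht.trans hM) v hv) (by positivity : 0 ≤ ‖e‖ / R)
    refine le_trans (le_of_eq ?_) this
    rw [inner_sub_left, inner_smul_left, hskew, map_smul, inner_add_right, inner_smul_right,
      inner_smul_right, inner_smul_right]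
    simp only [conj_trivial]
    field_simp
    ring
  let ι := {p : ℝ × V // |p.1| ≤ M ∧ p.2 ∈ S 0 p.1}
  let g : ι → V →L[ℝ] ℝ := fun p => innerSL ℝ (p.1.2 - (p.1.1 / (4 * R ^ 2)) • J p.1.2)
  obtain ⟨C, hC⟩ := banach_steinhaus (g := g) (by
    intro e
    obtain ⟨C1, h1⟩ := key e
    obtain ⟨C2, h2⟩ := key (-e)
    refine ⟨max C1 C2, fun p => ?_⟩
    have a1 := h1 _ p.2.1 _ p.2.2
    have a2 := h2 _ p.2.1 _ p.2.2
    rw [inner_neg_right] at a2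
    change |⟪p.1.2 - (p.1.1 / (4 * R ^ 2)) • J p.1.2, e⟫| ≤ _
    rw [abs_le]
    constructor
    · linarith [le_max_right C1 C2]
    · exact a1.trans (le_max_left _ _))
  refine ⟨C, fun t ht v hv => ?_⟩
  by_cases h : v = 0
  · subst h
    rw [norm_zero]
    exact (norm_nonneg _).trans (hC ⟨(t, 0), ht, hv⟩)
  have hpos : 0 < ‖v‖ := norm_pos_iff.2 h
  have h3 := (g ⟨(t, v), ht, hv⟩).le_of_opNorm_le (hC _) v
  have h0 : ⟪J v, v⟫ = 0 := by
    have := hskew v v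
    rw [real_inner_comm (J v) v] at this
    linarith
  have h4 : g ⟨(t, v), ht, hv⟩ v = ‖v‖ ^ 2 := by
    change ⟪v - (t / (4 * R ^ 2)) • J v, v⟫ = _
    rw [inner_sub_left, inner_smul_left, h0, real_inner_self_eq_norm_sq]
    simp
  rw [h4, Real.norm_of_nonneg (by positivity), pow_two] at h3
  exact le_of_mul_le_mul_right h3 hpos

/-- The symplectic rotation `(x, y) ↦ (y, -x)`. -/
def Jmap (n : ℕ) : V1 n →ₗ[ℝ] V1 n where
  toFun z := WithLp.toLp 2 (z.snd, -z.fst)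
  map_add' z w := by
    apply WithLp.ofLp_injective
    ext i <;> simp [add_comm]
  map_smul' c z := by
    apply WithLp.ofLp_injective
    ext i <;> simp

lemma Jmap_inner {n : ℕ} (z w : V1 n) :
    ⟪Jmap n z, w⟫ = ⟪z.snd, w.fst⟫ - ⟪z.fst, w.snd⟫ := by
  simp [Jmap, WithLp.prod_inner_apply, sub_eq_add_neg]

/-- Proposition 3.1: a maximal H-monotone map with full domain is bounded on every
vertical segment L = {(x,y,t) : t ∈ [a,b]}: the image T(L) has bounded diameter in ℝ²ⁿ. -/
theorem bounded_on_vertical_segments {n : ℕ} (hn : 1 ≤ n)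
    (T : Heis n → Set (V1 n)) (hT : IsMaximalHMonotone T)
    (hdom : ∀ η, (T η).Nonempty) :
    ∀ (x y : E n) (a b : ℝ), ∃ K : ℝ,
      ∀ t ∈ Set.Icc a b, ∀ t' ∈ Set.Icc a b,
        ∀ v ∈ T (x, y, t), ∀ v' ∈ T (x, y, t'), ‖v - v'‖ ≤ K := by
  intro x y a b
  have hskew : ∀ v w : V1 n, ⟪Jmap n v, w⟫ = -⟪v, Jmap n w⟫ := by
    intro v w
    rw [real_inner_comm (Jmap n w) v, Jmap_inner, Jmap_inner, real_inner_comm v.snd w.fst,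
      real_inner_comm v.fst w.snd]
    ring
  have hiso : ∀ v w : V1 n, ⟪Jmap n v, Jmap n w⟫ = ⟪v, w⟫ := by
    intro v w
    rw [Jmap_inner]
    simp [Jmap, WithLp.prod_inner_apply, add_comm]
  let z0 : V1 n := WithLp.toLp 2 (x, y)
  let S : V1 n → ℝ → Set (V1 n) := fun z t =>
    T ((z0 + z).fst, (z0 + z).snd, t + 2 * ⟪Jmap n z0, z⟫)
  obtain ⟨C, hC⟩ := abstract_bound (Jmap n) hskew hiso S (fun z t => hdom _) (by
    intro z t z' t' h v hv v' hv'
    have h1 := hT.1 _ _ (by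
      have e1 := Jmap_inner (z0 + z) (z0 + z')
      have e2 : ⟪Jmap n z0, z0⟫ = 0 := by
        have := hskew z0 z0
        rw [real_inner_comm (Jmap n z0) z0] at this
        linarith
      have e3 : ⟪Jmap n z, z0⟫ = -⟪Jmap n z0, z⟫ := by
        rw [hskew, real_inner_comm]
      rw [map_add, inner_add_left, inner_add_right, inner_add_right, e2, e3] at e1
      change t' + 2 * ⟪Jmap n z0, z'⟫ = t + 2 * ⟪Jmap n z0, z⟫ +
        2 * (⟪(z0 + z).snd, (z0 + z').fst⟫ - ⟪(z0 + z).fst, (z0 + z').snd⟫)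
      rw [← e1, h]
      ring) v hv v' hv'
    have h2 : xi1 ((z0 + z).fst, (z0 + z).snd, t + 2 * ⟪Jmap n z0, z⟫) -
        xi1 ((z0 + z').fst, (z0 + z').snd, t' + 2 * ⟪Jmap n z0, z'⟫) = z - z' := by
      change (z0 + z) - (z0 + z') = z - z'
      abel
    rwa [h2] at h1) (max |a| |b|)
  have hS : ∀ t, S 0 t = T (x, y, t) := by
    intro t
    simp [S, z0]
  refine ⟨C + C, fun t ht t' ht' v hv v' hv' => ?_⟩
  rw [← hS] at hv hv'
  exact (norm_sub_le _ _).trans (add_le_add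
    (hC t (abs_le_max_abs_abs ht.1 ht.2) v hv) (hC t' (abs_le_max_abs_abs ht'.1 ht'.2) v' hv'))
end
end

section
/- Let T : ℍⁿ ⇉ V₁ be a maximal H-monotone set-valued map with dom(T) = ℍⁿ. Then T is both locally bounded and upper semicontinuous. -/
open scoped RealInnerProductSpace Pointwise

noncomputable section

section AbstractPart
open Filter Topology

variable {V : Type*} [NormedAddCommGroup V] [InnerProductSpace ℝ V]

/-- one-sided estimate in a prescribed direction -/
lemma abs_dir (J : V →L[ℝ] V) (hJ : ∀ x y, ⟪J x, y⟫ = -⟪J y, x⟫) (hinj : ∀ x, J x = 0 → x = 0)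
    (S : V × ℝ → Set V) (hdom : ∀ η, (S η).Nonempty)
    (hmono : ∀ η p : V × ℝ, p.2 = η.2 + 2 * ⟪J η.1, p.1⟫ → ∀ v ∈ S η, ∀ u ∈ S p,
      ⟪v, p.1 - η.1⟫ ≤ ⟪u, p.1 - η.1⟫)
    (η₀ : V × ℝ) (a₀ : V) (ha₀ : a₀ ≠ 0) :
    ∃ (a : V × ℝ → V) (C : V × ℝ → ℝ), ContinuousAt a η₀ ∧ ContinuousAt C η₀ ∧ a η₀ = a₀ ∧
      ∀ᶠ η in 𝓝 η₀, ∀ v ∈ S η, ⟪v, a η⟫ ≤ C η := by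
  have hself : ∀ x, ⟪J x, x⟫ = 0 := fun x => by have := hJ x x; linarith
  have hJa : 0 < ⟪J a₀, J a₀⟫ := real_inner_self_pos.2 (fun h => ha₀ (hinj _ h))
  obtain ⟨z₀, t₀⟩ := η₀
  set Z1 : V := z₀ + ((2:ℝ) • a₀ + J a₀) with hZ1
  set Z2 : V := z₀ + ((2:ℝ) • a₀ - J a₀) with hZ2
  set W : V × ℝ → ℝ := fun η => ⟪J (Z1 - η.1), Z2 - η.1⟫ with hW
  have hW0 : W (z₀, t₀) = -4 * ⟪J a₀, J a₀⟫ := by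
    have h1 := hJ (J a₀) a₀
    have h2 := hself a₀
    have h3 := hself (J a₀)
    have h4 := real_inner_comm a₀ (J a₀)
    have q1 : Z1 - z₀ = (2:ℝ) • a₀ + J a₀ := by simp [hZ1]
    have q2 : Z2 - z₀ = (2:ℝ) • a₀ - J a₀ := by simp [hZ2]
    simp only [hW, q1, q2]
    simp only [map_add, map_smul, inner_add_left,
      inner_sub_right, real_inner_smul_left, real_inner_smul_right]
    linarith
  set s1 : ℝ := t₀ + 2 * ⟪J z₀, Z1⟫ - W (z₀, t₀) / 2 with hs1
  set s2 : ℝ := t₀ + 2 * ⟪J z₀, Z2⟫ + W (z₀, t₀) / 2 with hs2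
  set x1 : V × ℝ → ℝ := fun η => (s2 - η.2 - 2 * ⟪J η.1, Z2⟫) / (2 * W η) with hx1
  set x2 : V × ℝ → ℝ := fun η => -(s1 - η.2 - 2 * ⟪J η.1, Z1⟫) / (2 * W η) with hx2
  have hWne : W (z₀, t₀) ≠ 0 := by rw [hW0]; nlinarith
  have hWc : Continuous W := by fun_prop
  have hx10 : x1 (z₀, t₀) = 1 / 4 := by
    simp only [hx1, hs2]; field_simp; ring
  have hx20 : x2 (z₀, t₀) = 1 / 4 := by
    simp only [hx2, hs1]; field_simp; ring
  have hx1c : ContinuousAt x1 (z₀, t₀) := by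
    apply ContinuousAt.div
    · fun_prop
    · fun_prop
    · simpa using hWne
  have hx2c : ContinuousAt x2 (z₀, t₀) := by
    apply ContinuousAt.div
    · fun_prop
    · fun_prop
    · simpa using hWne
  set a : V × ℝ → V := fun η => x1 η • (Z1 - η.1) + x2 η • (Z2 - η.1) with ha
  have hac : ContinuousAt a (z₀, t₀) := by fun_prop
  obtain ⟨v1, hv1⟩ := hdom (Z1, s1)
  obtain ⟨v2, hv2⟩ := hdom (Z2, s2)
  refine ⟨a, fun η => (x1 η * ⟪v1, Z1 - (η.1 + a η)⟫ + x2 η * ⟪v2, Z2 - (η.1 + a η)⟫)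
    / (1 - x1 η - x2 η), hac, ?_, ?_, ?_⟩
  · apply ContinuousAt.div
    · fun_prop
    · fun_prop
    · rw [hx10, hx20]; norm_num
  · simp only [ha, hx10, hx20, hZ1, hZ2]
    module
  · have e1 : ∀ᶠ η in 𝓝 (z₀, t₀), 0 < x1 η := hx1c.eventually_const_lt (by rw [hx10]; norm_num)
    have e2 : ∀ᶠ η in 𝓝 (z₀, t₀), 0 < x2 η := hx2c.eventually_const_lt (by rw [hx20]; norm_num)
    have e3 : ∀ᶠ η in 𝓝 (z₀, t₀), x1 η < 1/2 := hx1c.eventually_lt_const (by rw [hx10]; norm_num)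
    have e4 : ∀ᶠ η in 𝓝 (z₀, t₀), x2 η < 1/2 := hx2c.eventually_lt_const (by rw [hx20]; norm_num)
    have e5 : ∀ᶠ η in 𝓝 (z₀, t₀), W η ≠ 0 := hWc.continuousAt.eventually_ne hWne
    filter_upwards [e1, e2, e3, e4, e5] with η h1 h2 h3 h4 h5 v hv
    obtain ⟨u, hu⟩ := hdom (η.1 + a η, η.2 + 2 * ⟪J η.1, a η⟫)
    have m0 := hmono η (η.1 + a η, η.2 + 2 * ⟪J η.1, a η⟫)
      (by simp only [inner_add_right, hself]; ring) v hv u hu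
    have k1 : ⟪J (a η), Z1 - η.1⟫ = - x2 η * W η := by
      have := hJ (Z2 - η.1) (Z1 - η.1)
      simp only [ha, map_add, map_smul, inner_add_left, real_inner_smul_left, hself, hW]
      rw [this]; ring
    have k2 : ⟪J (a η), Z2 - η.1⟫ = x1 η * W η := by
      simp only [ha, map_add, map_smul, inner_add_left, real_inner_smul_left, hself, hW]
      ring
    have l1 : x1 η * W η = (s2 - η.2 - 2 * ⟪J η.1, Z2⟫) / 2 := by
      simp only [hx1]; field_simp
    have l2 : - x2 η * W η = (s1 - η.2 - 2 * ⟪J η.1, Z1⟫) / 2 := by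
      simp only [hx2]; field_simp
    have hs := hJ (a η) η.1
    rw [inner_sub_right] at k1 k2
    have m1 := hmono (η.1 + a η, η.2 + 2 * ⟪J η.1, a η⟫) (Z1, s1)
      (by simp only [map_add, inner_add_left]; linarith) u hu v1 hv1
    have m2 := hmono (η.1 + a η, η.2 + 2 * ⟪J η.1, a η⟫) (Z2, s2)
      (by simp only [map_add, inner_add_left]; linarith) u hu v2 hv2
    simp only [add_sub_cancel_left] at m0 m1 m2
    have hpos : 0 < 1 - x1 η - x2 η := by linarith
    rw [le_div_iff₀ hpos]
    have key : (1 - x1 η - x2 η) • a η =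
        x1 η • (Z1 - (η.1 + a η)) + x2 η • (Z2 - (η.1 + a η)) := by
      have : a η = x1 η • (Z1 - η.1) + x2 η • (Z2 - η.1) := rfl
      generalize a η = b at *
      rw [sub_smul, sub_smul, one_smul]
      nth_rw 1 [this]
      module
    have key2 := congrArg (fun w => ⟪u, w⟫) key
    simp only [inner_add_right, real_inner_smul_right] at key2
    have := mul_le_mul_of_nonneg_left m0 hpos.le
    have := mul_le_mul_of_nonneg_left m1 h1.le
    have := mul_le_mul_of_nonneg_left m2 h2.le
    simp only [inner_sub_right, inner_add_right] at *
    linarith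

lemma abs_bdd [FiniteDimensional ℝ V]
    (J : V →L[ℝ] V) (hJ : ∀ x y, ⟪J x, y⟫ = -⟪J y, x⟫) (hinj : ∀ x, J x = 0 → x = 0)
    (S : V × ℝ → Set V) (hdom : ∀ η, (S η).Nonempty)
    (hmono : ∀ η p : V × ℝ, p.2 = η.2 + 2 * ⟪J η.1, p.1⟫ → ∀ v ∈ S η, ∀ u ∈ S p,
      ⟪v, p.1 - η.1⟫ ≤ ⟪u, p.1 - η.1⟫)
    (η₀ : V × ℝ) : ∃ M : ℝ, ∀ᶠ η in 𝓝 η₀, ∀ v ∈ S η, ‖v‖ ≤ M := by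
  have main : ∃ M : ℝ, ∀ᶠ η in 𝓝 η₀, ∀ v ∈ S η, ∀ w ∈ Metric.sphere (0:V) 1,
      v = ‖v‖ • w → ‖v‖ ≤ M := by
    refine (isCompact_sphere (0:V) 1).induction_on
      (p := fun K => ∃ M : ℝ, ∀ᶠ η in 𝓝 η₀, ∀ v ∈ S η, ∀ w ∈ K, v = ‖v‖ • w → ‖v‖ ≤ M)
      ?_ ?_ ?_ ?_
    · exact ⟨0, by simp⟩
    · rintro s t hst ⟨M, hM⟩
      exact ⟨M, hM.mono fun η h v hv w hw => h v hv w (hst hw)⟩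
    · rintro s t ⟨M, hM⟩ ⟨M', hM'⟩
      refine ⟨max M M', ?_⟩
      filter_upwards [hM, hM'] with η h h' v hv w hw hvw
      rcases hw with hw | hw
      · exact (h v hv w hw hvw).trans (le_max_left _ _)
      · exact (h' v hv w hw hvw).trans (le_max_right _ _)
    · intro a₀ ha₀
      have hn : ‖a₀‖ = 1 := by simpa using ha₀
      obtain ⟨a, C, hac, hCc, ha, hb⟩ := abs_dir J hJ hinj S hdom hmono η₀ a₀
        (by intro h; simp [h] at hn)
      have hca : ContinuousAt (fun q : (V × ℝ) × V => ⟪q.2, a q.1⟫) (η₀, a₀) :=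
        ContinuousAt.inner continuousAt_snd
          (ContinuousAt.comp (f := Prod.fst) (g := a) (x := (η₀, a₀)) hac continuousAt_fst)
      have h1 : ∀ᶠ q in 𝓝 (η₀, a₀), 1/2 < ⟪q.2, a q.1⟫ :=
        hca.eventually_const_lt (by simp [ha, real_inner_self_eq_norm_sq, hn]; norm_num)
      rw [nhds_prod_eq] at h1
      obtain ⟨pa, hpa, pb, hpb, h1⟩ := eventually_prod_iff.1 h1
      have h2 : ∀ᶠ η in 𝓝 η₀, C η < C η₀ + 1 := hCc.eventually_lt_const (by linarith)
      refine ⟨{w | pb w}, mem_nhdsWithin_of_mem_nhds hpb, 2 * (C η₀ + 1), ?_⟩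
      filter_upwards [hpa, h2, hb] with η h3 h4 h5 v hv w hw hvw
      have h6 := h5 v hv
      have h7 := h1 h3 hw
      rw [hvw, real_inner_smul_left] at h6
      have := mul_le_mul_of_nonneg_left h7.le (norm_nonneg v)
      linarith
  obtain ⟨M, hM⟩ := main
  refine ⟨max M 0, ?_⟩
  filter_upwards [hM] with η h v hv
  by_cases hv0 : v = 0
  · simp [hv0]
  · have hn : ‖v‖ ≠ 0 := by simpa using hv0
    refine (h v hv (‖v‖⁻¹ • v) ?_ ?_).trans (le_max_left _ _)
    · simp [norm_smul, hn]
    · rw [smul_smul, mul_inv_cancel₀ hn, one_smul]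

lemma abs_closed [FiniteDimensional ℝ V]
    (J : V →L[ℝ] V) (hJ : ∀ x y, ⟪J x, y⟫ = -⟪J y, x⟫) (hinj : ∀ x, J x = 0 → x = 0)
    (S : V × ℝ → Set V) (hdom : ∀ η, (S η).Nonempty)
    (hmono : ∀ η p : V × ℝ, p.2 = η.2 + 2 * ⟪J η.1, p.1⟫ → ∀ v ∈ S η, ∀ u ∈ S p,
      ⟪v, p.1 - η.1⟫ ≤ ⟪u, p.1 - η.1⟫)
    (hmax : ∀ (η : V × ℝ) (v : V), (∀ p : V × ℝ, p.2 = η.2 + 2 * ⟪J η.1, p.1⟫ → ∀ u ∈ S p,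
      ⟪v, p.1 - η.1⟫ ≤ ⟪u, p.1 - η.1⟫) → v ∈ S η)
    (η₀ : V × ℝ) (v₀ : V) (hv₀ : v₀ ∉ S η₀) :
    ∃ U ∈ 𝓝 v₀, ∀ᶠ η in 𝓝 η₀, ∀ v ∈ S η, v ∉ U := by
  have hself : ∀ x, ⟪J x, x⟫ = 0 := fun x => by have := hJ x x; linarith
  have hex : ∃ p : V × ℝ, p.2 = η₀.2 + 2 * ⟪J η₀.1, p.1⟫ ∧ ∃ u ∈ S p,
      ⟪u, p.1 - η₀.1⟫ < ⟪v₀, p.1 - η₀.1⟫ := by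
    by_contra! hcon
    exact hv₀ (hmax η₀ v₀ hcon)
  obtain ⟨⟨z', t'⟩, hp, v', hv', hlt⟩ := hex
  simp only at hp hlt
  have hw : z' - η₀.1 ≠ 0 := by
    intro h; simp [h] at hlt
  set D : V × ℝ → V := fun η => z' - η.1 with hD
  set Q : V × ℝ → ℝ := fun η => ⟪J (D η), J (D η)⟫ with hQ
  set c : V × ℝ → ℝ := fun η => -(t' - η.2 - 2 * ⟪J η.1, z'⟫) / (2 * Q η) with hc
  set a : V × ℝ → V := fun η => (1/2 : ℝ) • D η + c η • J (D η) with ha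
  have hDc : Continuous D := by fun_prop
  have hQc : Continuous Q := by fun_prop
  have hQne : Q η₀ ≠ 0 := (real_inner_self_pos.2 (fun h => hw (hinj _ h))).ne'
  have hcc : ContinuousAt c η₀ := by
    apply ContinuousAt.div
    · fun_prop
    · fun_prop
    · simpa using hQne
  have hac : ContinuousAt a η₀ := by fun_prop
  have hc0 : c η₀ = 0 := by
    simp only [hc]; rw [hp]; simp
  have ha0 : a η₀ = (1/2:ℝ) • (z' - η₀.1) := by
    simp [ha, hc0, hD]
  set q : V × ℝ → V × ℝ := fun η => (η.1 + a η, η.2 + 2 * ⟪J η.1, a η⟫) with hq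
  have hqc : ContinuousAt q η₀ := by fun_prop
  obtain ⟨M, hM⟩ := abs_bdd J hJ hinj S hdom hmono (q η₀)
  have hM' := hqc.eventually hM
  set G : V × ℝ → ℝ := fun η => ⟪v', D η - a η⟫ + 2 * |c η| * (M * ‖J (D η)‖) with hG
  have hGc : ContinuousAt G η₀ := by
    have : ContinuousAt (fun η => |c η|) η₀ := hcc.abs
    fun_prop
  have hca : ContinuousAt (fun r : (V × ℝ) × V => ⟪r.2, a r.1⟫ - G r.1) (η₀, v₀) :=
    ContinuousAt.sub (ContinuousAt.inner continuousAt_snd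
      (ContinuousAt.comp (f := Prod.fst) (g := a) (x := (η₀, v₀)) hac continuousAt_fst))
      (ContinuousAt.comp (f := Prod.fst) (g := G) (x := (η₀, v₀)) hGc continuousAt_fst)
  have h1 : ∀ᶠ r in 𝓝 (η₀, v₀), 0 < ⟪r.2, a r.1⟫ - G r.1 := by
    refine hca.eventually_const_lt ?_
    have e : D η₀ - a η₀ = (1/2:ℝ) • (z' - η₀.1) := by
      rw [ha0]; simp only [hD]; module
    simp only [hG, hc0, e]
    rw [ha0, real_inner_smul_right, real_inner_smul_right]
    simp only [abs_zero, mul_zero, zero_mul]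
    linarith
  rw [nhds_prod_eq] at h1
  obtain ⟨pa, hpa, pb, hpb, h1⟩ := eventually_prod_iff.1 h1
  refine ⟨{w | pb w}, hpb, ?_⟩
  have e5 : ∀ᶠ η in 𝓝 η₀, Q η ≠ 0 := hQc.continuousAt.eventually_ne hQne
  filter_upwards [hpa, hM', e5] with η h3 h4 h5 v hv hvU
  have h6 := h1 h3 hvU
  obtain ⟨u, hu⟩ := hdom (q η)
  have hub := h4 u hu
  have m0 := hmono η (q η)
      (by simp only [hq, inner_add_right, hself]; ring) v hv u hu
  have k : ⟪J (a η), D η⟫ = - (c η * Q η) := by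
    have := hJ (J (D η)) (D η)
    simp only [ha, map_add, map_smul, inner_add_left, real_inner_smul_left, hself, this, hQ]
    ring
  have l : c η * Q η = -(t' - η.2 - 2 * ⟪J η.1, z'⟫) / 2 := by
    simp only [hc]; field_simp
  have hs := hJ (a η) η.1
  have k' : ⟪J (a η), z'⟫ - ⟪J (a η), η.1⟫ = - (c η * Q η) := by
    rw [← k, ← inner_sub_right]
  have m1 := hmono (q η) (z', t')
    (by simp only [hq, map_add, inner_add_left]; linarith) u hu v' hv'
  have e1 : (q η).1 - η.1 = a η := by simp [hq]
  have e2 : z' - (q η).1 = D η - a η := by simp only [hq, hD]; abel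
  simp only [e1] at m0
  simp only [e2] at m1
  have e3 : a η = (D η - a η) + (2 * c η) • J (D η) := by
    simp only [ha]; module
  have e4 : ⟪u, a η⟫ = ⟪u, D η - a η⟫ + 2 * c η * ⟪u, J (D η)⟫ := by
    rw [← real_inner_smul_right, ← inner_add_right, ← e3]
  have e6 : 2 * c η * ⟪u, J (D η)⟫ ≤ 2 * |c η| * (M * ‖J (D η)‖) := by
    calc 2 * c η * ⟪u, J (D η)⟫ ≤ |2 * c η * ⟪u, J (D η)⟫| := le_abs_self _
      _ = 2 * |c η| * |⟪u, J (D η)⟫| := by simp [abs_mul]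
      _ ≤ 2 * |c η| * (M * ‖J (D η)‖) := by
        gcongr
        exact (abs_real_inner_le_norm _ _).trans (by gcongr)
  simp only [hG] at h6
  linarith

lemma abs_usc [FiniteDimensional ℝ V]
    (J : V →L[ℝ] V) (hJ : ∀ x y, ⟪J x, y⟫ = -⟪J y, x⟫) (hinj : ∀ x, J x = 0 → x = 0)
    (S : V × ℝ → Set V) (hdom : ∀ η, (S η).Nonempty)
    (hmono : ∀ η p : V × ℝ, p.2 = η.2 + 2 * ⟪J η.1, p.1⟫ → ∀ v ∈ S η, ∀ u ∈ S p,
      ⟪v, p.1 - η.1⟫ ≤ ⟪u, p.1 - η.1⟫)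
    (hmax : ∀ (η : V × ℝ) (v : V), (∀ p : V × ℝ, p.2 = η.2 + 2 * ⟪J η.1, p.1⟫ → ∀ u ∈ S p,
      ⟪v, p.1 - η.1⟫ ≤ ⟪u, p.1 - η.1⟫) → v ∈ S η)
    (η₀ : V × ℝ) (ε : ℝ) (hε : 0 < ε) :
    ∀ᶠ η in 𝓝 η₀, S η ⊆ S η₀ + Metric.ball (0 : V) ε := by
  obtain ⟨M, hM⟩ := abs_bdd J hJ hinj S hdom hmono η₀
  have hK : IsCompact (Metric.closedBall (0:V) M \ (S η₀ + Metric.ball (0 : V) ε)) :=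
    (isCompact_closedBall (0:V) M).diff (Metric.isOpen_ball.add_left)
  have main : ∀ᶠ η in 𝓝 η₀, ∀ v ∈ S η,
      v ∉ (Metric.closedBall (0:V) M \ (S η₀ + Metric.ball (0 : V) ε)) := by
    refine hK.induction_on (p := fun K => ∀ᶠ η in 𝓝 η₀, ∀ v ∈ S η, v ∉ K) ?_ ?_ ?_ ?_
    · simp
    · intro s t hst ht
      exact ht.mono fun η h v hv hs => h v hv (hst hs)
    · intro s t hs ht
      filter_upwards [hs, ht] with η h h' v hv hw
      exact hw.elim (h v hv) (h' v hv)
    · intro v₀ hv₀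
      obtain ⟨U, hU, h⟩ := abs_closed J hJ hinj S hdom hmono hmax η₀ v₀ (fun hin => hv₀.2
        ⟨v₀, hin, 0, Metric.mem_ball_self hε, add_zero _⟩)
      exact ⟨U, mem_nhdsWithin_of_mem_nhds hU, h⟩
  filter_upwards [main, hM] with η h1 h2 v hv
  by_contra hcon
  exact h1 v hv ⟨by simpa using h2 v hv, hcon⟩

end AbstractPart

section Concrete
open Filter Topology

lemma dH_nhds {n : ℕ} (η₀ : Heis n) (U : Set (Heis n)) (hU : U ∈ 𝓝 η₀) :
    ∃ r > (0:ℝ), ∀ η, dH η η₀ ≤ r → η ∈ U := by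
  have hc : ContinuousAt (fun ζ : Heis n => hmul η₀ ζ) 0 := by
    unfold hmul; fun_prop
  have h0 : hmul η₀ (0 : Heis n) = η₀ := by simp [hmul]
  have hpre : {ζ | hmul η₀ ζ ∈ U} ∈ 𝓝 (0 : Heis n) := hc.preimage_mem_nhds (by rwa [h0])
  obtain ⟨ε, hε, hball⟩ := Metric.mem_nhds_iff.1 hpre
  refine ⟨min (ε/2) 1, by positivity, fun η hη => ?_⟩
  set r := min (ε/2) 1 with hr
  have hr0 : 0 < r := by positivity
  have hr1 : r ≤ 1 := min_le_right _ _
  have hrε : r < ε := (min_le_left _ _).trans_lt (by linarith)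
  set ζ := hmul (hinv η₀) η with hζ
  have hη' : hmul η₀ ζ = η := by
    obtain ⟨x, y, t⟩ := η
    obtain ⟨x0, y0, t0⟩ := η₀
    simp only [hζ, hmul, hinv, Prod.mk.injEq]
    refine ⟨by abel, by abel, ?_⟩
    simp only [inner_add_left, inner_add_right, inner_neg_left, inner_neg_right]
    ring
  have hN : gaugeN ζ ≤ r := hη
  have hX : (0:ℝ) ≤ (‖ζ.1‖ ^ 2 + ‖ζ.2.1‖ ^ 2) ^ 2 + ζ.2.2 ^ 2 := by positivity
  have h4 : (‖ζ.1‖ ^ 2 + ‖ζ.2.1‖ ^ 2) ^ 2 + ζ.2.2 ^ 2 ≤ r ^ 4 := by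
    have h := pow_le_pow_left₀ (Real.rpow_nonneg hX _) hN 4
    rwa [← Real.rpow_natCast, ← Real.rpow_mul hX, show (1:ℝ)/4 * ((4:ℕ):ℝ) = 1 by norm_num,
      Real.rpow_one] at h
  have hA : ‖ζ.1‖ ^ 2 + ‖ζ.2.1‖ ^ 2 ≤ r ^ 2 :=
    (sq_le_sq₀ (by positivity) (by positivity)).1 (by nlinarith [sq_nonneg ζ.2.2])
  have h1 : ‖ζ.1‖ ≤ r := (sq_le_sq₀ (by positivity) (by positivity)).1
    (by nlinarith [sq_nonneg ‖ζ.2.1‖])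
  have h2 : ‖ζ.2.1‖ ≤ r := (sq_le_sq₀ (by positivity) (by positivity)).1
    (by nlinarith [sq_nonneg ‖ζ.1‖])
  have h3 : |ζ.2.2| ≤ r := by
    have : |ζ.2.2| ≤ r ^ 2 := abs_le_of_sq_le_sq
      (by nlinarith [sq_nonneg (‖ζ.1‖ ^ 2 + ‖ζ.2.1‖ ^ 2)]) (by positivity)
    nlinarith
  have hmem : ζ ∈ Metric.ball (0 : Heis n) ε := by
    rw [mem_ball_zero_iff]
    refine lt_of_le_of_lt ?_ hrε
    rw [Prod.norm_def, Prod.norm_def]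
    exact max_le h1 (max_le h2 h3)
  have := hball hmem
  simpa only [Set.mem_ofPred_eq, hη'] using this

/-- The rotation (x,y) ↦ (y,-x). -/
def rotJ (n : ℕ) : V1 n →L[ℝ] V1 n :=
  (WithLp.prodContinuousLinearEquiv 2 ℝ (E n) (E n)).symm.toContinuousLinearMap ∘L
    ((ContinuousLinearMap.snd ℝ (E n) (E n)).prod (-(ContinuousLinearMap.fst ℝ (E n) (E n)))) ∘L
    (WithLp.prodContinuousLinearEquiv 2 ℝ (E n) (E n)).toContinuousLinearMap

lemma rotJ_apply {n : ℕ} (z : V1 n) : rotJ n z = WithLp.toLp 2 (z.snd, -z.fst) := rfl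

lemma rotJ_inner {n : ℕ} (z w : V1 n) : ⟪rotJ n z, w⟫ = ⟪z.snd, w.fst⟫ - ⟪z.fst, w.snd⟫ := by
  rw [rotJ_apply, WithLp.prod_inner_apply]
  simp [sub_eq_add_neg]

end Concrete

/-- Corollary 3.2: a maximal H-monotone map with full domain is locally bounded and usc. -/
theorem maximal_HMonotone_locallyBounded_and_usc {n : ℕ} (hn : 1 ≤ n)
    (T : Heis n → Set (V1 n)) (hT : IsMaximalHMonotone T)
    (hdom : ∀ η, (T η).Nonempty) :
    IsLocallyBounded T ∧ IsUSC T := by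
  obtain ⟨hm, hM⟩ := hT
  set S : V1 n × ℝ → Set (V1 n) := fun p => T (p.1.fst, p.1.snd, p.2) with hS
  have hJ : ∀ x y, ⟪rotJ n x, y⟫ = -⟪rotJ n y, x⟫ := by
    intro x y
    rw [rotJ_inner, rotJ_inner, real_inner_comm x.snd, real_inner_comm x.fst]; ring
  have hinj : ∀ x, rotJ n x = 0 → x = 0 := by
    intro x hx
    rw [rotJ_apply] at hx
    have h1 : x.snd = 0 := congrArg WithLp.fst hx
    have h2 : -x.fst = 0 := congrArg WithLp.snd hx
    exact WithLp.ofLp_injective 2 (Prod.ext (neg_eq_zero.1 h2) h1)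
  have hd : ∀ η, (S η).Nonempty := fun η => hdom _
  have hxi : ∀ p : V1 n × ℝ, xi1 ((p.1.fst, p.1.snd, p.2) : Heis n) = p.1 := fun p => rfl
  have hmono : ∀ η p : V1 n × ℝ, p.2 = η.2 + 2 * ⟪rotJ n η.1, p.1⟫ → ∀ v ∈ S η, ∀ u ∈ S p,
      ⟪v, p.1 - η.1⟫ ≤ ⟪u, p.1 - η.1⟫ := by
    intro η p h v hv u hu
    have := hm (η.1.fst, η.1.snd, η.2) (p.1.fst, p.1.snd, p.2)
      (by rw [rotJ_inner] at h; exact h) v hv u hu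
    rw [hxi, hxi] at this
    simp only [inner_sub_left, inner_sub_right] at this ⊢
    linarith
  have hmax : ∀ (η : V1 n × ℝ) (v : V1 n), (∀ p : V1 n × ℝ,
      p.2 = η.2 + 2 * ⟪rotJ n η.1, p.1⟫ → ∀ u ∈ S p,
      ⟪v, p.1 - η.1⟫ ≤ ⟪u, p.1 - η.1⟫) → v ∈ S η := by
    intro η v h
    refine hM _ v ?_
    intro η' hη' v' hv'
    have := h (xi1 η', η'.2.2) (by rw [rotJ_inner]; exact hη') v' hv'
    rw [hxi]
    simp only [inner_sub_left, inner_sub_right] at this ⊢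
    linarith
  have hcont : Continuous (fun η : Heis n => ((xi1 η, η.2.2) : V1 n × ℝ)) := by
    refine Continuous.prodMk ?_ (by fun_prop)
    exact (WithLp.prod_continuous_toLp 2 _ _).comp (by fun_prop)
  constructor
  · intro η₀
    obtain ⟨M, h⟩ := abs_bdd (rotJ n) hJ hinj S hd hmono (xi1 η₀, η₀.2.2)
    obtain ⟨r, hr, h'⟩ := dH_nhds η₀ _ (hcont.continuousAt.eventually h)
    exact ⟨r, hr, M, fun η hη v hv => h' η hη v hv⟩
  · intro η₀ ε hε
    have h := abs_usc (rotJ n) hJ hinj S hd hmono hmax (xi1 η₀, η₀.2.2) ε hε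
    obtain ⟨r, hr, h'⟩ := dH_nhds η₀ _ (hcont.continuousAt.eventually h)
    exact ⟨r, hr, fun η hη => h' η hη.le⟩
end
end

section
/- Let T : ℍⁿ ⇉ V₁ be a maximal H-monotone set-valued map with dom(T) = ℍⁿ, and let λ > 0. Then the resolvent Q_λ is 1-Lipschitz continuous in the Hausdorff metric: for all v, v' ∈ ℝ²ⁿ and every η ∈ Q_λ(v) there exists η' ∈ Q_λ(v') such that d_H(η, η') ≤ ‖v − v'‖; in particular Q_λ(v') ⊆ Q_λ(v) + B_{ℍⁿ}(0, ‖v − v'‖). -/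
open scoped RealInnerProductSpace Pointwise

noncomputable section

/-- The resolventQ Q_λ = (ξ₁ + λT)⁻¹ : V₁ ⇉ ℍⁿ. -/
def resolventQ {n : ℕ} (T : Heis n → Set (V1 n)) (lam : ℝ) (v : V1 n) : Set (Heis n) :=
  {η | ∃ w ∈ T η, v = xi1 η + lam • w}


theorem bz_interp (d : ℕ) (t0 : ℝ) (ht0 : 0 < t0) :
    ∃ (c : ℕ → ℝ) (t : ℕ → ℝ), (∀ i ∈ Finset.range (d+1), 0 < t i ∧ t i ≤ t0) ∧
      ∀ p : Polynomial ℝ, p.natDegree ≤ d →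
        p.eval 1 = ∑ i ∈ Finset.range (d+1), c i * p.eval (t i) := by
  let t : ℕ → ℝ := fun i => t0 * ((i + 1 : ℝ) / (d + 1))
  have hinj : Set.InjOn t (Finset.range (d+1) : Set ℕ) := by
    intro i _ j _ h
    have h1 : (i + 1 : ℝ) / (d + 1) = (j + 1 : ℝ) / (d + 1) := mul_left_cancel₀ ht0.ne' h
    have hd : (d + 1 : ℝ) ≠ 0 := by positivity
    field_simp at h1
    have : (i : ℝ) = j := by linarith
    exact_mod_cast this
  refine ⟨fun i => (Lagrange.basis (Finset.range (d+1)) t i).eval 1, t, ?_, ?_⟩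
  · intro i hi
    have : (i : ℝ) + 1 ≤ d + 1 := by
      have := Finset.mem_range.1 hi
      exact_mod_cast this
    refine ⟨by positivity, ?_⟩
    have h2 : (i + 1 : ℝ) / (d + 1) ≤ 1 := by
      rw [div_le_one (by positivity)]; exact this
    exact mul_le_of_le_one_right ht0.le h2
  · intro p hp
    have hdeg : p.degree < (Finset.range (d+1)).card := by
      rw [Finset.card_range]
      exact lt_of_le_of_lt Polynomial.degree_le_natDegree (by exact_mod_cast Nat.lt_succ_of_le hp)
    conv_lhs => rw [Lagrange.eq_interpolate hinj hdeg]
    rw [Lagrange.interpolate_apply, Polynomial.eval_finsetSum]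
    refine Finset.sum_congr rfl fun i _ => ?_
    simp [mul_comm]

theorem bz_det_poly {V : Type*} [NormedAddCommGroup V] [InnerProductSpace ℝ V]
    [FiniteDimensional ℝ V] (A : V →L[ℝ] V) :
    ∃ p : Polynomial ℝ, p.natDegree ≤ Module.finrank ℝ V ∧
      ∀ t : ℝ, p.eval t = (ContinuousLinearMap.id ℝ V + t • A).det := by
  let b := Module.finBasis ℝ V
  let M := LinearMap.toMatrix b b (A : V →ₗ[ℝ] V)
  refine ⟨Matrix.det ((Polynomial.X : Polynomial ℝ) • M.map Polynomial.C
    + (1 : Matrix _ _ ℝ).map Polynomial.C), ?_, ?_⟩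
  · simpa using Polynomial.natDegree_det_X_add_C_le M 1
  · intro t
    rw [← Polynomial.coe_evalRingHom, RingHom.map_det]
    change _ = LinearMap.det ((ContinuousLinearMap.id ℝ V + t • A : V →L[ℝ] V) : V →ₗ[ℝ] V)
    rw [← LinearMap.det_toMatrix b]
    congr 1
    have h1 : ((ContinuousLinearMap.id ℝ V + t • A : V →L[ℝ] V) : V →ₗ[ℝ] V)
        = LinearMap.id + t • (A : V →ₗ[ℝ] V) := rfl
    have h2 : LinearMap.toMatrix b b (LinearMap.id + t • (A : V →ₗ[ℝ] V)) = 1 + t • M := by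
      rw [map_add, map_smul, LinearMap.toMatrix_id]
    rw [h1, h2]
    ext i j
    simp only [RingHom.mapMatrix_apply, Matrix.map_apply, Matrix.add_apply, Matrix.smul_apply,
      Polynomial.coe_evalRingHom, Polynomial.eval_add, smul_eq_mul, Polynomial.eval_mul,
      Polynomial.eval_X, Polynomial.eval_C]
    exact add_comm _ _

theorem bz_lip {V : Type*} [NormedAddCommGroup V] [InnerProductSpace ℝ V]
    (g : V → V) (R : ℝ) (K : NNReal) (hg : LipschitzOnWith K g (Metric.closedBall 0 R))
    (hS : ∀ x, ‖x‖ = R → g x = 0) :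
    LipschitzWith K (fun x => if ‖x‖ ≤ R then g x else 0) := by
  have key : ∀ x y : V, ‖x‖ ≤ R → R < ‖y‖ → ‖g x‖ ≤ K * ‖x - y‖ := by
    intro x y hx hy
    have hc : ContinuousOn (fun s : ℝ => ‖x + s • (y - x)‖) (Set.Icc 0 1) := by fun_prop
    have := intermediate_value_Icc (zero_le_one) hc
    have hR : R ∈ Set.Icc (‖x + (0:ℝ) • (y - x)‖) (‖x + (1:ℝ) • (y - x)‖) := by
      constructor
      · simpa using hx
      · simpa using hy.le
    obtain ⟨s, ⟨hs0, hs1⟩, hs⟩ := this hR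
    have h1 := hg.norm_sub_le (x := x) (y := x + s • (y - x)) (by simpa using hx)
      (by simpa using hs.le)
    rw [hS _ hs, sub_zero] at h1
    refine h1.trans ?_
    gcongr
    rw [sub_add_cancel_left, norm_neg, norm_smul, norm_sub_rev y x, Real.norm_of_nonneg hs0]
    exact mul_le_of_le_one_left (norm_nonneg _) hs1
  refine LipschitzWith.of_dist_le_mul fun x y => ?_
  rw [dist_eq_norm, dist_eq_norm]
  by_cases hx : ‖x‖ ≤ R <;> by_cases hy : ‖y‖ ≤ R
  · simp only [hx, hy, if_true]
    exact hg.norm_sub_le (by simpa using hx) (by simpa using hy)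
  · simp only [hx, hy, if_true, if_false, sub_zero]
    exact key x y hx (not_le.1 hy)
  · simp only [hx, hy, if_true, if_false, zero_sub, norm_neg]
    rw [norm_sub_rev]
    exact key y x hy (not_le.1 hx)
  · simp only [hx, hy, if_false, sub_zero, norm_zero]
    positivity

/-- no smooth retraction of the ball on the sphere -/
theorem bz_no_retract {V : Type*} [NormedAddCommGroup V] [InnerProductSpace ℝ V]
    [FiniteDimensional ℝ V] (r : V → V) (hr : ContDiff ℝ 1 r) (R : ℝ) (hR : 0 < R)
    (hS : ∀ x, ‖x‖ = R → r x = x) (hn : ∀ x, ‖x‖ ≤ R → ‖r x‖ = R) : False := by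
  let _ : MeasurableSpace V := borel V
  have _ : BorelSpace V := ⟨rfl⟩
  let μ : MeasureTheory.Measure V := MeasureTheory.volume
  let g : V → V := fun x => r x - x
  have hg : ContDiff ℝ 1 g := hr.sub contDiff_id
  let A : V → V →L[ℝ] V := fun x => fderiv ℝ g x
  have hA : Continuous A := hg.continuous_fderiv one_ne_zero
  have hgA : ∀ x, HasFDerivAt g (A x) x := fun x =>
    (hg.differentiable one_ne_zero x).hasFDerivAt
  have hcomp : IsCompact (Metric.closedBall (0:V) R) := isCompact_closedBall _ _
  obtain ⟨K, hK⟩ : ∃ K : NNReal, ∀ x ∈ Metric.closedBall (0:V) R, ‖A x‖₊ ≤ K := by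
    obtain ⟨C, hC⟩ := hcomp.exists_bound_of_continuousOn hA.continuousOn
    refine ⟨⟨max C 0, le_max_right _ _⟩, fun x hx => ?_⟩
    exact (hC x hx).trans (le_max_left _ _)
  have hlip : LipschitzOnWith K g (Metric.closedBall 0 R) :=
    (convex_closedBall 0 R).lipschitzOnWith_of_nnnorm_fderiv_le
      (fun x _ => hg.differentiable one_ne_zero x) hK
  have hg0 : ∀ x, ‖x‖ = R → g x = 0 := fun x hx => by simp [g, hS x hx]
  have hlip' := bz_lip g R K hlip hg0
  set gt : V → V := fun x => if ‖x‖ ≤ R then g x else 0 with hgt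
  -- small time
  have hdetc : Continuous (fun B : V →L[ℝ] V => B.det) := ContinuousLinearMap.continuous_det
  obtain ⟨δ, hδ, hdet⟩ : ∃ δ > 0, ∀ B : V →L[ℝ] V, ‖B‖ < δ →
      0 < (ContinuousLinearMap.id ℝ V + B).det := by
    have h1 : ∀ᶠ B : V →L[ℝ] V in nhds 0, 0 < (ContinuousLinearMap.id ℝ V + B).det := by
      have : ContinuousAt (fun B : V →L[ℝ] V => (ContinuousLinearMap.id ℝ V + B).det) 0 :=
        (hdetc.comp (continuous_const.add continuous_id)).continuousAt
      apply this.eventually_const_lt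
      simp [ContinuousLinearMap.det]
    obtain ⟨δ, hδ, h⟩ := Metric.eventually_nhds_iff.1 h1
    exact ⟨δ, hδ, fun B hB => h (by simpa using hB)⟩
  obtain ⟨t0, ht0, ht01, ht0K, ht0δ⟩ : ∃ t0 : ℝ, 0 < t0 ∧ t0 < 1 ∧ t0 * K < 1 ∧ t0 * K < δ := by
    refine ⟨min 1 δ / (2 * (K + 1)), by positivity, ?_, ?_, ?_⟩
    · rw [div_lt_one (by positivity)]
      have : min 1 δ ≤ 1 := min_le_left _ _
      have : (0:ℝ) ≤ K := K.2
      linarith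
    all_goals
      have h0 : (0:ℝ) ≤ K := K.2
      have h3 : 0 < min 1 δ := by positivity
      have h1 : min 1 δ ≤ 1 := min_le_left _ _
      have h2 : min 1 δ ≤ δ := min_le_right _ _
      rw [div_mul_eq_mul_div, div_lt_iff₀ (by positivity)]
      nlinarith
  have hvol : ∀ t : ℝ, 0 < t → t ≤ t0 →
      ∫ x in Metric.ball (0:V) R, (ContinuousLinearMap.id ℝ V + t • A x).det ∂μ
        = μ.real (Metric.ball (0:V) R) := by
    intro t ht htt
    have htK : t * K < 1 := lt_of_le_of_lt (by gcongr) ht0K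
    have htδ : t * K < δ := lt_of_le_of_lt (by gcongr) ht0δ
    let f : V → V := fun x => x + t • g x
    have hfin : ∀ x ∈ Metric.ball (0:V) R, f x ∈ Metric.ball (0:V) R := by
      intro x hx
      rw [mem_ball_zero_iff] at hx ⊢
      have : f x = (1 - t) • x + t • r x := by
        simp only [f, g, smul_sub, sub_smul, one_smul]; abel
      rw [this]
      refine (norm_add_le _ _).trans_lt ?_
      rw [norm_smul, norm_smul, hn x hx.le, Real.norm_of_nonneg ht.le,
        Real.norm_of_nonneg (by linarith)]
      nlinarith
    have hinj : Set.InjOn f (Metric.ball (0:V) R) := by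
      intro x hx y hy hxy
      have h1 := hlip.norm_sub_le (Metric.ball_subset_closedBall hx)
        (Metric.ball_subset_closedBall hy)
      have h2 : x - y = - (t • (g x - g y)) := by
        have : x + t • g x = y + t • g y := hxy
        rw [smul_sub]
        rw [← sub_eq_zero] at this ⊢
        rw [← this]; abel
      have h3 : ‖x - y‖ = t * ‖g x - g y‖ := by
        conv_lhs => rw [h2, norm_neg, norm_smul, Real.norm_of_nonneg ht.le]
      have h4 : ‖x - y‖ ≤ (t * K) * ‖x - y‖ := by
        rw [mul_assoc]; conv_lhs => rw [h3]
        gcongr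
      have h5 : ‖x - y‖ = 0 := by nlinarith [norm_nonneg (x - y)]
      exact sub_eq_zero.1 (norm_eq_zero.1 h5)
    have himg : f '' Metric.ball (0:V) R = Metric.ball (0:V) R := by
      apply Set.Subset.antisymm
      · rintro _ ⟨x, hx, rfl⟩; exact hfin x hx
      · intro y hy
        have hcon : ContractingWith (⟨t, ht.le⟩ * K) (fun x => y - t • gt x) := by
          refine ⟨htK, ?_⟩
          refine LipschitzWith.of_dist_le_mul fun a b => ?_
          rw [dist_eq_norm, sub_sub_sub_cancel_left, ← smul_sub, norm_smul,
            Real.norm_of_nonneg ht.le, ← dist_eq_norm, dist_comm]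
          have := hlip'.dist_le_mul a b
          have h2 : ((⟨t, ht.le⟩ * K : NNReal) : ℝ) = t * K := rfl
          rw [h2, mul_assoc]
          gcongr
        let x := ContractingWith.fixedPoint _ hcon
        have hx : y - t • gt x = x := hcon.fixedPoint_isFixedPt
        by_cases hxR : ‖x‖ < R
        · refine ⟨x, by simpa using hxR, ?_⟩
          have : gt x = g x := by simp [hgt, hxR.le]
          rw [this] at hx
          exact (sub_eq_iff_eq_add.1 hx).symm
        · exfalso
          have h0 : gt x = 0 := by
            by_cases h : ‖x‖ ≤ R
            · simp only [hgt, h, if_true]; exact hg0 x (le_antisymm h (not_lt.1 hxR))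
            · simp [hgt, h]
          rw [h0] at hx
          simp at hx
          rw [← hx] at hxR
          exact hxR (by simpa using hy)
    have hf' : ∀ x ∈ Metric.ball (0:V) R, HasFDerivWithinAt f
        (ContinuousLinearMap.id ℝ V + t • A x) (Metric.ball (0:V) R) x := fun x _ =>
      ((hasFDerivAt_id x).add ((hgA x).const_smul t)).hasFDerivWithinAt
    have := MeasureTheory.integral_image_eq_integral_abs_det_fderiv_smul μ measurableSet_ball hf'
      hinj (fun _ => (1:ℝ))
    rw [himg] at this
    simp only [MeasureTheory.integral_const, smul_eq_mul, mul_one,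
      MeasureTheory.measureReal_restrict_apply_univ] at this
    rw [this]
    refine MeasureTheory.setIntegral_congr_fun measurableSet_ball fun x hx => ?_
    refine (abs_of_pos (hdet _ ?_)).symm
    rw [norm_smul, Real.norm_of_nonneg ht.le]
    refine lt_of_le_of_lt ?_ htδ
    gcongr
    exact hK x (Metric.ball_subset_closedBall hx)
  -- interpolation
  obtain ⟨c, t, htt, hp⟩ := bz_interp (Module.finrank ℝ V) t0 ht0
  have hc1 : 1 = ∑ i ∈ Finset.range (Module.finrank ℝ V + 1), c i := by
    simpa using hp 1 (by simp)
  have hpt : ∀ x, (ContinuousLinearMap.id ℝ V + (1:ℝ) • A x).det =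
      ∑ i ∈ Finset.range (Module.finrank ℝ V + 1),
        c i * (ContinuousLinearMap.id ℝ V + t i • A x).det := by
    intro x
    obtain ⟨p, hpd, hpe⟩ := bz_det_poly (A x)
    simpa only [hpe] using hp p hpd
  have hint : ∀ s : ℝ, MeasureTheory.IntegrableOn
      (fun x => (ContinuousLinearMap.id ℝ V + s • A x).det) (Metric.ball (0:V) R) μ := by
    intro s
    have hcont : Continuous (fun x => (ContinuousLinearMap.id ℝ V + s • A x).det) :=
      hdetc.comp (continuous_const.add (hA.const_smul s))
    exact (hcont.continuousOn.integrableOn_compact hcomp).mono_set Metric.ball_subset_closedBall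
  have hone : ∫ x in Metric.ball (0:V) R, (ContinuousLinearMap.id ℝ V + (1:ℝ) • A x).det ∂μ
        = μ.real (Metric.ball (0:V) R) := by
    simp_rw [hpt]
    rw [MeasureTheory.integral_finsetSum _ (fun i _ => (hint (t i)).const_mul (c i))]
    simp_rw [MeasureTheory.integral_const_mul]
    rw [Finset.sum_congr rfl (fun i hi => by rw [hvol (t i) (htt i hi).1 (htt i hi).2]),
      ← Finset.sum_mul, ← hc1, one_mul]
  have hzero : ∫ x in Metric.ball (0:V) R, (ContinuousLinearMap.id ℝ V + (1:ℝ) • A x).det ∂μ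
      = 0 := by
    refine MeasureTheory.setIntegral_eq_zero_of_forall_eq_zero fun x hx => ?_
    have hrd : HasFDerivAt r (ContinuousLinearMap.id ℝ V + (1:ℝ) • A x) x := by
      have h := (hasFDerivAt_id x).add (hgA x)
      have he : (id + g : V → V) = r := by funext z; simp [g]
      rw [one_smul]
      rw [he] at h; exact h
    set B := ContinuousLinearMap.id ℝ V + (1:ℝ) • A x
    have horth : ∀ h, ⟪r x, B h⟫ = 0 := by
      intro h
      have h1 := hrd.norm_sq
      have h2 : HasFDerivAt (fun z => ‖r z‖ ^ 2) (0 : V →L[ℝ] ℝ) x := by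
        refine (hasFDerivAt_const (R^2) x).congr_of_eventuallyEq ?_
        filter_upwards [Metric.isOpen_ball.mem_nhds hx] with z hz
        rw [hn z (by simpa using (Metric.ball_subset_closedBall hz))]
      have h3 := congrArg (fun L : V →L[ℝ] ℝ => L h) (h1.unique h2)
      simpa using h3
    by_contra hne
    have hsurj : Function.Surjective B := by
      have hu : IsUnit (LinearMap.det (B : V →ₗ[ℝ] V)) := isUnit_iff_ne_zero.2 hne
      have := (LinearMap.equivOfIsUnitDet hu).surjective
      intro z
      obtain ⟨h, hh⟩ := this z
      exact ⟨h, by simpa using hh⟩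
    obtain ⟨h, hh⟩ := hsurj (r x)
    have h1 := horth h
    rw [hh, real_inner_self_eq_norm_sq, hn x (by simpa using (Metric.ball_subset_closedBall hx))] at h1
    exact absurd h1 (by positivity)
  have hpos : 0 < μ.real (Metric.ball (0:V) R) :=
    ENNReal.toReal_pos (Metric.measure_ball_pos μ 0 hR).ne' MeasureTheory.measure_ball_lt_top.ne
  linarith


/-- A smooth field pointing outwards on the sphere vanishes somewhere in the ball. -/
theorem bz_zero {V : Type*} [NormedAddCommGroup V] [InnerProductSpace ℝ V]
    [FiniteDimensional ℝ V] (G : V → V) (hG : ContDiff ℝ 1 G) (R : ℝ) (hR : 0 < R)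
    (h : ∀ x, ‖x‖ = R → 0 < ⟪G x, x⟫) : ∃ x, ‖x‖ ≤ R ∧ G x = 0 := by
  by_contra hcon
  push Not at hcon
  obtain ⟨ρ, hρ0, hρR, hρ⟩ : ∃ ρ : ℝ, 0 ≤ ρ ∧ ρ < R ∧
      ∀ x, ‖x‖ ≤ R → ⟪G x, x⟫ ≤ 0 → ‖x‖ ≤ ρ := by
    let S : Set V := Metric.closedBall 0 R ∩ {x | ⟪G x, x⟫ ≤ 0}
    have hcl : IsClosed {x | ⟪G x, x⟫ ≤ 0} :=
      isClosed_le (hG.continuous.inner continuous_id) continuous_const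
    have hSc : IsCompact S := (isCompact_closedBall _ _).inter_right hcl
    rcases S.eq_empty_or_nonempty with hE | hne
    · refine ⟨0, le_rfl, hR, fun x hx hx' => ?_⟩
      have : x ∈ S := ⟨by simpa using hx, hx'⟩
      rw [hE] at this; exact this.elim
    · obtain ⟨z, hz, hmax⟩ := hSc.exists_isMaxOn hne continuous_norm.continuousOn
      refine ⟨‖z‖, norm_nonneg _, ?_, fun x hx hx' => hmax ⟨by simpa using hx, hx'⟩⟩
      have hz1 : ‖z‖ ≤ R := by simpa using hz.1
      refine lt_of_le_of_ne hz1 fun he => ?_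
      exact absurd (h z he) (not_lt.2 hz.2)
  have hden : 0 < R ^ 2 - ρ ^ 2 := by nlinarith
  let χ : V → ℝ := fun x => Real.smoothTransition ((‖x‖ ^ 2 - ρ ^ 2) / (R ^ 2 - ρ ^ 2))
  have hχ : ContDiff ℝ 1 χ :=
    Real.smoothTransition.contDiff.comp (((contDiff_norm_sq ℝ).sub contDiff_const).div_const _)
  have hχ0 : ∀ x, 0 ≤ χ x := fun x => Real.smoothTransition.nonneg _
  have hχ1 : ∀ x, χ x ≤ 1 := fun x => Real.smoothTransition.le_one _
  have hχi : ∀ x, ‖x‖ ≤ ρ → χ x = 0 := fun x hx =>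
    Real.smoothTransition.zero_of_nonpos
      (div_nonpos_of_nonpos_of_nonneg (by nlinarith [norm_nonneg x]) hden.le)
  have hχo : ∀ x, R ≤ ‖x‖ → χ x = 1 := fun x hx =>
    Real.smoothTransition.one_of_one_le ((one_le_div hden).2 (by nlinarith [norm_nonneg x]))
  let F : V → V := fun x => (1 - χ x) • G x + χ x • x
  have hF : ContDiff ℝ 1 F := ((contDiff_const.sub hχ).smul hG).add (hχ.smul contDiff_id)
  have hFo : ∀ x, R ≤ ‖x‖ → F x = x := fun x hx => by simp [F, hχo x hx]
  have hF0 : ∀ x, F x ≠ 0 := by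
    intro x hx0
    rcases le_or_gt R ‖x‖ with hx | hx
    · rw [hFo x hx] at hx0
      rw [hx0, norm_zero] at hx
      linarith
    · rcases le_or_gt ⟪G x, x⟫ 0 with hg | hg
      · have := hχi x (hρ x hx.le hg)
        simp only [F, this, sub_zero, one_smul, zero_smul, add_zero] at hx0
        exact hcon x hx.le hx0
      · have h1 : ⟪F x, x⟫ = (1 - χ x) * ⟪G x, x⟫ + χ x * ‖x‖ ^ 2 := by
          simp only [F, inner_add_left, real_inner_smul_left, real_inner_self_eq_norm_sq]
        rw [hx0, inner_zero_left] at h1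
        have hxn : 0 < ‖x‖ := by
          rw [norm_pos_iff]; rintro rfl; simp at hg
        have h2 : 0 < ‖x‖ ^ 2 := by positivity
        rcases (hχ0 x).eq_or_lt with h3 | h3
        · rw [← h3] at h1; linarith
        · nlinarith [mul_pos h3 h2, mul_nonneg (sub_nonneg.2 (hχ1 x)) hg.le]
  refine bz_no_retract (fun x => (R / ‖F x‖) • F x) ?_ R hR ?_ ?_
  · exact (contDiff_const.div (hF.norm ℝ hF0) (fun x => norm_ne_zero_iff.2 (hF0 x))).smul hF
  · intro x hx
    simp only [hFo x hx.ge, hx, div_self hR.ne', one_smul]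
  · intro x _
    have := norm_pos_iff.2 (hF0 x)
    simp only [norm_smul, norm_div, norm_norm, Real.norm_of_nonneg hR.le]
    field_simp

theorem hm_skew {V : Type*} [NormedAddCommGroup V] [InnerProductSpace ℝ V]
    (J : V →L[ℝ] V) (hJ0 : ∀ x, ⟪J x, x⟫ = 0) (x y : V) : ⟪J x, y⟫ = - ⟪J y, x⟫ := by
  have h := hJ0 (x + y)
  rw [map_add, inner_add_left, inner_add_right, inner_add_right, hJ0, hJ0] at h
  linarith

theorem hm_ineq {V : Type*} [NormedAddCommGroup V] [InnerProductSpace ℝ V]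
    (J : V →L[ℝ] V) (hJ0 : ∀ x, ⟪J x, x⟫ = 0) (T : V → ℝ → Set V)
    (mono : ∀ a t b, ∀ w ∈ T a t, ∀ w' ∈ T b (t + 2 * ⟪J a, b⟫), 0 ≤ ⟪w - w', a - b⟫)
    (dom : ∀ a t, (T a t).Nonempty)
    (a p q : V) (t tp tq s r : ℝ) (hs : 0 ≤ s) (hr : 0 ≤ r) (hsr : s + r ≤ 1)
    (hp : tp - t - 2 * ⟪J a, p⟫ = - 2 * r * ⟪J (p - a), q - a⟫)
    (hq : tq - t - 2 * ⟪J a, q⟫ = 2 * s * ⟪J (p - a), q - a⟫)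
    (w wp wq : V) (hw : w ∈ T a t) (hwp : wp ∈ T p tp) (hwq : wq ∈ T q tq) :
    (1 - s - r) * ⟪w, s • (p - a) + r • (q - a)⟫ ≤
      s * ⟪wp, (1 - s) • (p - a) - r • (q - a)⟫ + r * ⟪wq, (1 - r) • (q - a) - s • (p - a)⟫ := by
  obtain ⟨U, rfl⟩ : ∃ U, p = a + U := ⟨p - a, by abel⟩
  obtain ⟨Q, rfl⟩ : ∃ Q, q = a + Q := ⟨q - a, by abel⟩
  simp only [add_sub_cancel_left] at *
  set z := a + (s • U + r • Q) with hz
  obtain ⟨σ, hσ⟩ := dom z (t + 2 * ⟪J a, z⟫)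
  have e1 := hm_skew J hJ0 a U
  have e2 := hm_skew J hJ0 a Q
  have e3 := hm_skew J hJ0 Q U
  have m1 := mono a t z w hw σ hσ
  have m2 := mono z _ (a + U) σ hσ wp (by
    have hh : t + 2 * ⟪J a, z⟫ + 2 * ⟪J z, a + U⟫ = tp := by
      simp only [hz, map_add, map_smul, inner_add_left, inner_add_right, real_inner_smul_left,
        real_inner_smul_right, hJ0] at hp ⊢
      linear_combination (-1) * hp + 2 * s * e1 + 2 * r * e2 + 2 * r * e3
    rw [hh]; exact hwp)
  have m3 := mono z _ (a + Q) σ hσ wq (by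
    have hh : t + 2 * ⟪J a, z⟫ + 2 * ⟪J z, a + Q⟫ = tq := by
      simp only [hz, map_add, map_smul, inner_add_left, inner_add_right, real_inner_smul_left,
        real_inner_smul_right, hJ0] at hq ⊢
      linear_combination (-1) * hq + 2 * s * e1 + 2 * r * e2
    rw [hh]; exact hwq)
  have d1 : a - z = - (s • U + r • Q) := by rw [hz]; abel
  have d2 : z - (a + U) = - ((1 - s) • U - r • Q) := by rw [hz]; module
  have d3 : z - (a + Q) = - ((1 - r) • Q - s • U) := by rw [hz]; module
  rw [d1] at m1
  rw [d2] at m2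
  rw [d3] at m3
  simp only [inner_neg_right, inner_sub_left, inner_sub_right, inner_add_right,
    real_inner_smul_right] at m1 m2 m3 ⊢
  nlinarith [mul_nonneg (by linarith : 0 ≤ 1 - s - r) m1, mul_nonneg hs m2, mul_nonneg hr m3]

theorem hm_key0e {V : Type*} [NormedAddCommGroup V] [InnerProductSpace ℝ V]
    (J : V →L[ℝ] V) (hJ0 : ∀ x, ⟪J x, x⟫ = 0) (hJn : ∀ x, ‖J x‖ = ‖x‖) (T : V → ℝ → Set V)
    (mono : ∀ a t b, ∀ w ∈ T a t, ∀ w' ∈ T b (t + 2 * ⟪J a, b⟫), 0 ≤ ⟪w - w', a - b⟫)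
    (dom : ∀ a t, (T a t).Nonempty) (u : V) (hu : u ≠ 0) (wp : V) (hwp : wp ∈ T u 0)
    (ε : ℝ) (hε : 0 < ε) (e : ℝ) (he : e * e = 1) :
    ∀ᶠ x : V × ℝ in nhds (0, 0), e * (0 - x.2 - 2 * ⟪J x.1, u⟫) ≤ 0 →
      ∀ w ∈ T x.1 x.2, ⟪w, u⟫ ≤ ⟪wp, u⟫ + ε * (1 + ‖w‖) := by
  obtain ⟨wq, hwq⟩ := dom (e • J u) (e * ‖u‖ ^ 2)
  have hup : 0 < ‖u‖ ^ 2 := by positivity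
  have he0 : e ≠ 0 := by rintro rfl; simp at he
  let κ : V × ℝ → ℝ := fun x => ⟪J (u - x.1), e • J u - x.1⟫
  let s : V × ℝ → ℝ := fun x =>
    (e * ‖u‖ ^ 2 - x.2 - 2 * ⟪J x.1, e • J u⟫) / (2 * κ x)
  let r : V × ℝ → ℝ := fun x => - (0 - x.2 - 2 * ⟪J x.1, u⟫) / (2 * κ x)
  have hκ0 : κ (0, 0) = e * ‖u‖ ^ 2 := by
    simp [κ, real_inner_smul_right, hJn]
  have hκ0' : κ (0, 0) ≠ 0 := by rw [hκ0]; exact mul_ne_zero he0 hup.ne'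
  have hκ : Continuous κ := by fun_prop
  have hs : ContinuousAt s (0, 0) := by
    refine ContinuousAt.div ?_ ?_ ?_
    · fun_prop
    · fun_prop
    · exact mul_ne_zero two_ne_zero hκ0'
  have hr : ContinuousAt r (0, 0) := by
    refine ContinuousAt.div ?_ ?_ ?_
    · fun_prop
    · fun_prop
    · exact mul_ne_zero two_ne_zero hκ0'
  have hs0 : s (0, 0) = 1 / 2 := by
    simp only [s, hκ0]
    simp
    field_simp
  have hr0 : r (0, 0) = 0 := by simp [r]
  have E1 : ∀ᶠ x in nhds ((0, 0) : V × ℝ), 0 < e * κ x := by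
    have : ContinuousAt (fun x => e * κ x) (0, 0) := by fun_prop
    apply this.eventually_const_lt
    change 0 < e * κ (0, 0)
    rw [hκ0, ← mul_assoc, he, one_mul]; exact hup
  have E2 : ∀ᶠ x in nhds ((0, 0) : V × ℝ), 0 < s x :=
    hs.eventually_const_lt (by rw [hs0]; norm_num)
  have E3 : ∀ᶠ x in nhds ((0, 0) : V × ℝ), s x + r x < 1 :=
    (hs.add hr).eventually_lt_const (by change s (0, 0) + r (0, 0) < 1; rw [hs0, hr0]; norm_num)
  have E4 : ∀ᶠ x in nhds ((0, 0) : V × ℝ),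
      s x * ⟪wp, (1 - s x) • (u - x.1) - r x • (e • J u - x.1)⟫
        + r x * ⟪wq, (1 - r x) • (e • J u - x.1) - s x • (u - x.1)⟫
        < 1 / 4 * ⟪wp, u⟫ + ε / 4 := by
    have : ContinuousAt (fun x : V × ℝ =>
      s x * ⟪wp, (1 - s x) • (u - x.1) - r x • (e • J u - x.1)⟫
        + r x * ⟪wq, (1 - r x) • (e • J u - x.1) - s x • (u - x.1)⟫) (0, 0) := by fun_prop
    apply this.eventually_lt_const
    simp only [hs0, hr0, sub_zero, zero_smul, zero_mul, add_zero, real_inner_smul_right]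
    linarith
  have E5 : ∀ᶠ x in nhds ((0, 0) : V × ℝ),
      ‖(1 / 4 : ℝ) • u - (1 - s x - r x) • (s x • (u - x.1) + r x • (e • J u - x.1))‖ < ε / 4 := by
    have : ContinuousAt (fun x : V × ℝ =>
      ‖(1 / 4 : ℝ) • u - (1 - s x - r x) • (s x • (u - x.1) + r x • (e • J u - x.1))‖) (0, 0) := by
      fun_prop
    apply this.eventually_lt_const
    have h0 : (1 / 4 : ℝ) • u - (1 - s (0,0) - r (0,0)) •
      (s (0,0) • (u - ((0,0) : V × ℝ).1) + r (0,0) • (e • J u - ((0,0) : V × ℝ).1)) = 0 := by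
      simp only [hs0, hr0]
      module
    refine lt_of_le_of_lt (le_of_eq ?_) (by positivity : 0 < ε / 4)
    exact norm_eq_zero.2 h0
  filter_upwards [E1, E2, E3, E4, E5] with x h1 h2 h3 h4 h5 hsign w hw
  have hκx : κ x ≠ 0 := by rintro h; simp [h] at h1
  have hrx : 0 ≤ r x := by
    have : r x = (- (e * (0 - x.2 - 2 * ⟪J x.1, u⟫))) / (2 * (e * κ x)) := by
      simp only [r]; field_simp
    rw [this]
    exact div_nonneg (by linarith) (by linarith)
  have hin := hm_ineq J hJ0 T mono dom x.1 u (e • J u) x.2 0 (e * ‖u‖ ^ 2) (s x) (r x)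
    h2.le hrx h3.le
    (by change _ = _ * κ x
        simp only [r]; field_simp)
    (by change _ = _ * κ x
        simp only [s]; field_simp)
    w wp wq hw hwp hwq
  have hdec : 1 / 4 * ⟪w, u⟫ = (1 - s x - r x) * ⟪w, s x • (u - x.1) + r x • (e • J u - x.1)⟫
      + ⟪w, (1 / 4 : ℝ) • u - (1 - s x - r x) • (s x • (u - x.1) + r x • (e • J u - x.1))⟫ := by
    rw [inner_sub_right, real_inner_smul_right, real_inner_smul_right]; ring
  have hcs := real_inner_le_norm w
    ((1 / 4 : ℝ) • u - (1 - s x - r x) • (s x • (u - x.1) + r x • (e • J u - x.1)))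
  have := mul_le_mul_of_nonneg_left h5.le (norm_nonneg w)
  nlinarith

theorem hm_key0 {V : Type*} [NormedAddCommGroup V] [InnerProductSpace ℝ V]
    (J : V →L[ℝ] V) (hJ0 : ∀ x, ⟪J x, x⟫ = 0) (hJn : ∀ x, ‖J x‖ = ‖x‖) (T : V → ℝ → Set V)
    (mono : ∀ a t b, ∀ w ∈ T a t, ∀ w' ∈ T b (t + 2 * ⟪J a, b⟫), 0 ≤ ⟪w - w', a - b⟫)
    (dom : ∀ a t, (T a t).Nonempty) (u : V) (wp : V) (hwp : wp ∈ T u 0)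
    (ε : ℝ) (hε : 0 < ε) :
    ∀ᶠ x : V × ℝ in nhds (0, 0),
      ∀ w ∈ T x.1 x.2, ⟪w, u⟫ ≤ ⟪wp, u⟫ + ε * (1 + ‖w‖) := by
  by_cases hu : u = 0
  · subst hu
    filter_upwards with x w hw
    simp only [inner_zero_right]; positivity
  filter_upwards [hm_key0e J hJ0 hJn T mono dom u hu wp hwp ε hε 1 (by norm_num),
    hm_key0e J hJ0 hJn T mono dom u hu wp hwp ε hε (-1) (by norm_num)] with x h1 h2
  rcases le_total (0 - x.2 - 2 * ⟪J x.1, u⟫) 0 with h | h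
  · exact h1 (by linarith)
  · exact h2 (by linarith)

theorem hm_trans {V : Type*} [NormedAddCommGroup V] [InnerProductSpace ℝ V]
    (J : V →L[ℝ] V) (hJ0 : ∀ x, ⟪J x, x⟫ = 0) (a0 a b : V) (t0 t : ℝ) :
    t0 + t + 2 * ⟪J a0, a⟫ + 2 * ⟪J (a0 + a), a0 + b⟫
      = t0 + (t + 2 * ⟪J a, b⟫) + 2 * ⟪J a0, b⟫ := by
  have := hm_skew J hJ0 a0 a
  simp only [map_add, inner_add_left, inner_add_right, hJ0]
  linarith

theorem hm_key {V : Type*} [NormedAddCommGroup V] [InnerProductSpace ℝ V]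
    (J : V →L[ℝ] V) (hJ0 : ∀ x, ⟪J x, x⟫ = 0) (hJn : ∀ x, ‖J x‖ = ‖x‖) (T : V → ℝ → Set V)
    (mono : ∀ a t b, ∀ w ∈ T a t, ∀ w' ∈ T b (t + 2 * ⟪J a, b⟫), 0 ≤ ⟪w - w', a - b⟫)
    (dom : ∀ a t, (T a t).Nonempty) (a0 : V) (t0 : ℝ) (b : V) (wp : V)
    (hwp : wp ∈ T b (t0 + 2 * ⟪J a0, b⟫)) (ε : ℝ) (hε : 0 < ε) :
    ∀ᶠ x : V × ℝ in nhds (a0, t0),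
      ∀ w ∈ T x.1 x.2, ⟪w, b - a0⟫ ≤ ⟪wp, b - a0⟫ + ε * (1 + ‖w‖) := by
  have h := hm_key0 J hJ0 hJn (fun a t => T (a0 + a) (t0 + t + 2 * ⟪J a0, a⟫))
    (by
      intro a t b w hw w' hw'
      have := mono _ _ (a0 + b) w hw w' (by rw [hm_trans J hJ0]; exact hw')
      simpa using this)
    (fun a t => dom _ _) (b - a0) wp
    (by simpa [inner_sub_right, hJ0] using hwp) ε hε
  have hφ : Filter.Tendsto (fun x : V × ℝ => (x.1 - a0, x.2 - t0 - 2 * ⟪J a0, x.1 - a0⟫))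
      (nhds (a0, t0)) (nhds (0, 0)) := by
    have hc : Continuous (fun x : V × ℝ => (x.1 - a0, x.2 - t0 - 2 * ⟪J a0, x.1 - a0⟫)) := by
      fun_prop
    have := hc.tendsto (a0, t0)
    simpa using this
  filter_upwards [hφ.eventually h] with x hx w hw
  refine hx w ?_
  have h1 : a0 + (x.1 - a0) = x.1 := by abel
  have h2 : t0 + (x.2 - t0 - 2 * ⟪J a0, x.1 - a0⟫) + 2 * ⟪J a0, x.1 - a0⟫ = x.2 := by ring
  change w ∈ T (a0 + (x.1 - a0)) (t0 + (x.2 - t0 - 2 * ⟪J a0, x.1 - a0⟫) + 2 * ⟪J a0, x.1 - a0⟫)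
  rw [h1, h2]; exact hw

theorem hm_bdd {V : Type*} [NormedAddCommGroup V] [InnerProductSpace ℝ V] [FiniteDimensional ℝ V]
    (J : V →L[ℝ] V) (hJ0 : ∀ x, ⟪J x, x⟫ = 0) (hJn : ∀ x, ‖J x‖ = ‖x‖) (T : V → ℝ → Set V)
    (mono : ∀ a t b, ∀ w ∈ T a t, ∀ w' ∈ T b (t + 2 * ⟪J a, b⟫), 0 ≤ ⟪w - w', a - b⟫)
    (dom : ∀ a t, (T a t).Nonempty) (a0 : V) (t0 : ℝ) :
    ∃ M : ℝ, ∀ᶠ x : V × ℝ in nhds (a0, t0), ∀ w ∈ T x.1 x.2, ‖w‖ ≤ M := by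
  let b := stdOrthonormalBasis ℝ V
  let N : ℕ := Module.finrank ℝ V
  let ε : ℝ := 1 / (2 * (N + 1))
  have hε : 0 < ε := by positivity
  have step : ∀ u : V, ∃ C : ℝ, ∀ᶠ x : V × ℝ in nhds (a0, t0),
      ∀ w ∈ T x.1 x.2, ⟪w, u⟫ ≤ C + ε * (1 + ‖w‖) := by
    intro u
    obtain ⟨wp, hwp⟩ := dom (a0 + u) (t0 + 2 * ⟪J a0, a0 + u⟫)
    refine ⟨⟪wp, u⟫, ?_⟩
    simpa using hm_key J hJ0 hJn T mono dom a0 t0 (a0 + u) wp hwp ε hε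
  choose C hC using step
  refine ⟨2 * (∑ i, max (C (b i)) (C (-b i))) + 1, ?_⟩
  have h1 : ∀ᶠ x : V × ℝ in nhds (a0, t0), ∀ i, ∀ w ∈ T x.1 x.2,
      |⟪w, b i⟫| ≤ max (C (b i)) (C (-b i)) + ε * (1 + ‖w‖) := by
    rw [Filter.eventually_all]
    intro i
    filter_upwards [hC (b i), hC (-b i)] with x h1 h2 w hw
    have k1 := h1 w hw
    have k2 := h2 w hw
    rw [inner_neg_right] at k2
    have l1 := le_max_left (C (b i)) (C (-b i))
    have l2 := le_max_right (C (b i)) (C (-b i))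
    rw [abs_le]
    constructor <;> linarith
  filter_upwards [h1] with x hx w hw
  have h2 : ‖w‖ ≤ ∑ i, |⟪w, b i⟫| := by
    conv_lhs => rw [← b.sum_repr w]
    refine (norm_sum_le _ _).trans (Finset.sum_le_sum fun i _ => ?_)
    rw [norm_smul, b.repr_apply_apply, b.norm_eq_one, mul_one, real_inner_comm]
    rfl
  have h3 : ∑ i, |⟪w, b i⟫| ≤ ∑ i, (max (C (b i)) (C (-b i)) + ε * (1 + ‖w‖)) :=
    Finset.sum_le_sum fun i _ => hx i w hw
  rw [Finset.sum_add_distrib, Finset.sum_const, Finset.card_univ, Fintype.card_fin,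
    nsmul_eq_mul] at h3
  have h4 : (N : ℝ) * (ε * (1 + ‖w‖)) ≤ (1 + ‖w‖) / 2 := by
    have : (N : ℝ) * ε ≤ 1 / 2 := by
      simp only [ε]
      rw [mul_one_div, div_le_div_iff₀ (by positivity) (by norm_num)]
      linarith
    nlinarith [norm_nonneg w]
  linarith


theorem hm_solve0 {V : Type*} [NormedAddCommGroup V] [InnerProductSpace ℝ V]
    [FiniteDimensional ℝ V]
    (J : V →L[ℝ] V) (hJ0 : ∀ x, ⟪J x, x⟫ = 0) (hJn : ∀ x, ‖J x‖ = ‖x‖) (T : V → ℝ → Set V)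
    (mono : ∀ a t b, ∀ w ∈ T a t, ∀ w' ∈ T b (t + 2 * ⟪J a, b⟫), 0 ≤ ⟪w - w', a - b⟫)
    (hmax : ∀ a t w, (∀ b, ∀ w' ∈ T b (t + 2 * ⟪J a, b⟫), 0 ≤ ⟪w - w', a - b⟫) → w ∈ T a t)
    (dom : ∀ a t, (T a t).Nonempty) (lam : ℝ) (hlam : 0 < lam) (y : V) :
    ∃ x, ∃ w ∈ T x 0, x + lam • w = y := by
  obtain ⟨w0, hw0⟩ := dom 0 0
  let R : ℝ := ‖lam • w0 - y‖ + 1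
  have hR : 1 ≤ R := by simp [R]
  have hbound : ∃ M : ℝ, ∀ z ∈ Metric.closedBall (0:V) (R + 1), ∀ w ∈ T z 0, ‖w‖ ≤ M := by
    refine (isCompact_closedBall (0:V) (R + 1)).induction_on
      (p := fun s => ∃ M : ℝ, ∀ z ∈ s, ∀ w ∈ T z 0, ‖w‖ ≤ M) ?_ ?_ ?_ ?_
    · exact ⟨0, fun z hz => hz.elim⟩
    · rintro s t hst ⟨M, hM⟩
      exact ⟨M, fun z hz => hM z (hst hz)⟩
    · rintro s t ⟨M, hM⟩ ⟨M', hM'⟩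
      refine ⟨max M M', fun z hz w hw => ?_⟩
      rcases hz with hz | hz
      · exact (hM z hz w hw).trans (le_max_left _ _)
      · exact (hM' z hz w hw).trans (le_max_right _ _)
    · intro x _
      obtain ⟨M, hM⟩ := hm_bdd J hJ0 hJn T mono dom x 0
      have hc : Filter.Tendsto (fun z : V => (z, (0:ℝ))) (nhds x) (nhds (x, 0)) :=
        (Continuous.prodMk_left (0:ℝ)).tendsto x
      exact ⟨_, mem_nhdsWithin_of_mem_nhds (hc.eventually hM), M, fun z hz => hz⟩
  obtain ⟨M, hM⟩ := hbound
  have hM0 : 0 ≤ M := (norm_nonneg w0).trans (hM 0 (by simp; linarith) w0 hw0)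
  let ε0 : ℝ := 1 / (lam * (M + ‖w0‖) + 1)
  have hden : 0 < lam * (M + ‖w0‖) + 1 := by positivity
  have hε0 : 0 < ε0 := by positivity
  have hε01 : ε0 ≤ 1 := by
    rw [div_le_one hden]
    have : 0 ≤ lam * (M + ‖w0‖) := by positivity
    linarith
  have happ : ∀ ε : ℝ, 0 < ε → ε ≤ ε0 → ∃ x : V, ‖x‖ ≤ R ∧
      ∃ f ∈ convexHull ℝ {w | ∃ z ∈ Metric.ball x ε, w ∈ T z 0}, x + lam • f = y := by
    intro ε hε hεε
    obtain ⟨f, hf⟩ := exists_contMDiffMap_forall_mem_convex_of_local_const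
      (n := 1) (modelWithCornersSelf ℝ V)
      (t := fun x : V => convexHull ℝ {w | ∃ z ∈ Metric.ball x ε, w ∈ T z 0})
      (fun x => convex_convexHull _ _)
      (by
        intro x
        obtain ⟨c, hc⟩ := dom x 0
        refine ⟨c, ?_⟩
        filter_upwards [Metric.ball_mem_nhds x hε] with z hz
        exact subset_convexHull _ _ ⟨x, Metric.mem_ball_comm.1 hz, hc⟩)
    have hfs : ContDiff ℝ 1 f := f.contMDiff.contDiff
    obtain ⟨x, hx, hx0⟩ := bz_zero (fun x => x + lam • f x - y)
      ((contDiff_id.add (hfs.const_smul lam)).sub contDiff_const) R (by linarith) (by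
        intro x hx
        have hhs : f x ∈ {w : V | ⟪w0, x⟫ - ε * (M + ‖w0‖) ≤ ⟪x, w⟫} := by
          refine convexHull_min ?_ ?_ (hf x)
          · rintro w ⟨z, hz, hw⟩
            have hz' : ‖x - z‖ ≤ ε := by
              rw [← dist_eq_norm, dist_comm]; exact (Metric.mem_ball.1 hz).le
            have hzR : z ∈ Metric.closedBall (0:V) (R + 1) := by
              rw [mem_closedBall_zero_iff]
              have h1 : z = x - (x - z) := by abel
              have h2 := norm_sub_le x (x - z)
              rw [← h1] at h2
              linarith
            have hwM := hM z hzR w hw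
            have m := mono 0 0 z w0 hw0 w (by simpa using hw)
            have h3 : ⟪w - w0, x⟫ = ⟪w0 - w, 0 - z⟫ + ⟪w - w0, x - z⟫ := by
              simp only [inner_sub_left, inner_sub_right, inner_zero_right]; ring
            have h4 := neg_le_of_abs_le (abs_real_inner_le_norm (w - w0) (x - z))
            have h5 : ‖w - w0‖ * ‖x - z‖ ≤ (M + ‖w0‖) * ε := by
              gcongr
              exact (norm_sub_le _ _).trans (by linarith)
            rw [inner_sub_left] at h3
            change ⟪w0, x⟫ - ε * (M + ‖w0‖) ≤ ⟪x, w⟫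
            rw [real_inner_comm w x]
            linarith
          · exact convex_halfSpace_ge (innerₛₗ ℝ x).isLinear _
        have hhs' : ⟪w0, x⟫ - ε * (M + ‖w0‖) ≤ ⟪f x, x⟫ := by
          rw [real_inner_comm x (f x)]; exact hhs
        have h6 : ⟪x + lam • f x - y, x⟫
            = ‖x‖ ^ 2 + lam * (⟪f x, x⟫ - ⟪w0, x⟫) + ⟪lam • w0 - y, x⟫ := by
          simp only [inner_sub_left, inner_add_left, real_inner_smul_left,
            real_inner_self_eq_norm_sq]; ring
        have h7 := neg_le_of_abs_le (abs_real_inner_le_norm (lam • w0 - y) x)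
        have h8 : ‖lam • w0 - y‖ = R - 1 := by simp [R]
        have h9 : ε * (lam * (M + ‖w0‖)) < 1 := by
          calc ε * (lam * (M + ‖w0‖)) < ε * (lam * (M + ‖w0‖) + 1) := by
                gcongr; linarith
            _ ≤ ε0 * (lam * (M + ‖w0‖) + 1) := by gcongr
            _ = 1 := by simp only [ε0]; field_simp
        rw [h6, hx]
        rw [h8, hx] at h7
        have h10 : lam * (-(ε * (M + ‖w0‖))) ≤ lam * (⟪f x, x⟫ - ⟪w0, x⟫) := by
          gcongr; linarith
        nlinarith)
    exact ⟨x, hx, f x, hf x, sub_eq_zero.1 hx0⟩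
  have happ' : ∀ k : ℕ, ∃ x : V, ‖x‖ ≤ R ∧
      ∃ f ∈ convexHull ℝ {w | ∃ z ∈ Metric.ball x (ε0 / (k + 1)), w ∈ T z 0},
        x + lam • f = y := by
    intro k
    refine happ _ (by positivity) (div_le_self hε0.le ?_)
    have : (0:ℝ) ≤ k := Nat.cast_nonneg k
    linarith
  choose X hX F hF hXF using happ'
  obtain ⟨x, hxR, φ, hφ, hlim⟩ := (isCompact_closedBall (0:V) R).tendsto_subseq
    (x := X) (fun k => by simpa using hX k)
  have hFe : ∀ k, F k = lam⁻¹ • (y - X k) := by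
    intro k
    rw [← hXF k, add_sub_cancel_left, smul_smul, inv_mul_cancel₀ hlam.ne', one_smul]
  have hFlim : Filter.Tendsto (fun k => F (φ k)) Filter.atTop (nhds (lam⁻¹ • (y - x))) := by
    simp_rw [hFe]
    exact (tendsto_const_nhds.sub hlim).const_smul _
  refine ⟨x, lam⁻¹ • (y - x), hmax x 0 _ ?_, ?_⟩
  · intro b w' hw'
    suffices h : ⟪lam⁻¹ • (y - x), b - x⟫ ≤ ⟪w', b - x⟫ by
      rw [← neg_sub b x, inner_neg_right, inner_sub_left]; linarith
    refine le_of_forall_pos_le_add fun ε hε => ?_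
    have hk := hm_key J hJ0 hJn T mono dom x 0 b w' hw' (ε / (1 + M)) (by positivity)
    have hc : Filter.Tendsto (fun z : V => (z, (0:ℝ))) (nhds x) (nhds (x, 0)) :=
      (Continuous.prodMk_left (0:ℝ)).tendsto x
    obtain ⟨δ, hδ, hball⟩ := Metric.eventually_nhds_iff.1 (hc.eventually hk)
    have hεk : Filter.Tendsto (fun k : ℕ => ε0 / ((φ k : ℝ) + 1)) Filter.atTop (nhds 0) := by
      have h1 : Filter.Tendsto (fun k : ℕ => ε0 / ((k : ℝ) + 1)) Filter.atTop (nhds 0) := by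
        have := (tendsto_one_div_add_atTop_nhds_zero_nat (𝕜 := ℝ)).const_mul ε0
        simpa [div_eq_mul_inv] using this
      exact h1.comp hφ.tendsto_atTop
    have hev1 : ∀ᶠ k in Filter.atTop, dist (X (φ k)) x < δ / 2 :=
      (Metric.tendsto_nhds.1 hlim) _ (by positivity)
    have hev2 : ∀ᶠ k in Filter.atTop, ε0 / ((φ k : ℝ) + 1) < min (δ / 2) 1 :=
      hεk.eventually_lt_const (by positivity)
    have hinner : Filter.Tendsto (fun k => ⟪F (φ k), b - x⟫) Filter.atTop
        (nhds ⟪lam⁻¹ • (y - x), b - x⟫) := hFlim.inner tendsto_const_nhds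
    refine le_of_tendsto hinner ?_
    filter_upwards [hev1, hev2] with k h1 h2
    have h2a := h2.trans_le (min_le_left _ _)
    have h2b := h2.trans_le (min_le_right _ _)
    have hhs : F (φ k) ∈ {w : V | ⟪b - x, w⟫ ≤ ⟪w', b - x⟫ + ε} := by
      refine convexHull_min ?_ ?_ (hF (φ k))
      · rintro w ⟨z, hz, hw⟩
        rw [Metric.mem_ball] at hz
        have hzx : dist z x < δ := (dist_triangle _ (X (φ k)) _).trans_lt (by linarith)
        have h3 := hball hzx w hw
        have hzR : z ∈ Metric.closedBall (0:V) (R + 1) := by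
          rw [Metric.mem_closedBall]
          have h4 := dist_triangle z (X (φ k)) 0
          have h5 := hX (φ k)
          rw [dist_zero_right (X (φ k))] at h4
          linarith
        have hwM := hM z hzR w hw
        change ⟪b - x, w⟫ ≤ ⟪w', b - x⟫ + ε
        rw [real_inner_comm w (b - x)]
        refine h3.trans ?_
        have : ε / (1 + M) * (1 + ‖w‖) ≤ ε / (1 + M) * (1 + M) := by gcongr
        rw [div_mul_cancel₀ _ (by positivity)] at this
        linarith
      · exact convex_halfSpace_le (innerₛₗ ℝ (b - x)).isLinear _
    rw [real_inner_comm]; exact hhs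
  · rw [smul_smul, mul_inv_cancel₀ hlam.ne', one_smul]; abel

theorem hm_solve {V : Type*} [NormedAddCommGroup V] [InnerProductSpace ℝ V]
    [FiniteDimensional ℝ V]
    (J : V →L[ℝ] V) (hJ0 : ∀ x, ⟪J x, x⟫ = 0) (hJn : ∀ x, ‖J x‖ = ‖x‖) (T : V → ℝ → Set V)
    (mono : ∀ a t b, ∀ w ∈ T a t, ∀ w' ∈ T b (t + 2 * ⟪J a, b⟫), 0 ≤ ⟪w - w', a - b⟫)
    (hmax : ∀ a t w, (∀ b, ∀ w' ∈ T b (t + 2 * ⟪J a, b⟫), 0 ≤ ⟪w - w', a - b⟫) → w ∈ T a t)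
    (dom : ∀ a t, (T a t).Nonempty) (lam : ℝ) (hlam : 0 < lam) (a : V) (t : ℝ) (v v' w : V)
    (hw : w ∈ T a t) (hv : v = a + lam • w) :
    ∃ b, ∃ w' ∈ T b (t + 2 * ⟪J a, b⟫), v' = b + lam • w' ∧ ‖a - b‖ ≤ ‖v - v'‖ := by
  obtain ⟨x, w', hw', hx⟩ := hm_solve0 J hJ0 hJn
    (fun c s => T (a + c) (t + s + 2 * ⟪J a, c⟫))
    (by
      intro c s b w hw w' hw'
      have := mono _ _ (a + b) w hw w' (by rw [hm_trans J hJ0]; exact hw')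
      simpa using this)
    (by
      intro c s w h
      refine hmax _ _ _ fun b w' hw' => ?_
      have := h (b - a) w' (by
        have e := hm_trans J hJ0 a c (b - a) t s
        rw [add_sub_cancel] at e
        simp only [add_sub_cancel]
        rw [← e]; exact hw')
      have e2 : c - (b - a) = a + c - b := by abel
      rwa [e2] at this)
    (fun c s => dom _ _) lam hlam (v' - a)
  have hw'' : w' ∈ T (a + x) (t + 2 * ⟪J a, a + x⟫) := by
    simpa [inner_add_right, hJ0] using hw'
  refine ⟨a + x, w', hw'', ?_, ?_⟩
  · rw [add_assoc, hx]; abel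
  · have m := mono a t (a + x) w hw w' hw''
    have h1 : a - (a + x) = - x := by abel
    rw [h1] at m ⊢
    rw [norm_neg]
    have h2 : v - v' = lam • (w - w') - x := by
      have : v' = a + (x + lam • w') := by rw [hx]; abel
      rw [hv, this, smul_sub]; abel
    have h3 : ⟪v - v', -x⟫ = lam * ⟪w - w', -x⟫ + ‖x‖ ^ 2 := by
      rw [h2, inner_sub_left, real_inner_smul_left]
      simp
    have h4 := real_inner_le_norm (v - v') (-x)
    rw [norm_neg, h3] at h4
    have h5 := mul_nonneg hlam.le m
    by_contra hlt
    push Not at hlt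
    nlinarith [norm_nonneg (v - v')]

def hJlin (n : ℕ) : V1 n →ₗ[ℝ] V1 n where
  toFun v := WithLp.toLp 2 (v.snd, - v.fst)
  map_add' v w := by
    apply WithLp.ofLp_injective
    simp [add_comm]
  map_smul' c v := by
    apply WithLp.ofLp_injective
    simp


theorem hJ_exists (n : ℕ) : ∃ J : V1 n →L[ℝ] V1 n,
    ∀ x, J x = WithLp.toLp 2 (x.snd, - x.fst) := by
  have hc : Continuous (fun x : V1 n => (WithLp.toLp 2 (x.snd, - x.fst) : V1 n)) := by
    refine (WithLp.prod_continuous_toLp 2 (E n) (E n)).comp ?_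
    have := WithLp.prod_continuous_ofLp 2 (E n) (E n)
    exact (continuous_snd.comp this).prodMk (continuous_fst.comp this).neg
  exact ⟨ContinuousLinearMap.mk (hJlin n) hc, fun x => rfl⟩
theorem resolvent_one_lipschitz {n : ℕ} (hn : 1 ≤ n)
    (T : Heis n → Set (V1 n)) (hT : IsMaximalHMonotone T)
    (hdom : ∀ η, (T η).Nonempty) (lam : ℝ) (hlam : 0 < lam) :
    (∀ v v' : V1 n, ∀ η ∈ resolventQ T lam v,
      ∃ η' ∈ resolventQ T lam v', dH η η' ≤ ‖v - v'‖) ∧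
    (∀ v v' : V1 n, resolventQ T lam v' ⊆
      {ζ | ∃ η ∈ resolventQ T lam v, ∃ b : Heis n,
        dH ((0, 0, 0) : Heis n) b ≤ ‖v - v'‖ ∧ ζ = hmul η b}) := by
  have part1 : ∀ v v' : V1 n, ∀ η ∈ resolventQ T lam v,
      ∃ η' ∈ resolventQ T lam v', dH η η' ≤ ‖v - v'‖ := by
    intro v v' η hη
    obtain ⟨w, hw, hv⟩ := hη
    obtain ⟨J, hJ⟩ := hJ_exists n
    have hJi : ∀ x y : V1 n, ⟪J x, y⟫ = ⟪x.snd, y.fst⟫ - ⟪x.fst, y.snd⟫ := by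
      intro x y
      simp [hJ, WithLp.prod_inner_apply, sub_eq_add_neg]
    have hJ0 : ∀ x, ⟪J x, x⟫ = 0 := by
      intro x; rw [hJi, real_inner_comm, sub_self]
    have hJn : ∀ x, ‖J x‖ = ‖x‖ := by
      intro x
      simp [hJ, WithLp.prod_norm_eq_of_L2, add_comm]
    let T' : V1 n → ℝ → Set (V1 n) := fun a t => T (a.fst, a.snd, t)
    have hxi : ∀ (a : V1 n) (t : ℝ), xi1 ((a.fst, a.snd, t) : Heis n) = a := fun a t => rfl
    have hpl : ∀ (a b : V1 n) (t s : ℝ), ((b.fst, b.snd, s) : Heis n) ∈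
        Hplane ((a.fst, a.snd, t) : Heis n) ↔ s = t + 2 * ⟪J a, b⟫ := by
      intro a b t s; rw [hJi]; rfl
    obtain ⟨b, w', hw', hv', hab⟩ := hm_solve J hJ0 hJn T'
      (by
        intro a t b w hw w' hw'
        exact hT.1 _ _ ((hpl a b t _).2 rfl) w hw w' hw')
      (by
        intro a t w h
        refine hT.2 _ _ ?_
        rintro ⟨b1, b2, s⟩ hb w' hw'
        have hs := (hpl a (WithLp.toLp 2 (b1, b2)) t s).1 hb
        refine h (WithLp.toLp 2 (b1, b2)) w' ?_
        rw [← hs]; exact hw')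
      (fun a t => hdom _) lam hlam (xi1 η) η.2.2 v v' w hw hv
    refine ⟨(b.fst, b.snd, η.2.2 + 2 * ⟪J (xi1 η), b⟫), ⟨w', hw', hv'⟩, ?_⟩
    refine le_trans (le_of_eq ?_) hab
    obtain ⟨x, y, t⟩ := η
    have hz : (hmul (hinv ((b.fst, b.snd, t + 2 * ⟪J (xi1 ((x, y, t) : Heis n)), b⟫) : Heis n))
        ((x, y, t) : Heis n)).2.2 = 0 := by
      rw [hJi]
      simp only [hmul, hinv, xi1, WithLp.equiv_symm_apply, inner_neg_left, inner_neg_right]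
      rw [real_inner_comm y b.fst]
      simp only [WithLp.toLp_fst, WithLp.toLp_snd]
      ring
    unfold dH gaugeN
    rw [hz]
    have hn2 : ‖xi1 ((x, y, t) : Heis n) - b‖ ^ 2 = ‖-b.fst + x‖ ^ 2 + ‖-b.snd + y‖ ^ 2 := by
      rw [WithLp.prod_norm_sq_eq_of_L2]
      simp [xi1, sub_eq_add_neg, add_comm]
    simp only [hmul, hinv]
    rw [← hn2]
    rw [← pow_mul, zero_pow two_ne_zero, add_zero, ← Real.rpow_natCast, ← Real.rpow_mul (norm_nonneg _)]
    norm_num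
  refine ⟨part1, ?_⟩
  intro v v' ζ hζ
  obtain ⟨η, hη, hd⟩ := part1 v' v ζ hζ
  refine ⟨η, hη, hmul (hinv η) ζ, ?_, ?_⟩
  · rw [norm_sub_rev]
    refine le_trans (le_of_eq ?_) hd
    unfold dH gaugeN
    congr 1
    generalize hmul (hinv η) ζ = b
    simp [hmul, hinv]
  · obtain ⟨x, y, t⟩ := η
    obtain ⟨x', y', t'⟩ := ζ
    simp only [hmul, hinv, Prod.mk.injEq]
    refine ⟨by abel, by abel, ?_⟩
    simp only [inner_add_left, inner_add_right, inner_neg_left, inner_neg_right]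
    ring
end
end
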